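/- There is a constant C > 0 such that for every probability space (X, ℬ, μ) with a measurable, measure-preserving transformation T : X → X, every measurable set A ∈ ℬ, and every 0 < λ < 1, one has μ{x ∈ X : sup_{N ≥ 2} 𝒜_N(𝟙_A)(x) > λ} ≤ C λ⁻¹ log²(e/λ) μ(A). -/

import Mathlib

open MeasureTheory Filter
open scoped BigOperators

universe u

/-- The set of primes `p ≤ N`. -/
def primesUpTo (N : ℕ) : Finset ℕ := (Finset.range (N + 1)).filter Nat.Prime

/-- The ergodic average `𝒜_N f(x) = (1/π(N)) Σ_{p ∈ ℙ_N} f(T^p x)`. -/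
noncomputable def ergAvg {X : Type u} (T : X → X) (f : X → ℝ) (N : ℕ) (x : X) : ℝ :=
  ((primesUpTo N).card : ℝ)⁻¹ * ∑ p ∈ primesUpTo N, f (T^[p] x)

namespace PrimeErg

/-! ### Maximal ergodic theorem -/

/-- The Garsia maximal function. -/
noncomputable def gar {X : Type u} (T : X → X) (g : X → ℝ) : ℕ → X → ℝ
  | 0 => fun _ => 0
  | (n + 1) => fun x => max 0 (g x + gar T g n (T x))

lemma gar_nonneg {X : Type u} (T : X → X) (g : X → ℝ) (n : ℕ) (x : X) : 0 ≤ gar T g n x := by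
  cases n with
  | zero => simp [gar]
  | succ n => simp [gar]

lemma gar_mono {X : Type u} (T : X → X) (g : X → ℝ) (n : ℕ) (x : X) :
    gar T g n x ≤ gar T g (n + 1) x := by
  induction n generalizing x with
  | zero => simp [gar]
  | succ n ih =>
    have h := ih (T x)
    rw [gar]
    conv_rhs => rw [gar]
    exact max_le_max le_rfl (by linarith)

lemma gar_ge_sum {X : Type u} (T : X → X) (g : X → ℝ) (n : ℕ) (x : X) :
    ∑ m ∈ Finset.range n, g (T^[m] x) ≤ gar T g n x := by
  induction n generalizing x with
  | zero => simp [gar]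
  | succ n ih =>
    rw [Finset.sum_range_succ', gar]
    have h := ih (T x)
    refine le_max_of_le_right ?_
    simp only [Function.iterate_succ, Function.comp_apply, Function.iterate_zero, id] at h ⊢
    linarith

lemma gar_meas {X : Type u} [MeasurableSpace X] {T : X → X} (hT : Measurable T) {g : X → ℝ}
    (hg : Measurable g) (n : ℕ) : Measurable (gar T g n) := by
  induction n with
  | zero => exact measurable_const
  | succ n ih => exact measurable_const.max (hg.add (ih.comp hT))

lemma gar_int {X : Type u} [MeasurableSpace X] {μ : Measure X} {T : X → X}
    (hT : MeasurePreserving T μ μ) {g : X → ℝ}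
    (hg : Integrable g μ) (n : ℕ) : Integrable (gar T g n) μ := by
  induction n with
  | zero => exact integrable_zero _ _ _
  | succ n ih =>
    have h1 : Integrable (fun x => g x + gar T g n (T x)) μ :=
      hg.add (hT.integrable_comp_of_integrable ih)
    have := (integrable_zero X ℝ μ).sup h1
    exact this

theorem garsia {X : Type u} [MeasurableSpace X] {μ : Measure X} [IsProbabilityMeasure μ]
    {T : X → X} (hT : MeasurePreserving T μ μ) {g : X → ℝ} (hgm : Measurable g)
    (hg : Integrable g μ) (n : ℕ) : 0 ≤ ∫ x in {x | 0 < gar T g n x}, g x ∂μ := by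
  cases n with
  | zero => simp [gar]
  | succ n =>
    have hE : MeasurableSet {x | 0 < gar T g (n + 1) x} :=
      measurableSet_lt measurable_const (gar_meas hT.measurable hgm _)
    rw [← integral_indicator hE]
    have hM := gar_int hT hg (n + 1)
    have hMT : Integrable (fun x => gar T g (n + 1) (T x)) μ := hT.integrable_comp_of_integrable hM
    have heq : ∫ x, gar T g (n + 1) (T x) ∂μ = ∫ x, gar T g (n + 1) x ∂μ := by
      have h1 : AEStronglyMeasurable (gar T g (n+1)) (μ.map T) := by
        rw [hT.map_eq]; exact hM.1
      have := integral_map hT.measurable.aemeasurable h1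
      rw [hT.map_eq] at this
      exact this.symm
    have hle : ∫ x, gar T g (n + 1) x - gar T g (n + 1) (T x) ∂μ ≤
        ∫ x, Set.indicator {x | 0 < gar T g (n + 1) x} g x ∂μ := by
      apply integral_mono (hM.sub hMT) (hg.indicator hE)
      intro x
      simp only [Set.indicator, Set.mem_ofPred_eq]
      split_ifs with h
      · have h1 : gar T g (n + 1) x = g x + gar T g n (T x) := by
          change 0 < max 0 (g x + gar T g n (T x)) at h
          change max 0 (g x + gar T g n (T x)) = _
          rcases le_total 0 (g x + gar T g n (T x)) with h2 | h2
          · exact max_eq_right h2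
          · rw [max_eq_left h2] at h; exact absurd h (lt_irrefl _)
        have h2 := gar_mono T g n (T x)
        show gar T g (n + 1) x - gar T g (n + 1) (T x) ≤ g x
        linarith
      · have := gar_nonneg T g (n + 1) (T x)
        show gar T g (n + 1) x - gar T g (n + 1) (T x) ≤ 0
        linarith [not_lt.mp h]
    rw [integral_sub hM hMT, heq, sub_self] at hle
    exact hle

/-- Weak type (1,1) maximal inequality. -/
theorem maxerg {X : Type u} [MeasurableSpace X] {μ : Measure X} [IsProbabilityMeasure μ]
    {T : X → X} (hT : MeasurePreserving T μ μ) {g : X → ℝ} (hgm : Measurable g)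
    (hg : Integrable g μ) (h0 : ∀ x, 0 ≤ g x) {t : ℝ} (ht : 0 < t) :
    μ {x | ∃ n : ℕ, t * n < ∑ m ∈ Finset.range n, g (T^[m] x)} ≤
      ENNReal.ofReal (t⁻¹ * ∫ x, g x ∂μ) := by
  set G : X → ℝ := fun x => g x - t with hG
  have hGm : Measurable G := hgm.sub_const t
  have hGi : Integrable G μ := hg.sub (integrable_const t)
  set E : ℕ → Set X := fun n => {x | 0 < gar T G n x} with hEdef
  have hE : ∀ n, MeasurableSet (E n) := fun n =>
    measurableSet_lt measurable_const (gar_meas hT.measurable hGm _)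
  have hmono : Monotone E := by
    apply monotone_nat_of_le_succ
    intro n x hx
    exact lt_of_lt_of_le hx (gar_mono T G n x)
  have hsub : {x | ∃ n : ℕ, t * n < ∑ m ∈ Finset.range n, g (T^[m] x)} ⊆ ⋃ n, E n := by
    rintro x ⟨n, hn⟩
    refine Set.mem_iUnion.2 ⟨n, ?_⟩
    refine lt_of_lt_of_le ?_ (gar_ge_sum T G n x)
    simp only [hG, Finset.sum_sub_distrib, Finset.sum_const, Finset.card_range, nsmul_eq_mul]
    linarith
  refine (measure_mono hsub).trans ?_
  rw [hmono.measure_iUnion]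
  refine iSup_le fun n => ?_
  have h1 := garsia hT hGm hGi n
  have h2 : ∫ x in E n, G x ∂μ = ∫ x in E n, g x ∂μ - t * μ.real (E n) := by
    rw [hG, integral_sub hg.integrableOn (integrable_const t).integrableOn]
    simp [mul_comm]
  have h3 : ∫ x in E n, g x ∂μ ≤ ∫ x, g x ∂μ :=
    setIntegral_le_integral hg (Eventually.of_forall h0)
  have h4 : μ.real (E n) ≤ t⁻¹ * ∫ x, g x ∂μ := by
    rw [inv_mul_eq_div, le_div_iff₀ ht]
    change 0 ≤ ∫ x in E n, G x ∂μ at h1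
    nlinarith
  rw [← ofReal_measureReal (measure_ne_top μ _)]
  exact ENNReal.ofReal_le_ofReal h4

/-! ### Large sieve -/

lemma geom_bound (z : ℂ) (hz : z ≠ 1) (Q L : ℕ) (hQ : 0 < Q) (h : z ^ Q = 1) :
    ‖∑ t ∈ Finset.range L, z ^ t‖ ≤ Q := by
  have hn : ‖z‖ = 1 := Complex.norm_eq_one_of_pow_eq_one h hQ.ne'
  have h1 : ∑ t ∈ Finset.range L, z ^ t = ∑ t ∈ Finset.range (L % Q), z ^ t := by
    rw [geom_sum_eq hz, geom_sum_eq hz]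
    congr 2
    conv_lhs => rw [← Nat.div_add_mod L Q, pow_add, pow_mul, h, one_pow, one_mul]
  rw [h1]
  refine (norm_sum_le _ _).trans ?_
  simp only [norm_pow, hn, one_pow, Finset.sum_const, Finset.card_range, nsmul_eq_mul, mul_one]
  exact_mod_cast (Nat.mod_lt _ hQ).le

theorem large_sieve (Ω : Finset ℂ) (Y L : ℕ)
    (hΩ : ∀ w ∈ Ω, ∃ q : ℕ, 0 < q ∧ q ≤ Y ∧ w ^ q = 1)
    (hc : Ω.card * Y ^ 2 ≤ L) (a : ℕ → ℂ) :
    ∑ w ∈ Ω, ‖∑ t ∈ Finset.range L, a t * w ^ t‖ ^ 2 ≤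
      2 * L * ∑ t ∈ Finset.range L, ‖a t‖ ^ 2 := by
  have hn : ∀ w ∈ Ω, ‖w‖ = 1 := by
    intro w hw
    obtain ⟨q, hq, -, h⟩ := hΩ w hw
    exact Complex.norm_eq_one_of_pow_eq_one h hq.ne'
  set A := ∑ t ∈ Finset.range L, ‖a t‖ ^ 2 with hA
  set F : ℂ → ℂ := fun w => ∑ t ∈ Finset.range L, a t * w ^ t with hF
  set c : ℂ → ℂ := fun w => (starRingEnd ℂ) (F w) with hcdef
  set D : ℂ → ℂ → ℂ := fun w v => ∑ t ∈ Finset.range L, (w * (starRingEnd ℂ) v) ^ t with hD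
  have hDb : ∀ w ∈ Ω, ∀ v ∈ Ω, w ≠ v → ‖D w v‖ ≤ (Y : ℝ) ^ 2 := by
    intro w hw v hv hne
    obtain ⟨q, hq, hqY, h⟩ := hΩ w hw
    obtain ⟨q', hq', hqY', h'⟩ := hΩ v hv
    have hvv : v * (starRingEnd ℂ) v = 1 := by
      rw [Complex.mul_conj, Complex.normSq_eq_norm_sq, hn v hv]; simp
    refine (geom_bound _ ?_ (q * q') L (Nat.mul_pos hq hq') ?_).trans ?_
    · intro h1
      apply hne
      calc w = w * (v * (starRingEnd ℂ) v) := by rw [hvv, mul_one]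
        _ = (w * (starRingEnd ℂ) v) * v := by ring
        _ = v := by rw [h1, one_mul]
    · rw [mul_pow, pow_mul, h, one_pow, mul_comm q q', pow_mul, ← map_pow, h', map_one, one_pow,
        one_mul]
    · have : q * q' ≤ Y ^ 2 := by rw [sq]; exact Nat.mul_le_mul hqY hqY'
      exact_mod_cast this
  have hDd : ∀ w, w ∈ Ω → ‖D w w‖ ≤ L := by
    intro w hw
    refine (norm_sum_le _ _).trans ?_
    simp [hn w hw]
  have hrow : ∀ w ∈ Ω, ∑ v ∈ Ω, ‖D w v‖ ≤ 2 * L := by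
    intro w hw
    rw [← Finset.add_sum_erase Ω _ hw]
    have h1 : ∑ v ∈ Ω.erase w, ‖D w v‖ ≤ ∑ v ∈ Ω.erase w, (Y : ℝ) ^ 2 :=
      Finset.sum_le_sum fun v hv => hDb w hw v (Finset.mem_of_mem_erase hv)
        (Finset.ne_of_mem_erase hv).symm
    have h2 : ∑ v ∈ Ω.erase w, (Y : ℝ) ^ 2 ≤ L := by
      rw [Finset.sum_const, nsmul_eq_mul]
      have : (Ω.erase w).card * Y ^ 2 ≤ L :=
        (Nat.mul_le_mul_right _ (Finset.card_le_card (Finset.erase_subset _ _))).trans hc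
      exact_mod_cast this
    have := hDd w hw
    linarith
  have hsym : ∀ w v, ‖D w v‖ = ‖D v w‖ := by
    intro w v
    rw [← Complex.norm_conj (D w v)]
    congr 1
    simp only [hD, map_sum, map_pow, map_mul, Complex.conj_conj]
    refine Finset.sum_congr rfl fun t _ => by rw [mul_comm]
  set S := ∑ w ∈ Ω, ‖F w‖ ^ 2 with hS
  have hcn : ∀ w, ‖c w‖ = ‖F w‖ := fun w => Complex.norm_conj _
  -- dual bound
  have hdual : ∑ t ∈ Finset.range L, ‖∑ w ∈ Ω, c w * w ^ t‖ ^ 2 ≤ 2 * L * S := by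
    have h1 : ((∑ t ∈ Finset.range L, ‖∑ w ∈ Ω, c w * w ^ t‖ ^ 2 : ℝ) : ℂ) =
        ∑ w ∈ Ω, ∑ v ∈ Ω, c w * (starRingEnd ℂ) (c v) * D w v := by
      push_cast
      have : ∀ t ∈ Finset.range L, ((‖∑ w ∈ Ω, c w * w ^ t‖ : ℂ)) ^ 2 =
          ∑ w ∈ Ω, ∑ v ∈ Ω, c w * (starRingEnd ℂ) (c v) * (w * (starRingEnd ℂ) v) ^ t := by
        intro t _
        rw [← Complex.mul_conj', map_sum, Finset.sum_mul_sum]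
        refine Finset.sum_congr rfl fun w _ => Finset.sum_congr rfl fun v _ => ?_
        rw [map_mul, map_pow]; ring
      rw [Finset.sum_congr rfl this, Finset.sum_comm]
      refine Finset.sum_congr rfl fun w _ => ?_
      rw [Finset.sum_comm]
      refine Finset.sum_congr rfl fun v _ => ?_
      rw [hD, Finset.mul_sum]
    have h2 : ∑ t ∈ Finset.range L, ‖∑ w ∈ Ω, c w * w ^ t‖ ^ 2 ≤
        ∑ w ∈ Ω, ∑ v ∈ Ω, ‖F w‖ * ‖F v‖ * ‖D w v‖ := by
      have h3 : ∑ t ∈ Finset.range L, ‖∑ w ∈ Ω, c w * w ^ t‖ ^ 2 =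
          ‖((∑ t ∈ Finset.range L, ‖∑ w ∈ Ω, c w * w ^ t‖ ^ 2 : ℝ) : ℂ)‖ := by
        rw [Complex.norm_real, Real.norm_of_nonneg (Finset.sum_nonneg fun _ _ => sq_nonneg _)]
      rw [h3, h1]
      refine (norm_sum_le _ _).trans (Finset.sum_le_sum fun w _ => ?_)
      refine (norm_sum_le _ _).trans (Finset.sum_le_sum fun v _ => ?_)
      rw [norm_mul, norm_mul, Complex.norm_conj (c v), hcn, hcn]
    have h4 : ∑ w ∈ Ω, ∑ v ∈ Ω, ‖F w‖ * ‖F v‖ * ‖D w v‖ ≤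
        ∑ w ∈ Ω, ∑ v ∈ Ω, ((1/2) * (‖F w‖ ^ 2 * ‖D w v‖) + (1/2) * (‖F v‖ ^ 2 * ‖D w v‖)) := by
      refine Finset.sum_le_sum fun w _ => Finset.sum_le_sum fun v _ => ?_
      have := mul_nonneg (sq_nonneg (‖F w‖ - ‖F v‖)) (norm_nonneg (D w v))
      nlinarith
    have h5 : ∑ w ∈ Ω, ∑ v ∈ Ω, ‖F w‖ ^ 2 * ‖D w v‖ ≤ 2 * L * S := by
      rw [hS, Finset.mul_sum]
      refine Finset.sum_le_sum fun w hw => ?_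
      rw [← Finset.mul_sum, mul_comm (2 * (L:ℝ))]
      exact mul_le_mul_of_nonneg_left (hrow w hw) (sq_nonneg _)
    have h6 : ∑ w ∈ Ω, ∑ v ∈ Ω, ‖F v‖ ^ 2 * ‖D w v‖ = ∑ w ∈ Ω, ∑ v ∈ Ω, ‖F w‖ ^ 2 * ‖D w v‖ := by
      rw [Finset.sum_comm]
      refine Finset.sum_congr rfl fun w _ => Finset.sum_congr rfl fun v _ => by rw [hsym]
    simp only [Finset.sum_add_distrib, ← Finset.mul_sum] at h4 h5 h6
    linarith
  have hSS : S ^ 2 ≤ A * (2 * L * S) := by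
    have h1 : (S : ℂ) = ∑ t ∈ Finset.range L, a t * ∑ w ∈ Ω, c w * w ^ t := by
      have : (S : ℂ) = ∑ w ∈ Ω, c w * F w := by
        rw [hS]; push_cast
        refine Finset.sum_congr rfl fun w _ => ?_
        rw [← Complex.conj_mul']
      rw [this]
      simp only [hF, Finset.mul_sum]
      rw [Finset.sum_comm]
      refine Finset.sum_congr rfl fun w _ => Finset.sum_congr rfl fun v _ => by ring
    have hS0 : 0 ≤ S := Finset.sum_nonneg fun _ _ => sq_nonneg _
    have h2 : S ≤ ∑ t ∈ Finset.range L, ‖a t‖ * ‖∑ w ∈ Ω, c w * w ^ t‖ := by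
      have h3 : S = ‖(S : ℂ)‖ := by rw [Complex.norm_real, Real.norm_of_nonneg hS0]
      rw [h3, h1]
      refine (norm_sum_le _ _).trans (Finset.sum_le_sum fun w _ => (norm_mul _ _).le)
    calc S ^ 2 ≤ (∑ t ∈ Finset.range L, ‖a t‖ * ‖∑ w ∈ Ω, c w * w ^ t‖) ^ 2 := by gcongr
      _ ≤ A * ∑ t ∈ Finset.range L, ‖∑ w ∈ Ω, c w * w ^ t‖ ^ 2 :=
        Finset.sum_mul_sq_le_sq_mul_sq _ _ _
      _ ≤ A * (2 * L * S) := by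
        apply mul_le_mul_of_nonneg_left hdual
        exact Finset.sum_nonneg fun _ _ => sq_nonneg _
  have hS0 : 0 ≤ S := Finset.sum_nonneg fun _ _ => sq_nonneg _
  rcases hS0.eq_or_lt with h | h
  · rw [← h]
    have : 0 ≤ A := Finset.sum_nonneg fun _ _ => sq_nonneg _
    positivity
  · have : S * S ≤ (2 * L * A) * S := by nlinarith
    exact le_of_mul_le_mul_right this h

/-! ### Averaging operators -/

/-- The Fejér-type averaging operator with kernel `k` at scale `L`. -/
noncomputable def Kop {X : Type u} (T : X → X) (k : ℕ → ℝ) (L : ℕ) (f : X → ℝ) (x : X) : ℝ :=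
  ((L : ℝ) ^ 2)⁻¹ * ∑ s ∈ Finset.range L, ∑ t ∈ Finset.range L,
    k (t + L - s) * f (T^[t + L - s] x)

lemma bilinear_bound (Ω : Finset ℂ) (Y L : ℕ)
    (hΩ : ∀ w ∈ Ω, ∃ q : ℕ, 0 < q ∧ q ≤ Y ∧ w ^ q = 1)
    (hc : Ω.card * Y ^ 2 ≤ L) (k : ℕ → ℝ) (κ : ℂ → ℝ) (K : ℝ)
    (hK0 : 0 ≤ K)
    (hk : ∀ n, (k n : ℂ) = ∑ w ∈ Ω, (κ w : ℂ) * w ^ n) (hK : ∀ w ∈ Ω, |κ w| ≤ K)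
    (a b : ℕ → ℝ) :
    ∑ s ∈ Finset.range L, ∑ t ∈ Finset.range L, k (t + L - s) * (a t * b s) ≤
      K * L * (∑ t ∈ Finset.range L, a t ^ 2 + ∑ t ∈ Finset.range L, b t ^ 2) := by
  have hn : ∀ w ∈ Ω, ‖w‖ = 1 := by
    intro w hw
    obtain ⟨q, hq, -, h⟩ := hΩ w hw
    exact Complex.norm_eq_one_of_pow_eq_one h hq.ne'
  set Fa : ℂ → ℂ := fun w => ∑ t ∈ Finset.range L, (a t : ℂ) * w ^ t with hFa
  set Fb : ℂ → ℂ := fun w => ∑ t ∈ Finset.range L, (b t : ℂ) * w ^ t with hFb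
  have h1 : ((∑ s ∈ Finset.range L, ∑ t ∈ Finset.range L, k (t + L - s) * (a t * b s) : ℝ) : ℂ) =
      ∑ w ∈ Ω, (κ w : ℂ) * w ^ L * Fa w * (starRingEnd ℂ) (Fb w) := by
    push_cast
    have : ∀ w ∈ Ω, (κ w : ℂ) * w ^ L * Fa w * (starRingEnd ℂ) (Fb w) =
        ∑ s ∈ Finset.range L, ∑ t ∈ Finset.range L, (κ w : ℂ) * w ^ (t + L - s) * (a t * b s) := by
      intro w hw
      simp only [hFa, hFb, map_sum, map_mul, Complex.conj_ofReal, map_pow]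
      rw [Finset.mul_sum]
      refine Finset.sum_congr rfl fun s hs => ?_
      rw [Finset.mul_sum, Finset.sum_mul]
      refine Finset.sum_congr rfl fun t _ => ?_
      have hsL : s ≤ L := (Finset.mem_range.1 hs).le
      have hww : w ^ s * (starRingEnd ℂ) w ^ s = 1 := by
        rw [← mul_pow, Complex.mul_conj, Complex.normSq_eq_norm_sq, hn w hw]; simp
      have e1 : w ^ L = w ^ (L - s) * w ^ s := by rw [← pow_add]; congr 1; omega
      have e2 : w ^ (t + L - s) = w ^ t * w ^ (L - s) := by rw [← pow_add]; congr 1; omega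
      rw [e1, e2]
      linear_combination (κ w : ℂ) * w ^ (L - s) * a t * w ^ t * b s * hww
    refine Eq.trans ?_ (Finset.sum_congr rfl this).symm
    refine Eq.trans ?_ Finset.sum_comm
    refine Finset.sum_congr rfl fun s hs => ?_
    refine Eq.trans ?_ Finset.sum_comm
    refine Finset.sum_congr rfl fun t _ => ?_
    rw [hk, Finset.sum_mul]
  have h2 : ∑ s ∈ Finset.range L, ∑ t ∈ Finset.range L, k (t + L - s) * (a t * b s) ≤
      ∑ w ∈ Ω, K * ((1/2) * (‖Fa w‖ ^ 2 + ‖Fb w‖ ^ 2)) := by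
    refine (le_abs_self _).trans ?_
    rw [← Real.norm_eq_abs, ← Complex.norm_real, h1]
    refine (norm_sum_le _ _).trans (Finset.sum_le_sum fun w hw => ?_)
    rw [norm_mul, norm_mul, norm_mul, Complex.norm_conj, norm_pow, hn w hw, Complex.norm_real,
      one_pow, mul_one, Real.norm_eq_abs, mul_assoc]
    have h3 : ‖Fa w‖ * ‖Fb w‖ ≤ (1/2) * (‖Fa w‖ ^ 2 + ‖Fb w‖ ^ 2) := by
      nlinarith [sq_nonneg (‖Fa w‖ - ‖Fb w‖)]
    exact mul_le_mul (hK w hw) h3 (by positivity) ((abs_nonneg _).trans (hK w hw))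
  have la := large_sieve Ω Y L hΩ hc (fun t => (a t : ℂ))
  have lb := large_sieve Ω Y L hΩ hc (fun t => (b t : ℂ))
  simp only [Complex.norm_real, Real.norm_eq_abs, sq_abs] at la lb
  rw [← Finset.mul_sum, ← Finset.mul_sum, Finset.sum_add_distrib] at h2
  refine h2.trans ?_
  rw [mul_assoc]
  apply mul_le_mul_of_nonneg_left _ hK0
  linarith

lemma comp_iter_int {X : Type u} [MeasurableSpace X] {μ : Measure X}
    {T : X → X} (hT : MeasurePreserving T μ μ) {g : X → ℝ} (hgm : Measurable g) (n : ℕ) :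
    ∫ x, g (T^[n] x) ∂μ = ∫ x, g x ∂μ := by
  have h := hT.iterate n
  have := integral_map (μ := μ) h.measurable.aemeasurable (f := g) hgm.aestronglyMeasurable
  rw [h.map_eq] at this
  exact this.symm

lemma Kop_meas {X : Type u} [MeasurableSpace X] {T : X → X} (hT : Measurable T) (k : ℕ → ℝ)
    (L : ℕ) {f : X → ℝ} (hf : Measurable f) : Measurable (Kop T k L f) := by
  unfold Kop
  apply Measurable.const_mul
  refine Finset.measurable_sum _ fun s _ => Finset.measurable_sum _ fun t _ => ?_
  exact (hf.comp (hT.iterate _)).const_mul _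

lemma Kop_bdd {X : Type u} (T : X → X) (k : ℕ → ℝ) (L : ℕ) {f : X → ℝ} {B : ℝ}
    (hB : ∀ x, |f x| ≤ B) : ∃ B', ∀ x, |Kop T k L f x| ≤ B' := by
  refine ⟨((L : ℝ) ^ 2)⁻¹ * ∑ s ∈ Finset.range L, ∑ t ∈ Finset.range L, |k (t + L - s)| * B,
    fun x => ?_⟩
  unfold Kop
  rw [abs_mul, abs_of_nonneg (by positivity : (0:ℝ) ≤ ((L : ℝ) ^ 2)⁻¹)]
  refine mul_le_mul_of_nonneg_left ?_ (by positivity)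
  refine (Finset.abs_sum_le_sum_abs _ _).trans (Finset.sum_le_sum fun s _ => ?_)
  refine (Finset.abs_sum_le_sum_abs _ _).trans (Finset.sum_le_sum fun t _ => ?_)
  rw [abs_mul]
  exact mul_le_mul_of_nonneg_left (hB _) (abs_nonneg _)

lemma int_of_bdd {X : Type u} [MeasurableSpace X] {μ : Measure X} [IsProbabilityMeasure μ]
    {f : X → ℝ} (hf : Measurable f) {B : ℝ} (hB : ∀ x, |f x| ≤ B) : Integrable f μ :=
  Integrable.of_bound hf.aestronglyMeasurable B (Eventually.of_forall hB)

/-- L² bound for the averaging operator. -/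
theorem Kop_L2 {X : Type u} [MeasurableSpace X] {μ : Measure X} [IsProbabilityMeasure μ]
    {T : X → X} (hT : MeasurePreserving T μ μ) {f : X → ℝ} (hf : Measurable f) {B : ℝ}
    (hB : ∀ x, |f x| ≤ B)
    (Ω : Finset ℂ) (Y L : ℕ) (hL : 0 < L)
    (hΩ : ∀ w ∈ Ω, ∃ q : ℕ, 0 < q ∧ q ≤ Y ∧ w ^ q = 1)
    (hc : Ω.card * Y ^ 2 ≤ L) (k : ℕ → ℝ) (κ : ℂ → ℝ) (K : ℝ) (hKpos : 0 < K)
    (hk : ∀ n, (k n : ℂ) = ∑ w ∈ Ω, (κ w : ℂ) * w ^ n) (hK : ∀ w ∈ Ω, |κ w| ≤ K) :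
    ∫ x, (Kop T k L f x) ^ 2 ∂μ ≤ 4 * K ^ 2 * ∫ x, f x ^ 2 ∂μ := by
  have hTm := hT.measurable
  obtain ⟨B', hB'⟩ := Kop_bdd T k L hB
  set g := Kop T k L f with hg
  have hgm : Measurable g := Kop_meas hTm k L hf
  -- integrability of products
  have hprod : ∀ m n : ℕ, Integrable (fun x => f (T^[m] x) * g (T^[n] x)) μ := by
    intro m n
    refine int_of_bdd (B := B * B') ((hf.comp (hTm.iterate _)).mul (hgm.comp (hTm.iterate _))) ?_
    intro x
    rw [abs_mul]
    exact mul_le_mul (hB _) (hB' _) (abs_nonneg _) ((abs_nonneg _).trans (hB x))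
  have hLL : ((L:ℝ) ^ 2) ≠ 0 := by positivity
  have h1 : (L : ℝ) ^ 2 * ∫ x, (g x) ^ 2 ∂μ =
      ∫ x, ∑ s ∈ Finset.range L, ∑ t ∈ Finset.range L,
        k (t + L - s) * (f (T^[t + L] x) * g (T^[s] x)) ∂μ := by
    have e1 : ∀ x, (L : ℝ) ^ 2 * (g x) ^ 2 = ∑ s ∈ Finset.range L, ∑ t ∈ Finset.range L,
        k (t + L - s) * (f (T^[t + L - s] x) * g (T^[0] x)) := by
      intro x
      have : (L : ℝ) ^ 2 * (g x) ^ 2 = ((L : ℝ) ^ 2 * g x) * g x := by ring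
      rw [this]
      have e2 : (L : ℝ) ^ 2 * g x = ∑ s ∈ Finset.range L, ∑ t ∈ Finset.range L,
          k (t + L - s) * f (T^[t + L - s] x) := by
        rw [hg, Kop, ← mul_assoc, mul_inv_cancel₀ hLL, one_mul]
      rw [e2, Finset.sum_mul]
      refine Finset.sum_congr rfl fun s _ => ?_
      rw [Finset.sum_mul]
      refine Finset.sum_congr rfl fun t _ => ?_
      simp only [Function.iterate_zero, id]; ring
    rw [← integral_const_mul]
    simp only [e1]
    rw [integral_finsetSum _ fun s _ => integrable_finsetSum _ fun t _ => (hprod _ _).const_mul _,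
      integral_finsetSum _ fun s _ => integrable_finsetSum _ fun t _ => (hprod _ _).const_mul _]
    refine Finset.sum_congr rfl fun s hs => ?_
    rw [integral_finsetSum _ fun t _ => (hprod _ _).const_mul _,
      integral_finsetSum _ fun t _ => (hprod _ _).const_mul _]
    refine Finset.sum_congr rfl fun t _ => ?_
    rw [integral_const_mul, integral_const_mul]
    congr 1
    have := comp_iter_int hT (g := fun x => f (T^[t + L - s] x) * g (T^[0] x))
      ((hf.comp (hTm.iterate _)).mul (hgm.comp (hTm.iterate _))) s
    rw [← this]
    congr 1
    ext x
    rw [← Function.iterate_add_apply, ← Function.iterate_add_apply, zero_add]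
    have hsL : s < L := Finset.mem_range.1 hs
    have hts : t + L - s + s = t + L := by omega
    rw [hts]
  -- pointwise bound with scaling
  have hsq : ∀ (h : X → ℝ) (_ : Measurable h) (D : ℝ) (_ : ∀ x, |h x| ≤ D) (n : ℕ),
      Integrable (fun x => h (T^[n] x) ^ 2) μ := by
    intro h hm D hD n
    refine int_of_bdd (B := D ^ 2) ((hm.comp (hTm.iterate _)).pow_const 2) ?_
    intro x
    rw [abs_pow]
    exact pow_le_pow_left₀ (abs_nonneg _) (hD _) 2
  have h2 : ∫ x, ∑ s ∈ Finset.range L, ∑ t ∈ Finset.range L,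
        k (t + L - s) * (f (T^[t + L] x) * g (T^[s] x)) ∂μ ≤
      ∫ x, (2 * K) * (K * L * (∑ t ∈ Finset.range L, (f (T^[t + L] x)) ^ 2 +
        ∑ t ∈ Finset.range L, ((2 * K)⁻¹ ^ 2) * (g (T^[t] x)) ^ 2)) ∂μ := by
    apply integral_mono
    · exact integrable_finsetSum _ fun s _ => integrable_finsetSum _ fun t _ =>
        (hprod _ _).const_mul _
    · refine Integrable.const_mul (Integrable.const_mul (Integrable.add ?_ ?_) _) _
      · exact integrable_finsetSum _ fun t _ => hsq f hf B hB _
      · exact integrable_finsetSum _ fun t _ => (hsq g hgm B' hB' _).const_mul _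
    · intro x
      have := bilinear_bound Ω Y L hΩ hc k κ K hKpos.le hk hK (fun t => f (T^[t + L] x))
        (fun s => (2 * K)⁻¹ * g (T^[s] x))
      have h3 : ∑ s ∈ Finset.range L, ∑ t ∈ Finset.range L,
        k (t + L - s) * (f (T^[t + L] x) * g (T^[s] x)) = (2 * K) * 
        ∑ s ∈ Finset.range L, ∑ t ∈ Finset.range L,
        k (t + L - s) * (f (T^[t + L] x) * ((2 * K)⁻¹ * g (T^[s] x))) := by
        rw [Finset.mul_sum]
        refine Finset.sum_congr rfl fun s _ => ?_
        rw [Finset.mul_sum]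
        refine Finset.sum_congr rfl fun t _ => ?_
        field_simp
      show ∑ s ∈ Finset.range L, ∑ t ∈ Finset.range L,
        k (t + L - s) * (f (T^[t + L] x) * g (T^[s] x)) ≤ _
      rw [h3]
      refine mul_le_mul_of_nonneg_left ?_ (by positivity)
      simpa only [mul_pow] using this
  have h4 : ∫ x, (2 * K) * (K * L * (∑ t ∈ Finset.range L, (f (T^[t + L] x)) ^ 2 +
        ∑ t ∈ Finset.range L, ((2 * K)⁻¹ ^ 2) * (g (T^[t] x)) ^ 2)) ∂μ =
      (2 * K) * (K * L * (L * ∫ x, f x ^ 2 ∂μ + L * ((2 * K)⁻¹ ^ 2 * ∫ x, g x ^ 2 ∂μ))) := by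
    rw [integral_const_mul, integral_const_mul, integral_add, integral_finsetSum, integral_finsetSum]
    · have ef : ∀ n, ∫ x, f (T^[n] x) ^ 2 ∂μ = ∫ x, f x ^ 2 ∂μ := fun n =>
        comp_iter_int hT (g := fun x => f x ^ 2) (hf.pow_const 2) n
      have eg : ∀ n, ∫ x, g (T^[n] x) ^ 2 ∂μ = ∫ x, g x ^ 2 ∂μ := fun n =>
        comp_iter_int hT (g := fun x => g x ^ 2) (hgm.pow_const 2) n
      simp only [integral_const_mul, ef, eg, Finset.sum_const, Finset.card_range, nsmul_eq_mul]
    · exact fun t _ => (hsq g hgm B' hB' _).const_mul _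
    · exact fun t _ => hsq f hf B hB _
    · exact integrable_finsetSum _ fun t _ => hsq f hf B hB _
    · exact integrable_finsetSum _ fun t _ => (hsq g hgm B' hB' _).const_mul _
  rw [← h1, h4] at h2
  set I := ∫ x, g x ^ 2 ∂μ
  set J := ∫ x, f x ^ 2 ∂μ
  have h5 : (2 * K) * (K * L * (L * J + L * ((2 * K)⁻¹ ^ 2 * I))) =
      (L:ℝ) ^ 2 * (2 * K ^ 2 * J + I / 2) := by
    field_simp
  rw [h5] at h2
  have h6 := le_of_mul_le_mul_left h2 (by positivity)
  linarith

/-! ### Ramanujan sums -/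

/-- Ramanujan sum for a prime modulus. -/
noncomputable def rc (p n : ℕ) : ℝ := if p ∣ n then (p : ℝ) - 1 else -1

lemma rc_prime {p : ℕ} (hp : p.Prime) (n : ℕ) :
    ((rc p n : ℝ) : ℂ) = ∑ w ∈ primitiveRoots p ℂ, w ^ n := by
  classical
  have hz := Complex.isPrimitiveRoot_exp p hp.ne_zero
  set ζ := Complex.exp (2 * Real.pi * Complex.I / p) with hζ
  have himg : Polynomial.nthRootsFinset p (1:ℂ) = (Finset.range p).image (fun i => ζ ^ i) := by
    ext w
    rw [Polynomial.mem_nthRootsFinset hp.pos, Finset.mem_image]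
    constructor
    · intro h
      have : NeZero p := ⟨hp.ne_zero⟩
      obtain ⟨i, hi, h⟩ := hz.eq_pow_of_pow_eq_one h
      exact ⟨i, Finset.mem_range.2 hi, h⟩
    · rintro ⟨i, -, rfl⟩
      rw [← pow_mul, mul_comm, pow_mul, hz.pow_eq_one, one_pow]
  have h1 : ∑ w ∈ Polynomial.nthRootsFinset p (1:ℂ), w ^ n = ∑ i ∈ Finset.range p, (ζ ^ n) ^ i := by
    rw [himg, Finset.sum_image]
    · refine Finset.sum_congr rfl fun i _ => ?_
      rw [← pow_mul, ← pow_mul, mul_comm]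
    · intro i hi j hj h
      exact hz.pow_inj (Finset.mem_range.1 hi) (Finset.mem_range.1 hj) h
  have h2 : ∑ w ∈ Polynomial.nthRootsFinset p (1:ℂ), w ^ n =
      1 + ∑ w ∈ primitiveRoots p ℂ, w ^ n := by
    rw [_root_.nthRootsFinset_eq_of_prime hp, Finset.union_comm, Finset.sum_union, Finset.sum_singleton, one_pow]
    rw [Finset.disjoint_singleton_left]
    intro h
    exact (isPrimitiveRoot_of_mem_primitiveRoots h).ne_one hp.one_lt rfl
  have h3 : ∑ i ∈ Finset.range p, (ζ ^ n) ^ i = if p ∣ n then (p:ℂ) else 0 := by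
    split_ifs with h
    · rw [(hz.pow_eq_one_iff_dvd n).2 h]; simp
    · have hne : ζ ^ n ≠ 1 := fun h' => h ((hz.pow_eq_one_iff_dvd n).1 h')
      rw [geom_sum_eq hne, ← pow_mul, mul_comm, pow_mul, hz.pow_eq_one, one_pow, sub_self, zero_div]
  rw [h1, h3] at h2
  have h4 : ∑ w ∈ primitiveRoots p ℂ, w ^ n = (if p ∣ n then (p:ℂ) else 0) - 1 := by
    rw [h2]; ring
  rw [h4, rc]
  split_ifs <;> simp

lemma rc_prod (U : Finset ℕ) (hU : ∀ p ∈ U, p.Prime) (n : ℕ) :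
    ((∏ p ∈ U, rc p n : ℝ) : ℂ) = ∑ w ∈ primitiveRoots (∏ p ∈ U, p) ℂ, w ^ n := by
  classical
  induction U using Finset.induction_on with
  | empty => simp [IsPrimitiveRoot.primitiveRoots_one]
  | insert p U hpU ih =>
    have hp : p.Prime := hU p (by simp)
    have hU' : ∀ p ∈ U, p.Prime := fun q hq => hU q (by simp [hq])
    specialize ih hU'
    rw [Finset.prod_insert hpU, Finset.prod_insert hpU]
    set q := ∏ p ∈ U, p with hq
    have hq0 : 0 < q := Finset.prod_pos fun r hr => (hU' r hr).pos
    have hcop : p.Coprime q := by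
      apply Nat.Coprime.prod_right
      intro r hr
      rw [Nat.coprime_primes hp (hU' r hr)]
      rintro rfl; exact hpU hr
    have hinj : Set.InjOn (fun z : ℂ × ℂ => z.1 * z.2)
        (primitiveRoots p ℂ ×ˢ primitiveRoots q ℂ : Finset (ℂ × ℂ)) := by
      rintro ⟨a, b⟩ hab ⟨c, d⟩ hcd h
      simp only [Finset.coe_product, Set.mem_prod, SetLike.mem_coe, mem_primitiveRoots hp.pos,
        mem_primitiveRoots hq0] at hab hcd
      simp only at h
      have h1 : a ^ q = c ^ q := by
        have := congrArg (· ^ q) h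
        simpa [mul_pow, hab.2.pow_eq_one, hcd.2.pow_eq_one] using this
      have hac : a = c := by
        have hne := hcd.1.ne_zero hp.ne_zero
        have h2 : (a / c) ^ q = 1 := by
          rw [div_pow, h1, div_self (pow_ne_zero _ hne)]
        have h3 : (a / c) ^ p = 1 := by
          rw [div_pow, hab.1.pow_eq_one, hcd.1.pow_eq_one, div_one]
        have h4 : (a / c) ^ (p.gcd q) = 1 := by
          rw [pow_gcd_eq_one]; exact ⟨h3, h2⟩
        rw [hcop] at h4
        rw [pow_one, div_eq_one_iff_eq hne] at h4
        exact h4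
      subst hac
      have := mul_left_cancel₀ (hab.1.ne_zero hp.ne_zero) h
      rw [this]
    have himg : (primitiveRoots p ℂ ×ˢ primitiveRoots q ℂ).image (fun z => z.1 * z.2) =
        primitiveRoots (p * q) ℂ := by
      apply Finset.eq_of_subset_of_card_le
      · intro w hw
        rw [Finset.mem_image] at hw
        obtain ⟨⟨a, b⟩, hab, rfl⟩ := hw
        simp only [Finset.mem_product, mem_primitiveRoots hp.pos,
          mem_primitiveRoots hq0] at hab
        rw [mem_primitiveRoots (Nat.mul_pos hp.pos hq0), IsPrimitiveRoot.iff_orderOf]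
        rw [(Commute.all a b).orderOf_mul_eq_mul_orderOf_of_coprime, ← hab.1.eq_orderOf,
          ← hab.2.eq_orderOf]
        rwa [← hab.1.eq_orderOf, ← hab.2.eq_orderOf]
      · rw [Finset.card_image_of_injOn hinj, Finset.card_product, Complex.card_primitiveRoots,
          Complex.card_primitiveRoots, Complex.card_primitiveRoots, Nat.totient_mul hcop]
    rw [← himg, Finset.sum_image hinj, Finset.sum_product, Complex.ofReal_mul, ih, rc_prime hp,
      Finset.sum_mul_sum]
    simp only [mul_pow]

lemma prod_inj {U V : Finset ℕ} (hU : ∀ p ∈ U, p.Prime) (hV : ∀ p ∈ V, p.Prime)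
    (h : ∏ p ∈ U, p = ∏ p ∈ V, p) : U = V := by
  rw [← Nat.primeFactors_prod hU, h, Nat.primeFactors_prod hV]

/-- Coefficient bound implies L² bound. -/
theorem Kop_coeff {X : Type u} [MeasurableSpace X] {μ : Measure X} [IsProbabilityMeasure μ]
    {T : X → X} (hT : MeasurePreserving T μ μ) {f : X → ℝ} (hf : Measurable f) {B : ℝ}
    (hB : ∀ x, |f x| ≤ B) (𝒰 : Finset (Finset ℕ)) (Y L : ℕ) (hL : 0 < L)
    (hp : ∀ U ∈ 𝒰, ∀ p ∈ U, p.Prime) (hY : ∀ U ∈ 𝒰, ∏ p ∈ U, p ≤ Y) (hYL : Y ^ 4 ≤ L)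
    (c : Finset ℕ → ℝ) (K : ℝ) (hK : 0 < K) (hc : ∀ U ∈ 𝒰, |c U| ≤ K) (k : ℕ → ℝ)
    (hk : ∀ n, k n = ∑ U ∈ 𝒰, c U * ∏ p ∈ U, rc p n) :
    ∫ x, (Kop T k L f x) ^ 2 ∂μ ≤ 4 * K ^ 2 * ∫ x, f x ^ 2 ∂μ := by
  classical
  have hpos : ∀ U ∈ 𝒰, 0 < ∏ p ∈ U, p := fun U hU => Finset.prod_pos fun p h => (hp U hU p h).pos
  set Ω : Finset ℂ := 𝒰.biUnion fun U => primitiveRoots (∏ p ∈ U, p) ℂ with hΩ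
  have hdisj : (𝒰 : Set (Finset ℕ)).PairwiseDisjoint fun U => primitiveRoots (∏ p ∈ U, p) ℂ := by
    intro U hU V hV hne
    exact IsPrimitiveRoot.disjoint fun h => hne (prod_inj (hp U hU) (hp V hV) h)
  refine Kop_L2 hT hf hB Ω Y L hL ?_ ?_ k (fun w => c (orderOf w).primeFactors) K hK ?_ ?_
  · intro w hw
    obtain ⟨U, hU, hw⟩ := Finset.mem_biUnion.1 hw
    exact ⟨_, hpos U hU, hY U hU, (isPrimitiveRoot_of_mem_primitiveRoots hw).pow_eq_one⟩
  · refine le_trans ?_ hYL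
    have h1 : Ω.card ≤ Y ^ 2 := by
      refine Finset.card_biUnion_le.trans ?_
      have h2 : 𝒰.card ≤ Y := by
        calc 𝒰.card ≤ (Finset.Icc 1 Y).card := by
              refine Finset.card_le_card_of_injOn (fun U => ∏ p ∈ U, p) ?_ ?_
              · intro U hU
                simpa using ⟨hpos U hU, hY U hU⟩
              · intro U hU V hV h
                exact prod_inj (hp U hU) (hp V hV) h
          _ = Y := by simp
      calc ∑ U ∈ 𝒰, (primitiveRoots (∏ p ∈ U, p) ℂ).card ≤ ∑ U ∈ 𝒰, Y := by
            refine Finset.sum_le_sum fun U hU => ?_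
            rw [Complex.card_primitiveRoots]
            exact (Nat.totient_le _).trans (hY U hU)
        _ = 𝒰.card * Y := by simp
        _ ≤ Y * Y := Nat.mul_le_mul_right _ h2
        _ = Y ^ 2 := by ring
    calc Ω.card * Y ^ 2 ≤ Y ^ 2 * Y ^ 2 := Nat.mul_le_mul_right _ h1
      _ = Y ^ 4 := by ring
  · intro n
    rw [hk, hΩ, Finset.sum_biUnion hdisj]
    push_cast
    refine Finset.sum_congr rfl fun U hU => ?_
    have := rc_prod U (hp U hU) n
    push_cast at this
    rw [this, Finset.mul_sum]
    refine Finset.sum_congr rfl fun w hw => ?_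
    rw [← (isPrimitiveRoot_of_mem_primitiveRoots hw).eq_orderOf, Nat.primeFactors_prod (hp U hU)]
  · intro w hw
    obtain ⟨U, hU, hw⟩ := Finset.mem_biUnion.1 hw
    rw [← (isPrimitiveRoot_of_mem_primitiveRoots hw).eq_orderOf, Nat.primeFactors_prod (hp U hU)]
    exact hc U hU

/-! ### Sieve weights -/

/-- `1/(p-1)`. -/
noncomputable def al (p : ℕ) : ℝ := ((p : ℝ) - 1)⁻¹

lemma al_pos {p : ℕ} (hp : p.Prime) : 0 < al p := by
  unfold al
  have : (1:ℝ) < p := by exact_mod_cast hp.one_lt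
  exact inv_pos.2 (by linarith)

lemma al_le_one {p : ℕ} (hp : p.Prime) : al p ≤ 1 := by
  unfold al
  have : (2:ℝ) ≤ p := by exact_mod_cast hp.two_le
  exact inv_le_one_of_one_le₀ (by linarith)

/-- Normalised Ramanujan sum. -/
noncomputable def ch (p n : ℕ) : ℝ := - al p * rc p n

lemma ch_of_not_dvd {p n : ℕ} (h : ¬ p ∣ n) : ch p n = al p := by
  simp [ch, rc, h]

lemma ch_of_dvd {p n : ℕ} (hp : p.Prime) (h : p ∣ n) : ch p n = -1 := by
  have : (1:ℝ) < p := by exact_mod_cast hp.one_lt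
  have h2 : (p:ℝ) - 1 ≠ 0 := by linarith
  simp [ch, rc, h, al, h2]

lemma ch_sq {p : ℕ} (hp : p.Prime) (n : ℕ) :
    ch p n * ch p n = al p + (al p * (1 - al p)) * rc p n := by
  have : (1:ℝ) < p := by exact_mod_cast hp.one_lt
  have h2 : (p:ℝ) - 1 ≠ 0 := by linarith
  by_cases h : p ∣ n
  · rw [ch_of_dvd hp h]
    simp only [rc, h, if_true, al]
    field_simp
    ring
  · rw [ch_of_not_dvd h]
    simp only [rc, h, if_false]
    ring

/-- The Selberg index family. -/
noncomputable def selT (S : Finset ℕ) (R : ℕ) : Finset (Finset ℕ) :=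
  S.powerset.filter fun W => ∏ p ∈ W, p ≤ R

/-- The Selberg normalisation. -/
noncomputable def selG (S : Finset ℕ) (R : ℕ) : ℝ := ∑ W ∈ selT S R, ∏ p ∈ W, al p

/-- The Selberg kernel. -/
noncomputable def selK (S : Finset ℕ) (R n : ℕ) : ℝ :=
  (selG S R)⁻¹ * (∑ W ∈ selT S R, ∏ p ∈ W, ch p n) ^ 2

lemma mem_selT {S : Finset ℕ} {R : ℕ} {W : Finset ℕ} :
    W ∈ selT S R ↔ W ⊆ S ∧ ∏ p ∈ W, p ≤ R := by
  simp [selT]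

lemma selT_sub {S : Finset ℕ} (hS : ∀ p ∈ S, p.Prime) {R : ℕ} {W W' : Finset ℕ}
    (h : W ∈ selT S R) (h' : W' ⊆ W) : W' ∈ selT S R := by
  rw [mem_selT] at *
  exact ⟨h'.trans h.1, (Finset.prod_le_prod_of_subset_of_one_le' h'
    fun p hp _ => (hS p (h.1 hp)).one_lt.le).trans h.2⟩

lemma selG_pos {S : Finset ℕ} (hS : ∀ p ∈ S, p.Prime) {R : ℕ} (hR : 1 ≤ R) : 1 ≤ selG S R := by
  have h : (∅ : Finset ℕ) ∈ selT S R := by rw [mem_selT]; simpa using hR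
  have := Finset.single_le_sum (f := fun W => ∏ p ∈ W, al p) (s := selT S R)
    (fun W hW => Finset.prod_nonneg fun p hp => (al_pos (hS p ((mem_selT.1 hW).1 hp))).le) h
  simpa [selG] using this

lemma selK_nonneg {S : Finset ℕ} (hS : ∀ p ∈ S, p.Prime) {R : ℕ} (hR : 1 ≤ R) (n : ℕ) :
    0 ≤ selK S R n := by
  unfold selK
  have := selG_pos hS hR
  positivity

lemma selK_coprime {S : Finset ℕ} (hS : ∀ p ∈ S, p.Prime) {R : ℕ} (hR : 1 ≤ R) {n : ℕ}
    (hn : ∀ p ∈ S, ¬ p ∣ n) : selK S R n = selG S R := by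
  unfold selK
  have h1 : ∑ W ∈ selT S R, ∏ p ∈ W, ch p n = selG S R := by
    unfold selG
    refine Finset.sum_congr rfl fun W hW => Finset.prod_congr rfl fun p hp => ?_
    exact ch_of_not_dvd (hn p ((mem_selT.1 hW).1 hp))
  rw [h1]
  have := selG_pos hS hR
  field_simp

open Classical in
/-- local coefficient, frequency zero -/
noncomputable def ep0 (T T' : Finset ℕ) (p : ℕ) : ℝ :=
  if p ∈ T then (if p ∈ T' then al p else 0) else (if p ∈ T' then 0 else 1)

open Classical in
/-- local coefficient, nonzero frequency -/
noncomputable def ep1 (T T' : Finset ℕ) (p : ℕ) : ℝ :=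
  if p ∈ T then (if p ∈ T' then al p * (1 - al p) else - al p) else (if p ∈ T' then - al p else 0)

lemma ep1_abs {p : ℕ} (hp : p.Prime) (T T' : Finset ℕ) : |ep1 T T' p| ≤ al p := by
  have h0 := al_pos hp
  have h1 := al_le_one hp
  unfold ep1
  split_ifs
  · rw [abs_of_nonneg (mul_nonneg h0.le (by linarith))]; nlinarith
  · rw [abs_neg, abs_of_pos h0]
  · rw [abs_neg, abs_of_pos h0]
  · simpa using h0.le

lemma ch_pair {S : Finset ℕ} (hS : ∀ p ∈ S, p.Prime) {T T' : Finset ℕ} (hT : T ⊆ S) (hT' : T' ⊆ S)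
    (n : ℕ) : (∏ p ∈ T, ch p n) * (∏ p ∈ T', ch p n) =
      ∑ W ∈ S.powerset, ((∏ p ∈ W, ep1 T T' p) * ∏ p ∈ S \ W, ep0 T T' p) * ∏ p ∈ W, rc p n := by
  classical
  have e : ∀ Q ⊆ S, ∏ p ∈ Q, ch p n = ∏ p ∈ S, if p ∈ Q then ch p n else 1 := by
    intro Q hQ
    rw [Finset.prod_ite_mem, Finset.inter_eq_right.2 hQ]
  rw [e T hT, e T' hT', ← Finset.prod_mul_distrib]
  have h1 : ∀ p ∈ S, (if p ∈ T then ch p n else 1) * (if p ∈ T' then ch p n else 1) =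
      ep1 T T' p * rc p n + ep0 T T' p := by
    intro p hp
    unfold ep1 ep0
    split_ifs
    · rw [ch_sq (hS p hp)]; ring
    · simp [ch]
    · simp [ch]
    · simp
  rw [Finset.prod_congr rfl h1, Finset.prod_add]
  refine Finset.sum_congr rfl fun W _ => ?_
  rw [Finset.prod_mul_distrib]; ring

/-- Selberg coefficients -/
noncomputable def selg (S : Finset ℕ) (R : ℕ) (W : Finset ℕ) : ℝ :=
  (selG S R)⁻¹ * ∑ T ∈ selT S R, ∑ T' ∈ selT S R,
    ((∏ p ∈ W, ep1 T T' p) * ∏ p ∈ S \ W, ep0 T T' p)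

lemma selK_expand0 {S : Finset ℕ} (hS : ∀ p ∈ S, p.Prime) (R n : ℕ) :
    selK S R n = ∑ W ∈ S.powerset, selg S R W * ∏ p ∈ W, rc p n := by
  unfold selK selg
  rw [sq, Finset.sum_mul_sum]
  have h1 : ∀ T ∈ selT S R, ∀ T' ∈ selT S R, (∏ p ∈ T, ch p n) * (∏ p ∈ T', ch p n) =
      ∑ W ∈ S.powerset, ((∏ p ∈ W, ep1 T T' p) * ∏ p ∈ S \ W, ep0 T T' p) * ∏ p ∈ W, rc p n :=
    fun T hT T' hT' => ch_pair hS (mem_selT.1 hT).1 (mem_selT.1 hT').1 n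
  rw [Finset.sum_congr rfl fun T hT => Finset.sum_congr rfl fun T' hT' => h1 T hT T' hT']
  simp only [mul_assoc, Finset.mul_sum, Finset.sum_mul]
  refine Eq.trans (Finset.sum_congr rfl fun T _ => Finset.sum_comm) ?_
  exact Finset.sum_comm

lemma selg_support {S : Finset ℕ} (hS : ∀ p ∈ S, p.Prime) (R : ℕ) {W : Finset ℕ} (hW : W ⊆ S)
    (hR : R ^ 2 < ∏ p ∈ W, p) : selg S R W = 0 := by
  classical
  unfold selg
  rw [Finset.sum_eq_zero, mul_zero]
  intro T hT
  refine Finset.sum_eq_zero fun T' hT' => ?_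
  rw [mem_selT] at hT hT'
  by_cases h : W ⊆ T ∪ T'
  · exfalso
    have h1 : ∏ p ∈ W, p ≤ ∏ p ∈ T ∪ T', p := Finset.prod_le_prod_of_subset_of_one_le' h
      fun p hp _ => (hS p (Finset.union_subset hT.1 hT'.1 hp)).one_lt.le
    have h2 : (∏ p ∈ T ∪ T', p) * (∏ p ∈ T ∩ T', p) = (∏ p ∈ T, p) * ∏ p ∈ T', p :=
      Finset.prod_union_inter
    have h3 : 1 ≤ ∏ p ∈ T ∩ T', p := Finset.one_le_prod' fun p hp =>
      (hS p (hT.1 (Finset.inter_subset_left hp))).one_lt.le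
    have h4 : (∏ p ∈ T, p) * ∏ p ∈ T', p ≤ R * R := Nat.mul_le_mul hT.2 hT'.2
    nlinarith
  · obtain ⟨p, hp, hp'⟩ := Finset.not_subset.1 h
    rw [Finset.prod_eq_zero hp, zero_mul]
    rw [Finset.mem_union, not_or] at hp'
    simp [ep1, hp'.1, hp'.2]

lemma ep0_prod {S : Finset ℕ} {T T' W : Finset ℕ} (hT : T ⊆ S) (hT' : T' ⊆ S) :
    ∏ p ∈ S \ W, ep0 T T' p = if T \ W = T' \ W then ∏ p ∈ T \ W, al p else 0 := by
  classical
  split_ifs with h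
  · have h1 : ∀ p ∈ S \ W, ep0 T T' p = if p ∈ T then al p else 1 := by
      intro p hp
      have hpW := (Finset.mem_sdiff.1 hp).2
      have : p ∈ T ↔ p ∈ T' := by
        have := Finset.ext_iff.1 h p
        simpa [hpW] using this
      unfold ep0
      by_cases h' : p ∈ T
      · simp [h', this.1 h']
      · simp [h', mt this.2 h']
    rw [Finset.prod_congr rfl h1, Finset.prod_ite_mem]
    congr 1
    ext p
    simp only [Finset.mem_inter, Finset.mem_sdiff]
    constructor
    · tauto
    · rintro ⟨a, b⟩; exact ⟨⟨hT a, b⟩, a⟩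
  · have : ∃ p, p ∉ W ∧ ¬ (p ∈ T ↔ p ∈ T') := by
      by_contra! hc
      apply h
      ext p
      simp only [Finset.mem_sdiff]
      constructor
      · rintro ⟨a, b⟩; exact ⟨(hc p b).1 a, b⟩
      · rintro ⟨a, b⟩; exact ⟨(hc p b).2 a, b⟩
    obtain ⟨p, hpW, hp⟩ := this
    apply Finset.prod_eq_zero (i := p)
    · rw [Finset.mem_sdiff]
      refine ⟨?_, hpW⟩
      by_contra hc
      exact hp ⟨fun a => absurd (hT a) hc, fun a => absurd (hT' a) hc⟩
    · unfold ep0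
      split_ifs <;> tauto

lemma selg_empty {S : Finset ℕ} (hS : ∀ p ∈ S, p.Prime) {R : ℕ} (hR : 1 ≤ R) :
    selg S R ∅ = 1 := by
  classical
  unfold selg
  have h1 : ∑ T ∈ selT S R, ∑ T' ∈ selT S R,
    ((∏ p ∈ (∅ : Finset ℕ), ep1 T T' p) * ∏ p ∈ S \ ∅, ep0 T T' p) = selG S R := by
    unfold selG
    refine Finset.sum_congr rfl fun T hT => ?_
    have h2 : ∀ T' ∈ selT S R, ((∏ p ∈ (∅ : Finset ℕ), ep1 T T' p) * ∏ p ∈ S \ ∅, ep0 T T' p) =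
        if T = T' then ∏ p ∈ T, al p else 0 := by
      intro T' hT'
      rw [ep0_prod (mem_selT.1 hT).1 (mem_selT.1 hT').1]
      simp
    rw [Finset.sum_congr rfl h2, Finset.sum_ite_eq, if_pos hT]
  rw [h1]
  have := selG_pos hS hR
  field_simp

lemma selg_bound {S : Finset ℕ} (hS : ∀ p ∈ S, p.Prime) {R : ℕ} (hR : 1 ≤ R) {W : Finset ℕ}
    (hW : W ⊆ S) : |selg S R W| ≤ ∏ p ∈ W, (4 * al p) := by
  classical
  have hG := selG_pos hS hR
  have hal : ∀ Q ⊆ S, 0 ≤ ∏ p ∈ Q, al p := fun Q hQ =>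
    Finset.prod_nonneg fun p hp => (al_pos (hS p (hQ hp))).le
  unfold selg
  rw [abs_mul, abs_of_nonneg (by positivity), inv_mul_le_iff₀ (by positivity)]
  have h1 : ∀ T ∈ selT S R, ∀ T' ∈ selT S R,
      |(∏ p ∈ W, ep1 T T' p) * ∏ p ∈ S \ W, ep0 T T' p| ≤
        (∏ p ∈ W, al p) * if T \ W = T' \ W then ∏ p ∈ T \ W, al p else 0 := by
    intro T hT T' hT'
    rw [ep0_prod (mem_selT.1 hT).1 (mem_selT.1 hT').1, abs_mul, Finset.abs_prod]
    have h2 : 0 ≤ if T \ W = T' \ W then ∏ p ∈ T \ W, al p else 0 := by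
      split_ifs
      · exact hal _ (Finset.sdiff_subset.trans (mem_selT.1 hT).1)
      · exact le_rfl
    rw [abs_of_nonneg h2]
    refine mul_le_mul_of_nonneg_right ?_ h2
    exact Finset.prod_le_prod (fun _ _ => abs_nonneg _) fun p hp => ep1_abs (hS p (hW hp)) _ _
  have h3 : ∀ T ∈ selT S R, ∑ T' ∈ selT S R, (if T \ W = T' \ W then ∏ p ∈ T \ W, al p else 0) ≤
      2 ^ W.card * ∏ p ∈ T \ W, al p := by
    intro T hT
    rw [← Finset.sum_filter, Finset.sum_const, nsmul_eq_mul]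
    refine mul_le_mul_of_nonneg_right ?_ (hal _ (Finset.sdiff_subset.trans (mem_selT.1 hT).1))
    have : ((selT S R).filter fun T' => T \ W = T' \ W).card ≤ W.powerset.card := by
      refine Finset.card_le_card_of_injOn (fun T' => T' ∩ W) ?_ ?_
      · intro T' _
        simp
      · intro A hA B hB hAB
        simp only [Finset.coe_filter, Set.mem_ofPred_eq] at hA hB hAB
        rw [← Finset.sdiff_union_inter A W, ← Finset.sdiff_union_inter B W, hAB, ← hA.2, ← hB.2]
    rw [Finset.card_powerset] at this
    exact_mod_cast this
  have h4 : ∑ T ∈ selT S R, ∏ p ∈ T \ W, al p ≤ 2 ^ W.card * selG S R := by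
    have hmap : ∀ T ∈ selT S R, T ∩ W ∈ W.powerset := fun T _ => by simp
    rw [← Finset.sum_fiberwise_of_maps_to hmap]
    have : ∀ A ∈ W.powerset, ∑ T ∈ (selT S R).filter (fun T => T ∩ W = A), ∏ p ∈ T \ W, al p ≤
        selG S R := by
      intro A _
      have hinj : Set.InjOn (fun T => T \ W)
          ((selT S R).filter (fun T => T ∩ W = A) : Finset (Finset ℕ)) := by
        intro B hB C hC hBC
        simp only [Finset.coe_filter, Set.mem_ofPred_eq] at hB hC hBC
        rw [← Finset.sdiff_union_inter B W, ← Finset.sdiff_union_inter C W, hBC, hB.2, hC.2]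
      rw [← Finset.sum_image (f := fun M => ∏ p ∈ M, al p) hinj]
      unfold selG
      refine Finset.sum_le_sum_of_subset_of_nonneg ?_ fun M hM _ => hal _ (mem_selT.1 hM).1
      intro M hM
      rw [Finset.mem_image] at hM
      obtain ⟨T, hT, rfl⟩ := hM
      exact selT_sub hS (Finset.mem_filter.1 hT).1 Finset.sdiff_subset
    refine (Finset.sum_le_sum this).trans ?_
    rw [Finset.sum_const, Finset.card_powerset, nsmul_eq_mul]
    push_cast
    exact le_rfl
  calc |∑ T ∈ selT S R, ∑ T' ∈ selT S R, ((∏ p ∈ W, ep1 T T' p) * ∏ p ∈ S \ W, ep0 T T' p)|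
      ≤ ∑ T ∈ selT S R, ∑ T' ∈ selT S R,
        (∏ p ∈ W, al p) * (if T \ W = T' \ W then ∏ p ∈ T \ W, al p else 0) := by
        refine (Finset.abs_sum_le_sum_abs _ _).trans (Finset.sum_le_sum fun T hT => ?_)
        exact (Finset.abs_sum_le_sum_abs _ _).trans
          (Finset.sum_le_sum fun T' hT' => h1 T hT T' hT')
    _ = (∏ p ∈ W, al p) * ∑ T ∈ selT S R, ∑ T' ∈ selT S R,
          (if T \ W = T' \ W then ∏ p ∈ T \ W, al p else 0) := by
        rw [Finset.mul_sum]
        exact Finset.sum_congr rfl fun T _ => by rw [Finset.mul_sum]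
    _ ≤ (∏ p ∈ W, al p) * ∑ T ∈ selT S R, 2 ^ W.card * ∏ p ∈ T \ W, al p :=
        mul_le_mul_of_nonneg_left (Finset.sum_le_sum h3) (hal W hW)
    _ ≤ (∏ p ∈ W, al p) * (2 ^ W.card * (2 ^ W.card * selG S R)) := by
        rw [← Finset.mul_sum]
        exact mul_le_mul_of_nonneg_left (mul_le_mul_of_nonneg_left h4 (by positivity)) (hal W hW)
    _ = selG S R * ∏ p ∈ W, (4 * al p) := by
        rw [Finset.prod_mul_distrib, Finset.prod_const]
        have : (4:ℝ) ^ W.card = 2 ^ W.card * 2 ^ W.card := by rw [← mul_pow]; norm_num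
        rw [this]; ring

lemma selK_expand {S : Finset ℕ} (hS : ∀ p ∈ S, p.Prime) {R : ℕ} (hR : 1 ≤ R) (n : ℕ) :
    selK S R n - 1 = ∑ W ∈ (selT S (R ^ 2)).erase ∅, selg S R W * ∏ p ∈ W, rc p n := by
  classical
  have h0 : (∅ : Finset ℕ) ∈ selT S (R ^ 2) := by
    rw [mem_selT]; simpa using Nat.one_le_pow 2 R hR
  have h1 : selK S R n = ∑ W ∈ selT S (R ^ 2), selg S R W * ∏ p ∈ W, rc p n := by
    rw [selK_expand0 hS]
    symm
    refine Finset.sum_subset (Finset.filter_subset _ _) fun W hW hW' => ?_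
    have hWS := Finset.mem_powerset.1 hW
    rw [selg_support hS R hWS, zero_mul]
    rw [mem_selT, not_and, not_le] at hW'
    exact hW' hWS
  rw [h1, ← Finset.add_sum_erase _ _ h0, selg_empty hS hR]
  simp

/-- Inverse of the sieve density. -/
noncomputable def Vi (S : Finset ℕ) : ℝ := ∏ p ∈ S, (1 + al p)

/-- Exact sieve weight. -/
noncomputable def lowS (S : Finset ℕ) (n : ℕ) : ℝ := ∏ p ∈ S, (1 + ch p n)

lemma Vi_ge_one {S : Finset ℕ} (hS : ∀ p ∈ S, p.Prime) : 1 ≤ Vi S := by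
  unfold Vi
  exact Finset.one_le_prod fun p hp => by have := al_pos (hS p hp); linarith

lemma lowS_eq {S : Finset ℕ} (hS : ∀ p ∈ S, p.Prime) (n : ℕ) :
    lowS S n = if ∀ p ∈ S, ¬ p ∣ n then Vi S else 0 := by
  unfold lowS Vi
  split_ifs with h
  · exact Finset.prod_congr rfl fun p hp => by rw [ch_of_not_dvd (h p hp)]
  · push Not at h
    obtain ⟨p, hp, hd⟩ := h
    exact Finset.prod_eq_zero hp (by rw [ch_of_dvd (hS p hp) hd]; ring)

lemma lowS_nonneg {S : Finset ℕ} (hS : ∀ p ∈ S, p.Prime) (n : ℕ) : 0 ≤ lowS S n := by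
  rw [lowS_eq hS]
  have := Vi_ge_one hS
  split_ifs <;> linarith

lemma lowS_le {S : Finset ℕ} (hS : ∀ p ∈ S, p.Prime) (n : ℕ) : lowS S n ≤ Vi S := by
  rw [lowS_eq hS]
  have := Vi_ge_one hS
  split_ifs <;> linarith

lemma lowS_expand (S : Finset ℕ) (n : ℕ) :
    lowS S n = ∑ U ∈ S.powerset, (∏ p ∈ U, (- al p)) * ∏ p ∈ U, rc p n := by
  classical
  unfold lowS
  rw [Finset.prod_one_add]
  refine Finset.sum_congr rfl fun U _ => ?_
  rw [← Finset.prod_mul_distrib]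
  rfl

lemma abs_prod_neg_al {U : Finset ℕ} (hU : ∀ p ∈ U, p.Prime) : |∏ p ∈ U, (- al p)| = ∏ p ∈ U, al p := by
  rw [Finset.abs_prod]
  exact Finset.prod_congr rfl fun p hp => by rw [abs_neg, abs_of_pos (al_pos (hU p hp))]

lemma prod_al_le_one {U : Finset ℕ} (hU : ∀ p ∈ U, p.Prime) : ∏ p ∈ U, al p ≤ 1 :=
  Finset.prod_le_one (fun p hp => (al_pos (hU p hp)).le) fun p hp => al_le_one (hU p hp)

/-! ### Brun's pure sieve -/

/-- index set -/
noncomputable def brT (S : Finset ℕ) (r : ℕ) : Finset (Finset ℕ) :=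
  S.powerset.filter fun T => T.card ≤ 2 * r

/-- Brun's upper bound sieve -/
noncomputable def beta (S : Finset ℕ) (r n : ℕ) : ℝ :=
  ∑ T ∈ brT S r, ∏ p ∈ T, if p ∣ n then (-1 : ℝ) else 0

/-- Brun error -/
noncomputable def brE (S : Finset ℕ) (r n : ℕ) : ℝ :=
  ∑ T ∈ S.powersetCard (2 * r + 1), if ∀ p ∈ T, p ∣ n then (1 : ℝ) else 0

lemma beta_eq (S : Finset ℕ) (r n : ℕ) :
    beta S r n = ∑ i ∈ Finset.range (2 * r + 1),
      (-1 : ℝ) ^ i * ((S.filter fun p => p ∣ n).card.choose i : ℝ) := by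
  classical
  set M := S.filter fun p => p ∣ n with hM
  unfold beta
  have hmap : ∀ T ∈ brT S r, T.card ∈ Finset.range (2 * r + 1) := by
    intro T hT
    have := (Finset.mem_filter.1 hT).2
    rw [Finset.mem_range]; omega
  rw [← Finset.sum_fiberwise_of_maps_to hmap]
  refine Finset.sum_congr rfl fun i hi => ?_
  have h1 : ∀ T ∈ (brT S r).filter (fun T => T.card = i),
      (∏ p ∈ T, if p ∣ n then (-1 : ℝ) else 0) = if T ⊆ M then (-1 : ℝ) ^ i else 0 := by
    intro T hT
    rw [Finset.mem_filter, brT, Finset.mem_filter, Finset.mem_powerset] at hT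
    split_ifs with h
    · rw [Finset.prod_congr rfl fun p hp => if_pos (Finset.mem_filter.1 (h hp)).2,
        Finset.prod_const, hT.2]
    · obtain ⟨p, hp, hpM⟩ := Finset.not_subset.1 h
      apply Finset.prod_eq_zero hp
      rw [if_neg]
      intro hd
      exact hpM (Finset.mem_filter.2 ⟨hT.1.1 hp, hd⟩)
  rw [Finset.sum_congr rfl h1, ← Finset.sum_filter, Finset.sum_const, nsmul_eq_mul, mul_comm,
    ← Finset.card_powersetCard]
  congr 2
  congr 1
  ext T
  simp only [Finset.mem_filter, brT, Finset.mem_powerset, Finset.mem_powersetCard]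
  rw [Finset.mem_range] at hi
  constructor
  · rintro ⟨⟨⟨a, b⟩, c⟩, d⟩; exact ⟨d, c⟩
  · rintro ⟨a, b⟩
    exact ⟨⟨⟨a.trans (Finset.filter_subset _ _), by omega⟩, b⟩, a⟩

lemma brE_eq (S : Finset ℕ) (r n : ℕ) :
    brE S r n = ((S.filter fun p => p ∣ n).card.choose (2 * r + 1) : ℝ) := by
  classical
  unfold brE
  rw [← Finset.card_powersetCard, ← Finset.sum_filter, Finset.sum_const, nsmul_eq_mul, mul_one]
  congr 2
  ext T
  simp only [Finset.mem_filter, Finset.mem_powersetCard, Finset.subset_iff]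
  constructor
  · rintro ⟨⟨a, b⟩, c⟩; exact ⟨fun p hp => ⟨a hp, c p hp⟩, b⟩
  · rintro ⟨a, b⟩; exact ⟨⟨fun p hp => (a hp).1, b⟩, fun p hp => (a hp).2⟩

lemma brE_nonneg (S : Finset ℕ) (r n : ℕ) : 0 ≤ brE S r n := by
  rw [brE_eq]; positivity

lemma beta_bounds {S : Finset ℕ} (hS : ∀ p ∈ S, p.Prime) (r n : ℕ) :
    lowS S n ≤ Vi S * beta S r n ∧ Vi S * beta S r n ≤ lowS S n + Vi S * brE S r n := by
  classical
  have hV := Vi_ge_one hS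
  rw [lowS_eq hS, beta_eq, brE_eq]
  set M := S.filter fun p => p ∣ n with hM
  rcases Nat.eq_zero_or_pos M.card with h0 | h0
  · have h1 : ∀ p ∈ S, ¬ p ∣ n := by
      intro p hp hd
      have : p ∈ M := Finset.mem_filter.2 ⟨hp, hd⟩
      rw [Finset.card_eq_zero.1 h0] at this
      simp at this
    rw [if_pos h1, h0, Finset.sum_range_succ']
    simp
  · have h1 : ¬ ∀ p ∈ S, ¬ p ∣ n := by
      obtain ⟨p, hp⟩ := Finset.card_pos.1 h0
      rw [Finset.mem_filter] at hp
      exact fun h => h p hp.1 hp.2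
    rw [if_neg h1]
    obtain ⟨w, hw⟩ : ∃ w, M.card = w + 1 := ⟨M.card - 1, by omega⟩
    rw [hw]
    have h2 := Int.alternating_sum_range_choose_eq_choose (n := w) (m := 2 * r)
    have h3 : ∑ i ∈ Finset.range (2 * r + 1), (-1 : ℝ) ^ i * ((w + 1).choose i : ℝ) =
        (w.choose (2 * r) : ℝ) := by
      have := congrArg (fun z : ℤ => (z : ℝ)) h2
      push_cast at this
      rw [this, pow_mul]; simp
    rw [h3]
    have h4 : (w.choose (2 * r) : ℝ) ≤ ((w + 1).choose (2 * r + 1) : ℝ) := by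
      rw [Nat.choose_succ_succ]; push_cast
      have : (0:ℝ) ≤ (w.choose (2 * r + 1) : ℝ) := by positivity
      linarith
    constructor
    · positivity
    · rw [zero_add]; exact mul_le_mul_of_nonneg_left h4 (by linarith)

/-- Brun coefficients -/
noncomputable def brb (S : Finset ℕ) (r : ℕ) (U : Finset ℕ) : ℝ :=
  ∑ T ∈ brT S r, if U ⊆ T then ∏ p ∈ T, (-(p : ℝ)⁻¹) else 0

lemma beta_expand {S : Finset ℕ} (hS : ∀ p ∈ S, p.Prime) (r n : ℕ) :
    beta S r n = ∑ U ∈ brT S r, brb S r U * ∏ p ∈ U, rc p n := by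
  classical
  unfold beta brb
  simp only [Finset.sum_mul]
  rw [Finset.sum_comm]
  refine Finset.sum_congr rfl fun T hT => ?_
  rw [brT, Finset.mem_filter, Finset.mem_powerset] at hT
  have h1 : ∀ p ∈ T, (if p ∣ n then (-1 : ℝ) else 0) = (-(p : ℝ)⁻¹) * (1 + rc p n) := by
    intro p hp
    have : (p:ℝ) ≠ 0 := by exact_mod_cast (hS p (hT.1 hp)).ne_zero
    unfold rc
    split_ifs
    · field_simp; ring
    · ring
  rw [Finset.prod_congr rfl h1, Finset.prod_mul_distrib, Finset.prod_one_add, Finset.mul_sum]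
  simp only [ite_mul, zero_mul]
  rw [← Finset.sum_filter]
  refine Finset.sum_congr ?_ fun _ _ => rfl
  ext U
  simp only [brT, Finset.mem_filter, Finset.mem_powerset]
  constructor
  · intro h
    exact ⟨⟨h.trans hT.1, (Finset.card_le_card h).trans hT.2⟩, h⟩
  · exact fun h => h.2

lemma inv_le_al {p : ℕ} (hp : p.Prime) : (p : ℝ)⁻¹ ≤ al p := by
  unfold al
  have : (1:ℝ) < p := by exact_mod_cast hp.one_lt
  exact inv_anti₀ (by linarith) (by linarith)

lemma prod_one_add_inv_le {S : Finset ℕ} (hS : ∀ p ∈ S, p.Prime) :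
    ∏ p ∈ S, (1 + (p : ℝ)⁻¹) ≤ Vi S := by
  unfold Vi
  refine Finset.prod_le_prod (fun p _ => by positivity) fun p hp => ?_
  have := inv_le_al (hS p hp); linarith

lemma brb_bound {S : Finset ℕ} (hS : ∀ p ∈ S, p.Prime) (r : ℕ) (U : Finset ℕ) :
    |brb S r U| ≤ Vi S := by
  classical
  refine le_trans ?_ (prod_one_add_inv_le hS)
  rw [Finset.prod_one_add]
  unfold brb
  calc |∑ T ∈ brT S r, if U ⊆ T then ∏ p ∈ T, (-(p : ℝ)⁻¹) else 0|
      ≤ ∑ T ∈ brT S r, |if U ⊆ T then ∏ p ∈ T, (-(p : ℝ)⁻¹) else 0| := Finset.abs_sum_le_sum_abs _ _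
    _ ≤ ∑ T ∈ brT S r, ∏ p ∈ T, (p : ℝ)⁻¹ := by
        refine Finset.sum_le_sum fun T _ => ?_
        split_ifs
        · rw [Finset.abs_prod]
          exact le_of_eq (Finset.prod_congr rfl fun p _ => by
            rw [abs_neg, abs_of_nonneg (by positivity)])
        · rw [abs_zero]; positivity
    _ ≤ ∑ T ∈ S.powerset, ∏ p ∈ T, (p : ℝ)⁻¹ :=
        Finset.sum_le_sum_of_subset_of_nonneg (Finset.filter_subset _ _)
          fun T _ _ => by positivity

/-- Rankin's trick for the Brun error. -/
lemma rankin {S : Finset ℕ} (hS : ∀ p ∈ S, p.Prime) (m : ℕ) :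
    ∑ T ∈ S.powersetCard m, ∏ p ∈ T, (p : ℝ)⁻¹ ≤ ((8:ℝ) ^ m)⁻¹ * Vi S ^ 8 := by
  classical
  rw [inv_mul_eq_div, le_div_iff₀ (by positivity)]
  calc (∑ T ∈ S.powersetCard m, ∏ p ∈ T, (p : ℝ)⁻¹) * 8 ^ m
      = ∑ T ∈ S.powersetCard m, ∏ p ∈ T, (8 * (p : ℝ)⁻¹) := by
        rw [Finset.sum_mul]
        refine Finset.sum_congr rfl fun T hT => ?_
        rw [Finset.prod_mul_distrib, Finset.prod_const, (Finset.mem_powersetCard.1 hT).2, mul_comm]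
    _ ≤ ∑ T ∈ S.powerset, ∏ p ∈ T, (8 * (p : ℝ)⁻¹) :=
        Finset.sum_le_sum_of_subset_of_nonneg (fun T hT => Finset.mem_powerset.2 (Finset.mem_powersetCard.1 hT).1)
          fun T _ _ => by positivity
    _ = ∏ p ∈ S, (1 + 8 * (p : ℝ)⁻¹) := (Finset.prod_one_add _).symm
    _ ≤ ∏ p ∈ S, (1 + al p) ^ 8 := by
        refine Finset.prod_le_prod (fun p _ => by positivity) fun p hp => ?_
        have h1 := inv_le_al (hS p hp)
        have h2 := al_pos (hS p hp)
        have h3 := one_add_mul_le_pow (a := al p) (by linarith) 8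
        push_cast at h3
        linarith
    _ = Vi S ^ 8 := by rw [Finset.prod_pow]; rfl

lemma brE_sum {S : Finset ℕ} (hS : ∀ p ∈ S, p.Prime) (r M : ℕ) :
    ∑ n ∈ Finset.Ioc 0 M, brE S r n ≤ M * (((8:ℝ) ^ (2 * r + 1))⁻¹ * Vi S ^ 8) := by
  classical
  refine le_trans ?_ (mul_le_mul_of_nonneg_left (rankin hS _) (by positivity))
  unfold brE
  rw [Finset.sum_comm, Finset.mul_sum]
  refine Finset.sum_le_sum fun T hT => ?_
  have hTS := (Finset.mem_powersetCard.1 hT).1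
  rw [← Finset.sum_filter, Finset.sum_const, nsmul_eq_mul, mul_one]
  have h1 : (Finset.Ioc 0 M).filter (fun n => ∀ p ∈ T, p ∣ n) =
      (Finset.Ioc 0 M).filter (fun n => (∏ p ∈ T, p) ∣ n) := by
    refine Finset.filter_congr fun n _ => ?_
    constructor
    · intro h
      exact Finset.prod_primes_dvd n (fun p hp => (hS p (hTS hp)).prime) h
    · intro h p hp
      exact (Finset.dvd_prod_of_mem _ hp).trans h
  rw [h1, Nat.Ioc_filter_dvd_card_eq_div]
  refine Nat.cast_div_le.trans (le_of_eq ?_)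
  push_cast
  rw [Finset.prod_inv_distrib, div_eq_mul_inv]

/-! ### Number-theoretic estimates -/

/-- primes up to `N` -/
def PL (N : ℕ) : Finset ℕ := (Finset.range (N + 1)).filter Nat.Prime

/-- primes in `(M, N]` -/
def PI (M N : ℕ) : Finset ℕ := (Finset.Ioc M N).filter Nat.Prime

lemma mem_PL {N p : ℕ} : p ∈ PL N ↔ p ≤ N ∧ p.Prime := by simp [PL]

lemma mem_PI {M N p : ℕ} : p ∈ PI M N ↔ (M < p ∧ p ≤ N) ∧ p.Prime := by simp [PI]

lemma PL_prime {N : ℕ} : ∀ p ∈ PL N, p.Prime := fun _ h => (mem_PL.1 h).2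

lemma PI_prime {M N : ℕ} : ∀ p ∈ PI M N, p.Prime := fun _ h => (mem_PI.1 h).2

lemma PL_PI_disj (M N : ℕ) : Disjoint (PL M) (PI M N) := by
  rw [Finset.disjoint_left]
  intro p h1 h2
  rw [mem_PL] at h1; rw [mem_PI] at h2; omega

lemma PL_union (M N : ℕ) (h : M ≤ N) : PL M ∪ PI M N = PL N := by
  ext p
  rw [Finset.mem_union, mem_PL, mem_PI, mem_PL]
  constructor
  · rintro (h | h)
    · exact ⟨by omega, h.2⟩
    · exact ⟨h.1.2, h.2⟩
  · intro h
    by_cases h' : p ≤ M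
    · exact Or.inl ⟨h', h.2⟩
    · exact Or.inr ⟨⟨by omega, h.1⟩, h.2⟩

lemma al_le_of_lt {a p : ℕ} (h : 2 ^ a < p) : al p ≤ ((2:ℝ) ^ a)⁻¹ := by
  unfold al
  refine inv_anti₀ (by positivity) ?_
  have : (2:ℝ) ^ a + 1 ≤ p := by exact_mod_cast h
  linarith

lemma block_card (a : ℕ) : a * (PI (2 ^ a) (2 ^ (a + 1))).card ≤ 2 ^ (a + 1) := by
  have h1 : ∏ p ∈ PI (2 ^ a) (2 ^ (a + 1)), p ≤ 2 ^ (2 ^ (a + 1)) := by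
    have h2 := primorial_add_le (le_refl (2 ^ a))
    rw [primorial_add] at h2
    have h3 := Nat.le_of_mul_le_mul_left h2 (primorial_pos _)
    have e : 2 ^ a + 2 ^ a = 2 ^ (a + 1) := by ring
    rw [e] at h3
    refine le_trans (le_of_eq ?_) (h3.trans (Nat.choose_le_two_pow _ _))
    refine Finset.prod_congr ?_ fun _ _ => rfl
    ext p
    simp [PI]
  have h2 : (2 ^ a) ^ (PI (2 ^ a) (2 ^ (a + 1))).card ≤ ∏ p ∈ PI (2 ^ a) (2 ^ (a + 1)), p :=
    Finset.pow_card_le_prod _ _ _ fun p hp => (mem_PI.1 hp).1.1.le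
  have h3 := h2.trans h1
  rw [← pow_mul] at h3
  exact (Nat.pow_le_pow_iff_right (by norm_num)).1 h3

lemma Vi_step (a : ℕ) (ha : 1 ≤ a) :
    Vi (PL (2 ^ (a + 1))) ≤ Vi (PL (2 ^ a)) * Real.exp (2 * (a : ℝ)⁻¹) := by
  have hle : 2 ^ a ≤ 2 ^ (a + 1) := Nat.pow_le_pow_right (by norm_num) (by omega)
  rw [← PL_union _ _ hle]
  unfold Vi
  rw [Finset.prod_union (PL_PI_disj _ _)]
  have hV := Vi_ge_one (S := PL (2 ^ a)) PL_prime
  unfold Vi at hV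
  refine mul_le_mul_of_nonneg_left ?_ (by linarith)
  calc ∏ p ∈ PI (2 ^ a) (2 ^ (a + 1)), (1 + al p)
      ≤ ∏ p ∈ PI (2 ^ a) (2 ^ (a + 1)), Real.exp (((2:ℝ) ^ a)⁻¹) := by
        refine Finset.prod_le_prod (fun p hp => ?_) fun p hp => ?_
        · have := al_pos (PI_prime p hp); linarith
        · have := al_le_of_lt (mem_PI.1 hp).1.1
          have h2 := Real.add_one_le_exp (((2:ℝ) ^ a)⁻¹)
          linarith
    _ = Real.exp ((PI (2 ^ a) (2 ^ (a + 1))).card * ((2:ℝ) ^ a)⁻¹) := by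
        rw [Finset.prod_const, ← Real.exp_nat_mul]
    _ ≤ _ := by
        apply Real.exp_le_exp.2
        have h := block_card a
        have h' : (a:ℝ) * (PI (2 ^ a) (2 ^ (a + 1))).card ≤ 2 ^ (a + 1) := by exact_mod_cast h
        have ha' : (0:ℝ) < a := by exact_mod_cast ha
        rw [mul_inv_le_iff₀ (by positivity), ← div_eq_mul_inv, div_mul_eq_mul_div,
          le_div_iff₀ ha']
        have e : (2:ℝ) ^ (a + 1) = 2 ^ a * 2 := pow_succ _ _
        linarith

lemma Vi_le (a : ℕ) (ha : 1 ≤ a) : Vi (PL (2 ^ a)) ≤ 16 * (a : ℝ) ^ 2 := by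
  have h1 : Vi (PL (2 ^ a)) ≤ 2 * Real.exp (2 * (harmonic (a - 1) : ℝ)) := by
    induction a, ha using Nat.le_induction with
    | base =>
      have : PL (2 ^ 1) = {2} := by decide
      rw [this]
      simp [Vi, al]; norm_num
    | succ a ha ih =>
      refine (Vi_step a ha).trans ?_
      have e : harmonic (a + 1 - 1) = harmonic (a - 1) + (a : ℚ)⁻¹ := by
        obtain ⟨b, rfl⟩ : ∃ b, a = b + 1 := ⟨a - 1, by omega⟩
        simp only [Nat.add_sub_cancel]
        rw [harmonic_succ]
      rw [e]
      push_cast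
      rw [mul_add, Real.exp_add, ← mul_assoc]
      exact mul_le_mul_of_nonneg_right ih (Real.exp_pos _).le
  have ha' : (1:ℝ) ≤ a := by exact_mod_cast ha
  have h2 : (harmonic (a - 1) : ℝ) ≤ 1 + Real.log a := by
    have h3 : (harmonic (a - 1) : ℝ) ≤ harmonic a := by
      obtain ⟨b, rfl⟩ : ∃ b, a = b + 1 := ⟨a - 1, by omega⟩
      simp only [Nat.add_sub_cancel]
      rw [harmonic_succ]
      push_cast
      have : (0:ℝ) ≤ ((b:ℝ) + 1)⁻¹ := by positivity
      linarith
    exact h3.trans (harmonic_le_one_add_log a)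
  have h4 : Real.exp (2 * (harmonic (a - 1) : ℝ)) ≤ 8 * (a:ℝ) ^ 2 := by
    calc Real.exp (2 * (harmonic (a - 1) : ℝ)) ≤ Real.exp (2 * (1 + Real.log a)) :=
          Real.exp_le_exp.2 (by linarith)
      _ = Real.exp 1 ^ 2 * (a:ℝ) ^ 2 := by
          rw [show 2 * (1 + Real.log a) = (1 + Real.log a) + (1 + Real.log a) by ring, Real.exp_add,
            Real.exp_add, Real.exp_log (by linarith)]; ring
      _ ≤ 8 * (a:ℝ) ^ 2 := by
          refine mul_le_mul_of_nonneg_right ?_ (by positivity)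
          have := Real.exp_one_lt_d9
          have h0 := Real.exp_pos 1
          nlinarith
  linarith

lemma sum_inv_sq (R : ℕ) : ∑ m ∈ Finset.Icc 1 R, ((m:ℝ) ^ 2)⁻¹ ≤ 2 := by
  have : ∀ R : ℕ, ∑ m ∈ Finset.Icc 1 (R + 1), ((m:ℝ) ^ 2)⁻¹ ≤ 2 - ((R : ℝ) + 1)⁻¹ := by
    intro R
    induction R with
    | zero => norm_num
    | succ R ih =>
      rw [Finset.sum_Icc_succ_top (by omega)]
      push_cast
      have hR : (0:ℝ) ≤ R := by positivity
      have key : (((R:ℝ) + 1 + 1) ^ 2)⁻¹ ≤ ((R:ℝ) + 1)⁻¹ - ((R:ℝ) + 1 + 1)⁻¹ := by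
        rw [inv_sub_inv (by positivity) (by positivity), inv_eq_one_div]
        rw [div_le_div_iff₀ (by positivity) (by positivity)]
        nlinarith
      linarith
  rcases R with _ | R
  · simp
  · have := this R
    have h : (0:ℝ) ≤ ((R:ℝ) + 1)⁻¹ := by positivity
    linarith

/-- Lower bound for the squarefree sum. -/
lemma sqfree_sum (b : ℕ) : (b : ℝ) / 4 ≤ ∑ T ∈ selT (PL (2 ^ b)) (2 ^ b), ∏ p ∈ T, al p := by
  classical
  set R := 2 ^ b with hR
  have h1 : (b : ℝ) / 2 ≤ ∑ n ∈ Finset.Icc 1 R, (n : ℝ)⁻¹ := by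
    have h := log_add_one_le_harmonic R
    have e : (harmonic R : ℝ) = ∑ n ∈ Finset.Icc 1 R, (n : ℝ)⁻¹ := by
      rw [harmonic_eq_sum_Icc]; push_cast; rfl
    rw [← e]
    refine le_trans ?_ h
    have h2 : Real.log ((2:ℝ) ^ b) ≤ Real.log (R + 1) := by
      apply Real.log_le_log (by positivity)
      rw [hR]; push_cast; linarith
    rw [Real.log_pow] at h2
    push_cast
    have := Real.log_two_gt_d9
    have hb : (0:ℝ) ≤ b := by positivity
    nlinarith
  have hex : ∀ n : ℕ, ∃ z : Finset ℕ × ℕ, n ∈ Finset.Icc 1 R →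
      (z.1 ∈ selT (PL R) R ∧ z.2 ∈ Finset.Icc 1 R ∧ n = z.2 ^ 2 * ∏ p ∈ z.1, p) := by
    intro n
    obtain ⟨q, m, h, hs⟩ := Nat.sq_mul_squarefree n
    refine ⟨(q.primeFactors, m), fun hn => ?_⟩
    rw [Finset.mem_Icc] at hn
    have hp := Nat.prod_primeFactors_of_squarefree hs
    have hm : m ≠ 0 := by rintro rfl; simp at h; omega
    have hq : q ≠ 0 := by rintro rfl; simp at h; omega
    have hmn : m ≤ n := by
      rw [← h]; nlinarith [Nat.pos_of_ne_zero hm, Nat.pos_of_ne_zero hq, Nat.mul_le_mul (Nat.pos_of_ne_zero hm) (Nat.pos_of_ne_zero hq), Nat.le_mul_of_pos_right (m^2) (Nat.pos_of_ne_zero hq), Nat.le_mul_of_pos_right m (Nat.pos_of_ne_zero hm)]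
    have hqn : q ≤ n := by
      rw [← h]; exact Nat.le_mul_of_pos_left _ (by positivity)
    refine ⟨?_, Finset.mem_Icc.2 ⟨Nat.pos_of_ne_zero hm, by omega⟩, by rw [hp, h]⟩
    rw [mem_selT, hp]
    refine ⟨fun p hpq => ?_, by omega⟩
    rw [mem_PL]
    have := Nat.mem_primeFactors.1 hpq
    exact ⟨(Nat.le_of_dvd (Nat.pos_of_ne_zero hq) this.2.1).trans (by omega), this.1⟩
  choose φ hφ using hex
  have hinj : Set.InjOn φ (Finset.Icc 1 R : Finset ℕ) := by
    intro n hn n' hn' h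
    rw [(hφ n hn).2.2, (hφ n' hn').2.2, h]
  have h2 : ∑ n ∈ Finset.Icc 1 R, (n : ℝ)⁻¹ ≤
      ∑ z ∈ selT (PL R) R ×ˢ Finset.Icc 1 R, (∏ p ∈ z.1, al p) * ((z.2:ℝ) ^ 2)⁻¹ := by
    calc ∑ n ∈ Finset.Icc 1 R, (n : ℝ)⁻¹ ≤
        ∑ n ∈ Finset.Icc 1 R, (∏ p ∈ (φ n).1, al p) * (((φ n).2:ℝ) ^ 2)⁻¹ := by
          refine Finset.sum_le_sum fun n hn => ?_
          obtain ⟨a1, a2, a3⟩ := hφ n hn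
          have a4 : (n:ℝ)⁻¹ = (∏ p ∈ (φ n).1, (p:ℝ)⁻¹) * (((φ n).2:ℝ) ^ 2)⁻¹ := by
            rw [Finset.prod_inv_distrib, ← mul_inv]
            congr 1
            conv_lhs => rw [a3]
            push_cast; ring
          rw [a4]
          refine mul_le_mul_of_nonneg_right ?_ (by positivity)
          refine Finset.prod_le_prod (fun p _ => by positivity) fun p hp => ?_
          exact inv_le_al (PL_prime p ((mem_selT.1 a1).1 hp))
      _ = ∑ z ∈ (Finset.Icc 1 R).image φ, (∏ p ∈ z.1, al p) * ((z.2:ℝ) ^ 2)⁻¹ :=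
          (Finset.sum_image (f := fun z : Finset ℕ × ℕ => (∏ p ∈ z.1, al p) * ((z.2:ℝ) ^ 2)⁻¹)
            hinj).symm
      _ ≤ _ := by
          refine Finset.sum_le_sum_of_subset_of_nonneg ?_ ?_
          · intro z hz
            obtain ⟨n, hn, rfl⟩ := Finset.mem_image.1 hz
            exact Finset.mem_product.2 ⟨(hφ n hn).1, (hφ n hn).2.1⟩
          · intro z hz _
            refine mul_nonneg (Finset.prod_nonneg fun p hp => ?_) (by positivity)
            exact (al_pos (PL_prime p ((mem_selT.1 (Finset.mem_product.1 hz).1).1 hp))).le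
  rw [Finset.sum_product] at h2
  simp only at h2
  rw [← Finset.sum_mul_sum] at h2
  have h3 : 0 ≤ ∑ T ∈ selT (PL R) R, ∏ p ∈ T, al p := Finset.sum_nonneg fun T hT =>
    Finset.prod_nonneg fun p hp => (al_pos (PL_prime p ((mem_selT.1 hT).1 hp))).le
  have h4 := mul_le_mul_of_nonneg_left (sum_inv_sq R) h3
  linarith

lemma VG_lower (M b : ℕ) :
    (b : ℝ) / 4 ≤ Vi (PL M) * selG (PI M (2 ^ b)) (2 ^ b) := by
  classical
  refine (sqfree_sum b).trans ?_
  set R := 2 ^ b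
  unfold Vi selG
  rw [Finset.prod_one_add, Finset.sum_mul_sum, ← Finset.sum_product']
  have hnn : ∀ T ⊆ PL M ∪ PI M R, 0 ≤ ∏ p ∈ T, al p := by
    intro T hT
    refine Finset.prod_nonneg fun p hp => (al_pos ?_).le
    rcases Finset.mem_union.1 (hT hp) with h | h
    · exact PL_prime p h
    · exact PI_prime p h
  have hsub : ∀ T ∈ selT (PL R) R, T ⊆ PL M ∪ PI M R := by
    intro T hT p hp
    have := mem_PL.1 ((mem_selT.1 hT).1 hp)
    rw [Finset.mem_union, mem_PL, mem_PI]
    by_cases h : p ≤ M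
    · exact Or.inl ⟨h, this.2⟩
    · exact Or.inr ⟨⟨by omega, this.1⟩, this.2⟩
  have hdec : ∀ T ∈ selT (PL R) R, (T ∩ PL M) ∪ (T ∩ PI M R) = T := by
    intro T hT
    rw [← Finset.inter_union_distrib_left, Finset.inter_eq_left.2 (hsub T hT)]
  have hinj : Set.InjOn (fun T => (T ∩ PL M, T ∩ PI M R)) (selT (PL R) R : Finset (Finset ℕ)) := by
    intro T hT T' hT' h
    simp only [Prod.mk.injEq] at h
    rw [← hdec T hT, ← hdec T' hT', h.1, h.2]
  calc ∑ T ∈ selT (PL R) R, ∏ p ∈ T, al p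
      = ∑ T ∈ selT (PL R) R, (∏ p ∈ T ∩ PL M, al p) * ∏ p ∈ T ∩ PI M R, al p := by
        refine Finset.sum_congr rfl fun T hT => ?_
        conv_lhs => rw [← hdec T hT]
        rw [Finset.prod_union]
        exact (PL_PI_disj M R).mono Finset.inter_subset_right Finset.inter_subset_right
    _ = ∑ z ∈ (selT (PL R) R).image (fun T => (T ∩ PL M, T ∩ PI M R)),
          (∏ p ∈ z.1, al p) * ∏ p ∈ z.2, al p :=
        (Finset.sum_image (f := fun z : Finset ℕ × Finset ℕ =>
          (∏ p ∈ z.1, al p) * ∏ p ∈ z.2, al p) hinj).symm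
    _ ≤ _ := by
        refine Finset.sum_le_sum_of_subset_of_nonneg ?_ ?_
        · intro z hz
          obtain ⟨T, hT, rfl⟩ := Finset.mem_image.1 hz
          refine Finset.mem_product.2 ⟨by simp, ?_⟩
          rw [mem_selT]
          exact ⟨Finset.inter_subset_right,
            (mem_selT.1 (selT_sub PL_prime hT Finset.inter_subset_left)).2⟩
        · intro z hz _
          obtain ⟨h1, h2⟩ := Finset.mem_product.1 hz
          refine mul_nonneg (hnn _ ?_) (hnn _ ?_)
          · exact (Finset.mem_powerset.1 h1).trans Finset.subset_union_left
          · exact (mem_selT.1 h2).1.trans Finset.subset_union_right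

/-! ### Pointwise facts about the averaging operators -/

/-- multiplicities of the Fejér kernel -/
def mult (L n : ℕ) : ℕ :=
  ((Finset.range L ×ˢ Finset.range L).filter fun z => z.2 + L - z.1 = n).card

lemma mult_le (L n : ℕ) : mult L n ≤ L := by
  unfold mult
  calc _ ≤ (Finset.range L).card := by
        refine Finset.card_le_card_of_injOn (fun z => z.1) ?_ ?_
        · intro z hz
          simp only [Finset.coe_filter, Finset.mem_product, Set.mem_ofPred_eq] at hz
          exact hz.1.1
        · rintro ⟨a, b⟩ hz ⟨c, d⟩ hz' h
          simp only [Finset.coe_filter, Finset.mem_product, Set.mem_ofPred_eq, Finset.mem_range]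
            at hz hz' h
          ext
          · exact h
          · show b = d
            omega
    _ = L := by simp

lemma le_mult {L n : ℕ} (h : n ≤ L) : n ≤ mult L n := by
  unfold mult
  calc n = (Finset.range n).card := by simp
    _ ≤ _ := by
        refine Finset.card_le_card_of_injOn (fun t => (L - n + t, t)) ?_ ?_
        · intro t ht
          simp only [Finset.coe_range, Set.mem_Iio] at ht
          simp only [Finset.coe_filter, Finset.mem_product, Set.mem_ofPred_eq, Finset.mem_range]
          omega
        · intro t _ t' _ h
          simp only [Prod.mk.injEq] at h
          exact h.2

lemma Kop_eq {X : Type u} (T : X → X) (k : ℕ → ℝ) (L : ℕ) (f : X → ℝ) (x : X) :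
    Kop T k L f x = ((L : ℝ) ^ 2)⁻¹ * ∑ n ∈ Finset.Ioc 0 (2 * L),
      (mult L n : ℝ) * (k n * f (T^[n] x)) := by
  unfold Kop
  congr 1
  rw [← Finset.sum_product' (f := fun s t => k (t + L - s) * f (T^[t + L - s] x))]
  have hmap : ∀ z ∈ Finset.range L ×ˢ Finset.range L, z.2 + L - z.1 ∈ Finset.Ioc 0 (2 * L) := by
    rintro ⟨s, t⟩ h
    simp only [Finset.mem_product, Finset.mem_range] at h
    simp only [Finset.mem_Ioc]
    omega
  rw [← Finset.sum_fiberwise_of_maps_to hmap]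
  refine Finset.sum_congr rfl fun n _ => ?_
  have : ∀ z ∈ (Finset.range L ×ˢ Finset.range L).filter (fun z => z.2 + L - z.1 = n),
      k (z.2 + L - z.1) * f (T^[z.2 + L - z.1] x) = k n * f (T^[n] x) := by
    intro z hz
    rw [(Finset.mem_filter.1 hz).2]
  rw [Finset.sum_congr rfl this, Finset.sum_const, nsmul_eq_mul]
  rfl

lemma Kop_mono {X : Type u} (T : X → X) {k k' : ℕ → ℝ} (L : ℕ) {f : X → ℝ} (hf : ∀ x, 0 ≤ f x)
    (h : ∀ n, k n ≤ k' n) (x : X) : Kop T k L f x ≤ Kop T k' L f x := by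
  unfold Kop
  refine mul_le_mul_of_nonneg_left ?_ (by positivity)
  exact Finset.sum_le_sum fun s _ => Finset.sum_le_sum fun t _ =>
    mul_le_mul_of_nonneg_right (h _) (hf _)

lemma Kop_add {X : Type u} (T : X → X) (k k' : ℕ → ℝ) (L : ℕ) (f : X → ℝ) (x : X) :
    Kop T (fun n => k n + k' n) L f x = Kop T k L f x + Kop T k' L f x := by
  unfold Kop
  simp only [add_mul, Finset.sum_add_distrib, mul_add]

lemma Kop_sum {X : Type u} {ι : Type*} (T : X → X) (I : Finset ι) (k : ι → ℕ → ℝ) (L : ℕ)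
    (f : X → ℝ) (x : X) :
    Kop T (fun n => ∑ i ∈ I, k i n) L f x = ∑ i ∈ I, Kop T (k i) L f x := by
  classical
  induction I using Finset.induction_on with
  | empty => simp [Kop]
  | insert i I hi ih =>
    simp only [Finset.sum_insert hi]
    rw [Kop_add, ih]

lemma Kop_upper {X : Type u} (T : X → X) {k : ℕ → ℝ} (L : ℕ) (hL : 0 < L) {f : X → ℝ}
    (hf : ∀ x, 0 ≤ f x) (hk : ∀ n, 0 ≤ k n) (x : X) :
    Kop T k L f x ≤ (L : ℝ)⁻¹ * ∑ n ∈ Finset.Ioc 0 (2 * L), k n * f (T^[n] x) := by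
  rw [Kop_eq]
  have hL' : (0:ℝ) < L := by exact_mod_cast hL
  have e : (L:ℝ)⁻¹ = ((L:ℝ) ^ 2)⁻¹ * L := by field_simp
  rw [e, mul_assoc]
  refine mul_le_mul_of_nonneg_left ?_ (by positivity)
  rw [Finset.mul_sum]
  refine Finset.sum_le_sum fun n _ => ?_
  refine mul_le_mul_of_nonneg_right ?_ (mul_nonneg (hk _) (hf _))
  exact_mod_cast mult_le L n

/-- normalised dyadic prime averages -/
noncomputable def Bj {X : Type u} (T : X → X) (f : X → ℝ) (j : ℕ) (x : X) : ℝ :=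
  ((j : ℝ) / 2 ^ j) * ∑ p ∈ PI (2 ^ (j - 1)) (2 ^ j), f (T^[p] x)

lemma Bj_le_Kop {X : Type u} (T : X → X) {k : ℕ → ℝ} (L j : ℕ) (hj : 1 ≤ j) (hL : 2 ^ j ≤ L)
    (hL' : L ≤ 2 ^ (j + 1)) {f : X → ℝ} (hf : ∀ x, 0 ≤ f x) (hk : ∀ n, 0 ≤ k n)
    (hp : ∀ p ∈ PI (2 ^ (j - 1)) (2 ^ j), (j : ℝ) / 128 ≤ k p) (x : X) :
    Bj T f j x ≤ 1024 * Kop T k L f x := by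
  have hL0 : 0 < L := lt_of_lt_of_le (by positivity) hL
  have hLr : (0:ℝ) < L := by exact_mod_cast hL0
  have hLr' : (L:ℝ) ≤ 2 ^ (j + 1) := by exact_mod_cast hL'
  rw [Kop_eq]
  have h1 : ∑ p ∈ PI (2 ^ (j - 1)) (2 ^ j), (2 ^ (j - 1) : ℝ) * ((j : ℝ) / 128 * f (T^[p] x)) ≤
      ∑ n ∈ Finset.Ioc 0 (2 * L), (mult L n : ℝ) * (k n * f (T^[n] x)) := by
    have hsub : PI (2 ^ (j - 1)) (2 ^ j) ⊆ Finset.Ioc 0 (2 * L) := by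
      intro p h
      have := (mem_PI.1 h)
      rw [Finset.mem_Ioc]
      exact ⟨this.2.pos, by omega⟩
    refine le_trans ?_ (Finset.sum_le_sum_of_subset_of_nonneg hsub fun n _ _ =>
      mul_nonneg (by positivity) (mul_nonneg (hk _) (hf _)))
    refine Finset.sum_le_sum fun p h => ?_
    have hpp := (mem_PI.1 h).1
    have hm : p ≤ mult L p := le_mult (hpp.2.trans hL)
    have hm' : (2:ℝ) ^ (j - 1) ≤ mult L p := by exact_mod_cast (hpp.1.le.trans hm)
    refine mul_le_mul hm' ?_ (mul_nonneg (by positivity) (hf _)) (by positivity)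
    exact mul_le_mul_of_nonneg_right (hp p h) (hf _)
  have h2 := mul_le_mul_of_nonneg_left h1 (by positivity : (0:ℝ) ≤ 1024 * ((L:ℝ) ^ 2)⁻¹)
  rw [← Finset.mul_sum, ← Finset.mul_sum] at h2
  rw [← mul_assoc]
  refine le_trans ?_ h2
  unfold Bj
  have hs : 0 ≤ ∑ p ∈ PI (2 ^ (j - 1)) (2 ^ j), f (T^[p] x) := Finset.sum_nonneg fun _ _ => hf _
  rw [← mul_assoc, ← mul_assoc]
  refine mul_le_mul_of_nonneg_right ?_ hs
  obtain ⟨i, rfl⟩ : ∃ i, j = i + 1 := ⟨j - 1, by omega⟩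
  simp only [Nat.add_sub_cancel]
  have h3 : ((L:ℝ) ^ 2) ≤ (2 ^ (i + 1 + 1)) ^ 2 := pow_le_pow_left₀ hLr.le hLr' 2
  have h4 : (((2:ℝ) ^ (i + 1 + 1)) ^ 2)⁻¹ ≤ ((L:ℝ) ^ 2)⁻¹ := inv_anti₀ (by positivity) h3
  calc ((i + 1 : ℕ) : ℝ) / 2 ^ (i + 1)
      = 1024 * (((2:ℝ) ^ (i + 1 + 1)) ^ 2)⁻¹ * 2 ^ i * (((i + 1 : ℕ) : ℝ) / 128) := by
        rw [pow_succ, pow_succ]; field_simp; ring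
    _ ≤ _ := by gcongr

/-- The exceptional set of the maximal theorem. -/
def Mset {X : Type u} (T : X → X) (f : X → ℝ) (t : ℝ) : Set X :=
  {x | ∃ n : ℕ, t * n < ∑ m ∈ Finset.range n, f (T^[m] x)}

lemma not_Mset {X : Type u} {T : X → X} {f : X → ℝ} {t : ℝ} {x : X} (h : x ∉ Mset T f t) (n : ℕ) :
    ∑ m ∈ Finset.range n, f (T^[m] x) ≤ t * n := by
  by_contra hc
  exact h ⟨n, not_le.1 hc⟩

lemma Kop_le_M {X : Type u} {T : X → X} {f : X → ℝ} (hf : ∀ x, 0 ≤ f x) {t : ℝ} (ht : 0 ≤ t)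
    {x : X} (h : x ∉ Mset T f t)
    {k : ℕ → ℝ} {V : ℝ} (hV : 0 ≤ V) (hk0 : ∀ n, 0 ≤ k n) (hk : ∀ n, k n ≤ V)
    {L : ℕ} (hL : 0 < L) : Kop T k L f x ≤ V * (3 * t) := by
  refine (Kop_upper T L hL hf hk0 x).trans ?_
  have hL' : (1:ℝ) ≤ L := by exact_mod_cast hL
  rw [inv_mul_le_iff₀ (by linarith)]
  calc ∑ n ∈ Finset.Ioc 0 (2 * L), k n * f (T^[n] x)
      ≤ ∑ n ∈ Finset.Ioc 0 (2 * L), V * f (T^[n] x) :=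
        Finset.sum_le_sum fun n _ => mul_le_mul_of_nonneg_right (hk n) (hf _)
    _ ≤ ∑ n ∈ Finset.range (2 * L + 1), V * f (T^[n] x) := by
        refine Finset.sum_le_sum_of_subset_of_nonneg ?_ fun n _ _ => mul_nonneg hV (hf _)
        intro n hn
        rw [Finset.mem_Ioc] at hn
        rw [Finset.mem_range]; omega
    _ = V * ∑ n ∈ Finset.range (2 * L + 1), f (T^[n] x) := by rw [Finset.mul_sum]
    _ ≤ V * (t * (2 * L + 1 : ℕ)) := mul_le_mul_of_nonneg_left (not_Mset h _) hV
    _ ≤ L * (V * (3 * t)) := by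
        push_cast
        have : 0 ≤ V * t := mul_nonneg hV ht
        nlinarith

lemma Bj_le_M {X : Type u} {T : X → X} {f : X → ℝ} (hf : ∀ x, 0 ≤ f x) {t : ℝ} (ht : 0 ≤ t)
    {x : X} (h : x ∉ Mset T f t) (j : ℕ) : Bj T f j x ≤ 2 * j * t := by
  unfold Bj
  have h1 : ∑ p ∈ PI (2 ^ (j - 1)) (2 ^ j), f (T^[p] x) ≤ t * (2 ^ j + 1 : ℕ) := by
    refine le_trans ?_ (not_Mset h _)
    refine Finset.sum_le_sum_of_subset_of_nonneg ?_ fun n _ _ => hf _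
    intro n hn
    have := (mem_PI.1 hn).1
    rw [Finset.mem_range]; omega
  refine (mul_le_mul_of_nonneg_left h1 (by positivity)).trans ?_
  push_cast
  rw [div_mul_eq_mul_div, div_le_iff₀ (by positivity)]
  have h2 : (1:ℝ) ≤ 2 ^ j := one_le_pow₀ (by norm_num)
  have h3 : 0 ≤ (j:ℝ) * t := by positivity
  nlinarith

/-! ### Reduction to dyadic averages -/

lemma sum_two_pow_div (k : ℕ) (hk : 1 ≤ k) :
    ∑ j ∈ Finset.Icc 1 k, (2:ℝ) ^ j / j ≤ 4 * (2 ^ k / k) := by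
  induction k, hk using Nat.le_induction with
  | base => norm_num
  | succ k hk ih =>
    rw [Finset.sum_Icc_succ_top (by omega)]
    rcases Nat.lt_or_ge k 2 with h | h
    · interval_cases k
      norm_num [Finset.sum_Icc_succ_top]
    · have hk2 : (2:ℝ) ≤ k := by exact_mod_cast h
      have : 4 * ((2:ℝ) ^ k / k) ≤ 3 * (2 ^ (k + 1) / ((k + 1 : ℕ) : ℝ)) := by
        push_cast
        rw [← mul_div_assoc, ← mul_div_assoc, div_le_div_iff₀ (by linarith) (by linarith), pow_succ]
        have : (0:ℝ) < 2 ^ k := by positivity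
        nlinarith
      linarith

lemma PL_card_lower (m : ℕ) (hm : 1 ≤ m) : (2:ℝ) ^ m / (2 * m) ≤ (PL (2 ^ m)).card := by
  rcases Nat.lt_or_ge m 3 with h | h
  · interval_cases m
    · have : (PL (2 ^ 1)).card = 1 := by decide
      rw [this]; norm_num
    · have : (PL (2 ^ 2)).card = 2 := by decide
      rw [this]; norm_num
  · have h1 := Chebyshev.pi_ge (2 ^ m)
    have h2 : Nat.primeCounting (2 ^ m) = (PL (2 ^ m)).card := by
      rw [Nat.primeCounting, Nat.primeCounting', Nat.count_eq_card_filter_range]; rfl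
    rw [h2] at h1
    refine le_trans ?_ h1
    push_cast
    have hl2 : 0 < Real.log 2 := Real.log_pos (by norm_num)
    have hm0 : (0:ℝ) < m := by exact_mod_cast hm
    have h3 : Real.log ((2:ℝ) ^ m + 1) ≤ (m + 1) * Real.log 2 := by
      have e : ((m:ℝ) + 1) * Real.log 2 = Real.log ((2:ℝ) ^ (m + 1)) := by
        rw [Real.log_pow]; push_cast; ring
      rw [e]
      apply Real.log_le_log (by positivity)
      rw [pow_succ]
      have : (1:ℝ) ≤ 2 ^ m := one_le_pow₀ (by norm_num)
      linarith
    rw [Real.log_pow, div_le_div_iff₀ (by positivity) (by positivity)]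
    have h4 : ∀ m : ℕ, 3 ≤ m → 2 * (m + 1) ≤ 2 ^ m := by
      intro m hm
      induction m, hm using Nat.le_induction with
      | base => norm_num
      | succ n hn ih => rw [pow_succ]; omega
    have h5 : 2 * ((m:ℝ) + 1) ≤ 2 ^ m := by exact_mod_cast h4 m h
    have h6 : (2:ℝ) ^ m * Real.log 2 ≤ 2 * (2 ^ m * Real.log 2 - Real.log (2 ^ m + 1)) := by
      nlinarith
    have h7 := mul_le_mul_of_nonneg_right h6 hm0.le
    linarith

lemma sum_biUnion_le' (I : Finset ℕ) (s : ℕ → Finset ℕ) (g : ℕ → ℝ) (hg : ∀ n, 0 ≤ g n) :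
    ∑ p ∈ I.biUnion s, g p ≤ ∑ j ∈ I, ∑ p ∈ s j, g p := by
  classical
  induction I using Finset.induction_on with
  | empty => simp
  | insert i I hi ih =>
    rw [Finset.biUnion_insert, Finset.sum_insert hi]
    have h1 := Finset.sum_union_inter (s₁ := s i) (s₂ := I.biUnion s) (f := g)
    have h2 : 0 ≤ ∑ p ∈ s i ∩ I.biUnion s, g p := Finset.sum_nonneg fun _ _ => hg _
    linarith

lemma reduction {X : Type u} (T : X → X) {f : X → ℝ} (hf : ∀ x, 0 ≤ f x) (x : X) {t : ℝ}
    (ht : 0 ≤ t) (h : ∀ j, 1 ≤ j → Bj T f j x ≤ t) (N : ℕ) (hN : 2 ≤ N) :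
    ((PL N).card : ℝ)⁻¹ * ∑ p ∈ PL N, f (T^[p] x) ≤ 16 * t := by
  classical
  set m := Nat.log 2 N with hm
  have hm1 : 2 ^ m ≤ N := Nat.pow_log_le_self 2 (by omega)
  have hm2 : N < 2 ^ (m + 1) := Nat.lt_pow_succ_log_self (by norm_num) N
  have hm0 : 1 ≤ m := by
    by_contra hc
    have : m = 0 := by omega
    rw [this] at hm2; omega
  have h1 : ∑ p ∈ PL N, f (T^[p] x) ≤ ∑ j ∈ Finset.Icc 1 (m + 1), t * (2 ^ j / j) := by
    have hsub : PL N ⊆ (Finset.Icc 1 (m + 1)).biUnion fun j => PI (2 ^ (j - 1)) (2 ^ j) := by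
      intro p hp
      rw [mem_PL] at hp
      rw [Finset.mem_biUnion]
      refine ⟨Nat.clog 2 p, ?_, ?_⟩
      · rw [Finset.mem_Icc]
        constructor
        · exact Nat.clog_pos (by norm_num) hp.2.two_le
        · exact Nat.clog_le_of_le_pow (by omega)
      · rw [mem_PI]
        exact ⟨⟨Nat.pow_pred_clog_lt_self (by norm_num) hp.2.one_lt,
          Nat.le_pow_clog (by norm_num) p⟩, hp.2⟩
    calc ∑ p ∈ PL N, f (T^[p] x)
        ≤ ∑ p ∈ (Finset.Icc 1 (m + 1)).biUnion fun j => PI (2 ^ (j - 1)) (2 ^ j), f (T^[p] x) :=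
          Finset.sum_le_sum_of_subset_of_nonneg hsub fun _ _ _ => hf _
      _ ≤ ∑ j ∈ Finset.Icc 1 (m + 1), ∑ p ∈ PI (2 ^ (j - 1)) (2 ^ j), f (T^[p] x) :=
          sum_biUnion_le' _ _ _ (fun _ => hf _)
      _ ≤ _ := by
          refine Finset.sum_le_sum fun j hj => ?_
          rw [Finset.mem_Icc] at hj
          have := h j hj.1
          unfold Bj at this
          have hj0 : (0:ℝ) < j := by exact_mod_cast hj.1
          rw [div_mul_eq_mul_div, div_le_iff₀ (by positivity)] at this
          rw [← mul_div_assoc, le_div_iff₀ hj0]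
          linarith
  rw [← Finset.mul_sum] at h1
  have h2 := mul_le_mul_of_nonneg_left (sum_two_pow_div (m + 1) (by omega)) ht
  have hm0' : (1:ℝ) ≤ m := by exact_mod_cast hm0
  have h3 : (2:ℝ) ^ m / (2 * m) ≤ (PL N).card := by
    refine (PL_card_lower m hm0).trans ?_
    have : PL (2 ^ m) ⊆ PL N := by
      intro p hp
      rw [mem_PL] at *
      exact ⟨hp.1.trans hm1, hp.2⟩
    exact_mod_cast Finset.card_le_card this
  have h4 : (0:ℝ) < (PL N).card := lt_of_lt_of_le (by positivity) h3
  rw [inv_mul_le_iff₀ h4]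
  refine (h1.trans h2).trans ?_
  have h5 : 4 * ((2:ℝ) ^ (m + 1) / ((m + 1 : ℕ) : ℝ)) ≤ 16 * (2 ^ m / (2 * m)) := by
    push_cast
    rw [← mul_div_assoc, ← mul_div_assoc, div_le_div_iff₀ (by positivity) (by positivity), pow_succ]
    have : (0:ℝ) < 2 ^ m := by positivity
    nlinarith
  have h6 := mul_le_mul_of_nonneg_left h5 ht
  have h7 := mul_le_mul_of_nonneg_left h3 ht
  linarith

/-! ### Maximal inequality for periodic kernels -/

lemma sum_range_mul' (F : ℕ → ℝ) (L J : ℕ) :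
    ∑ s ∈ Finset.range (L * J), F s =
      ∑ i ∈ Finset.range J, ∑ s ∈ Finset.range L, F (L * i + s) := by
  induction J with
  | zero => simp
  | succ J ih => rw [Nat.mul_succ, Finset.sum_range_add, ih, Finset.sum_range_succ]

lemma Kop_periodic {X : Type u} (T : X → X) (k : ℕ → ℝ) (L : ℕ)
    (hper : ∀ m n, k (L * m + n) = k n) (J : ℕ) (f : X → ℝ) (x : X) :
    Kop T k (L * J) f x = ((J : ℝ) ^ 2)⁻¹ * ∑ i ∈ Finset.range J, ∑ i' ∈ Finset.range J,
      Kop T k L f (T^[L * (i' + J - 1 - i)] x) := by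
  unfold Kop
  rw [sum_range_mul']
  have h1 : ∀ i ∈ Finset.range J, ∀ i' ∈ Finset.range J, ∀ s ∈ Finset.range L,
      ∀ t ∈ Finset.range L,
      k (L * i' + t + L * J - (L * i + s)) * f (T^[L * i' + t + L * J - (L * i + s)] x) =
      k (t + L - s) * f (T^[t + L - s] (T^[L * (i' + J - 1 - i)] x)) := by
    intro i hi i' hi' s hs t ht
    rw [Finset.mem_range] at hi hi' hs ht
    obtain ⟨d, rfl⟩ : ∃ d, J = i + 1 + d := ⟨J - (i + 1), by omega⟩
    have e1 : i' + (i + 1 + d) - 1 - i = i' + d := by omega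
    have e : L * i' + t + L * (i + 1 + d) - (L * i + s) = L * (i' + d) + (t + L - s) := by
      have : L * i' + t + L * (i + 1 + d) = (L * i' + L * d) + (t + L) + L * i := by ring
      have h' : L * (i' + d) = L * i' + L * d := by ring
      omega
    rw [e1, e, hper, ← Function.iterate_add_apply, add_comm (L * (i' + d))]
  have h2 : ∑ i ∈ Finset.range J, ∑ s ∈ Finset.range L, ∑ t ∈ Finset.range (L * J),
      k (t + L * J - (L * i + s)) * f (T^[t + L * J - (L * i + s)] x) =
      ∑ i ∈ Finset.range J, ∑ i' ∈ Finset.range J, ∑ s ∈ Finset.range L, ∑ t ∈ Finset.range L,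
        k (t + L - s) * f (T^[t + L - s] (T^[L * (i' + J - 1 - i)] x)) := by
    refine Finset.sum_congr rfl fun i hi => ?_
    rw [Finset.sum_comm]
    rw [sum_range_mul']
    refine Finset.sum_congr rfl fun i' hi' => ?_
    rw [Finset.sum_comm]
    refine Finset.sum_congr rfl fun s hs => ?_
    refine Finset.sum_congr rfl fun t ht => ?_
    exact h1 i hi i' hi' s hs t ht
  rw [h2]
  simp_rw [← Finset.mul_sum]
  rw [← mul_assoc]
  congr 1
  push_cast
  rw [mul_pow, mul_inv]
  ring

theorem periodic_max {X : Type u} [MeasurableSpace X] {μ : Measure X} [IsProbabilityMeasure μ]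
    {T : X → X} (hT : MeasurePreserving T μ μ) {f : X → ℝ} (hf : Measurable f) {B : ℝ}
    (hB : ∀ x, |f x| ≤ B) (k : ℕ → ℝ) (L : ℕ) (hper : ∀ m n, k (L * m + n) = k n)
    {t : ℝ} (ht : 0 < t) :
    μ {x | ∃ J : ℕ, 1 ≤ J ∧ t < |Kop T k (L * J) f x|} ≤
      ENNReal.ofReal (4 * (t ^ 2)⁻¹ * ∫ x, (Kop T k L f x) ^ 2 ∂μ) := by
  have hgm := Kop_meas hT.measurable k L hf
  obtain ⟨B', hB'⟩ := Kop_bdd T k L hB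
  have hg2 : Measurable fun x => (Kop T k L f x) ^ 2 := hgm.pow_const 2
  have hint : Integrable (fun x => (Kop T k L f x) ^ 2) μ := by
    refine int_of_bdd hg2 (B := B' ^ 2) fun x => ?_
    rw [abs_pow]
    exact pow_le_pow_left₀ (abs_nonneg _) (hB' x) 2
  have hm := maxerg (hT.iterate L) hg2 hint (fun x => sq_nonneg _) (t := t ^ 2 / 4) (by positivity)
  refine le_trans (measure_mono ?_) (hm.trans (ENNReal.ofReal_le_ofReal (by
    rw [inv_div]; apply le_of_eq; ring)))
  rintro x ⟨J, hJ, hx⟩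
  refine ⟨2 * J, ?_⟩
  have hJ' : (0:ℝ) < J := by exact_mod_cast hJ
  set G : ℕ → ℝ := fun m => |Kop T k L f ((T^[L])^[m] x)| with hG
  have h1 : |Kop T k (L * J) f x| ≤ (J:ℝ)⁻¹ * ∑ m ∈ Finset.range (2 * J), G m := by
    rw [Kop_periodic T k L hper, abs_mul, abs_of_nonneg (by positivity : (0:ℝ) ≤ ((J:ℝ) ^ 2)⁻¹)]
    have : ((J:ℝ))⁻¹ = ((J:ℝ) ^ 2)⁻¹ * J := by field_simp
    rw [this, mul_assoc]
    refine mul_le_mul_of_nonneg_left ?_ (by positivity)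
    calc _ ≤ ∑ i ∈ Finset.range J, ∑ m ∈ Finset.range (2 * J), G m := by
          refine (Finset.abs_sum_le_sum_abs _ _).trans (Finset.sum_le_sum fun i hi => ?_)
          refine (Finset.abs_sum_le_sum_abs _ _).trans ?_
          rw [Finset.mem_range] at hi
          obtain ⟨d, rfl⟩ : ∃ d, J = i + 1 + d := ⟨J - (i + 1), by omega⟩
          calc _ = ∑ i' ∈ Finset.range (i + 1 + d), G (d + i') := by
                refine Finset.sum_congr rfl fun i' _ => ?_
                rw [hG]
                simp only
                rw [← Function.iterate_mul]
                congr 4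
                congr 1
                omega
            _ ≤ ∑ m ∈ Finset.range (d + (i + 1 + d)), G m := by
                rw [Finset.sum_range_add G d]
                have : 0 ≤ ∑ m ∈ Finset.range d, G m := Finset.sum_nonneg fun _ _ => abs_nonneg _
                linarith
            _ ≤ _ := by
                refine Finset.sum_le_sum_of_subset_of_nonneg ?_ fun _ _ _ => abs_nonneg _
                intro n hn
                rw [Finset.mem_range] at *
                omega
      _ = _ := by rw [Finset.sum_const, Finset.card_range, nsmul_eq_mul]
  have h2 : t * J < ∑ m ∈ Finset.range (2 * J), G m := by
    have := hx.trans_le h1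
    rw [inv_mul_eq_div, lt_div_iff₀ hJ'] at this
    exact this
  have h3 := sq_sum_le_card_mul_sum_sq (s := Finset.range (2 * J)) (f := G)
  rw [Finset.card_range] at h3
  have h4 : (t * J) ^ 2 < (∑ m ∈ Finset.range (2 * J), G m) ^ 2 :=
    pow_lt_pow_left₀ h2 (by positivity) (by norm_num)
  have h5 : ∑ m ∈ Finset.range (2 * J), G m ^ 2 =
      ∑ m ∈ Finset.range (2 * J), (Kop T k L f ((T^[L])^[m] x)) ^ 2 :=
    Finset.sum_congr rfl fun m _ => by rw [hG]; simp only [sq_abs]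
  rw [h5] at h3
  have h6 := h4.trans_le h3
  push_cast at h6 ⊢
  have h7 : (J:ℝ) * (t ^ 2 / 4 * (2 * J)) * 2 <
      J * (∑ m ∈ Finset.range (2 * J), (Kop T k L f ((T^[L])^[m] x)) ^ 2) * 2 := by
    nlinarith
  have h8 : (0:ℝ) < J * 2 := by positivity
  nlinarith

/-! ### Products of two expansions -/

theorem Kop_pair {X : Type u} [MeasurableSpace X] {μ : Measure X} [IsProbabilityMeasure μ]
    {T : X → X} (hT : MeasurePreserving T μ μ) {f : X → ℝ} (hf : Measurable f) {B : ℝ}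
    (hB : ∀ x, |f x| ≤ B) (S0 S1 : Finset ℕ) (hS0 : ∀ p ∈ S0, p.Prime) (hS1 : ∀ p ∈ S1, p.Prime)
    (hdis : Disjoint S0 S1) (𝒜 ℬ : Finset (Finset ℕ)) (h𝒜 : ∀ U ∈ 𝒜, U ⊆ S0)
    (hℬ : ∀ U ∈ ℬ, U ⊆ S1)
    (Y0 Y1 L : ℕ) (hL : 0 < L) (hY0 : ∀ U ∈ 𝒜, ∏ p ∈ U, p ≤ Y0) (hY1 : ∀ U ∈ ℬ, ∏ p ∈ U, p ≤ Y1)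
    (hYL : (Y0 * Y1) ^ 4 ≤ L)
    (b g : Finset ℕ → ℝ) (Kb Kg : ℝ) (hKb : 0 < Kb) (hKg : 0 < Kg)
    (hb : ∀ U ∈ 𝒜, |b U| ≤ Kb) (hg : ∀ U ∈ ℬ, |g U| ≤ Kg) (k : ℕ → ℝ)
    (hk : ∀ n, k n = (∑ U ∈ 𝒜, b U * ∏ p ∈ U, rc p n) * ∑ W ∈ ℬ, g W * ∏ p ∈ W, rc p n) :
    ∫ x, (Kop T k L f x) ^ 2 ∂μ ≤ 4 * (Kb * Kg) ^ 2 * ∫ x, f x ^ 2 ∂μ := by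
  classical
  have hrec0 : ∀ U ∈ 𝒜, ∀ W ∈ ℬ, (U ∪ W) ∩ S0 = U := by
    intro U hU W hW
    ext p
    simp only [Finset.mem_inter, Finset.mem_union]
    constructor
    · rintro ⟨h | h, h'⟩
      · exact h
      · exact absurd (hℬ W hW h) (Finset.disjoint_left.1 hdis h')
    · intro h
      exact ⟨Or.inl h, h𝒜 U hU h⟩
  have hrec1 : ∀ U ∈ 𝒜, ∀ W ∈ ℬ, (U ∪ W) ∩ S1 = W := by
    intro U hU W hW
    ext p
    simp only [Finset.mem_inter, Finset.mem_union]
    constructor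
    · rintro ⟨h | h, h'⟩
      · exact absurd h' (Finset.disjoint_left.1 hdis (h𝒜 U hU h))
      · exact h
    · intro h
      exact ⟨Or.inr h, hℬ W hW h⟩
  have hd : ∀ U ∈ 𝒜, ∀ W ∈ ℬ, Disjoint U W := fun U hU W hW =>
    Finset.disjoint_of_subset_left (h𝒜 U hU) (Finset.disjoint_of_subset_right (hℬ W hW) hdis)
  refine Kop_coeff hT hf hB ((𝒜 ×ˢ ℬ).image fun z => z.1 ∪ z.2) (Y0 * Y1) L hL ?_ ?_ hYL
    (fun V => b (V ∩ S0) * g (V ∩ S1)) (Kb * Kg) (mul_pos hKb hKg) ?_ k ?_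
  · intro V hV p hp
    rw [Finset.mem_image] at hV
    obtain ⟨⟨U, W⟩, hz, rfl⟩ := hV
    rw [Finset.mem_product] at hz
    rcases Finset.mem_union.1 hp with h | h
    · exact hS0 p (h𝒜 U hz.1 h)
    · exact hS1 p (hℬ W hz.2 h)
  · intro V hV
    rw [Finset.mem_image] at hV
    obtain ⟨⟨U, W⟩, hz, rfl⟩ := hV
    rw [Finset.mem_product] at hz
    rw [Finset.prod_union (hd U hz.1 W hz.2)]
    exact Nat.mul_le_mul (hY0 U hz.1) (hY1 W hz.2)
  · intro V hV
    rw [Finset.mem_image] at hV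
    obtain ⟨⟨U, W⟩, hz, rfl⟩ := hV
    rw [Finset.mem_product] at hz
    simp only at hz ⊢
    rw [hrec0 U hz.1 W hz.2, hrec1 U hz.1 W hz.2, abs_mul]
    exact mul_le_mul (hb U hz.1) (hg W hz.2) (abs_nonneg _) hKb.le
  · intro n
    rw [hk, Finset.sum_mul_sum, ← Finset.sum_product', Finset.sum_image]
    · refine Finset.sum_congr rfl fun z hz => ?_
      rw [Finset.mem_product] at hz
      rw [hrec0 z.1 hz.1 z.2 hz.2, hrec1 z.1 hz.1 z.2 hz.2, Finset.prod_union (hd z.1 hz.1 z.2 hz.2)]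
      ring
    · rintro ⟨U, W⟩ hz ⟨U', W'⟩ hz' h
      simp only [Finset.coe_product, Set.mem_prod, Finset.mem_coe] at hz hz' h
      have e0 := hrec0 U hz.1 W hz.2
      have e1 := hrec1 U hz.1 W hz.2
      rw [h, hrec0 U' hz'.1 W' hz'.2] at e0
      rw [h, hrec1 U' hz'.1 W' hz'.2] at e1
      rw [e0, e1]

/-! ### Measure estimates for the exceptional sets -/

lemma markov' {X : Type u} [MeasurableSpace X] {μ : Measure X} [IsProbabilityMeasure μ]
    {T : X → X} (hT : MeasurePreserving T μ μ) {g : X → ℝ} (hgm : Measurable g)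
    (hg : Integrable g μ) (h0 : ∀ x, 0 ≤ g x) {t : ℝ} (ht : 0 < t) :
    μ {x | t < g x} ≤ ENNReal.ofReal (t⁻¹ * ∫ x, g x ∂μ) := by
  refine le_trans (measure_mono ?_) (maxerg hT hgm hg h0 ht)
  intro x hx
  refine ⟨1, ?_⟩
  simpa using hx

lemma cheb {X : Type u} [MeasurableSpace X] {μ : Measure X} [IsProbabilityMeasure μ]
    {T : X → X} (hT : MeasurePreserving T μ μ) {f : X → ℝ} (hf : Measurable f) {B : ℝ}
    (hB : ∀ x, |f x| ≤ B) (k : ℕ → ℝ) (L : ℕ) {t : ℝ} (ht : 0 < t) :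
    μ {x | t < |Kop T k L f x|} ≤ ENNReal.ofReal ((t ^ 2)⁻¹ * ∫ x, (Kop T k L f x) ^ 2 ∂μ) := by
  have hgm := Kop_meas hT.measurable k L hf
  obtain ⟨B', hB'⟩ := Kop_bdd T k L hB
  have hg2 : Measurable fun x => (Kop T k L f x) ^ 2 := hgm.pow_const 2
  have hint : Integrable (fun x => (Kop T k L f x) ^ 2) μ := by
    refine int_of_bdd hg2 (B := B' ^ 2) fun x => ?_
    rw [abs_pow]
    exact pow_le_pow_left₀ (abs_nonneg _) (hB' x) 2
  refine le_trans (measure_mono ?_) (markov' hT hg2 hint (fun _ => sq_nonneg _)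
    (t := t ^ 2) (by positivity))
  intro x hx
  have hx' : t < |Kop T k L f x| := hx
  show t ^ 2 < (Kop T k L f x) ^ 2
  rw [← sq_abs (Kop T k L f x)]
  exact pow_lt_pow_left₀ hx' ht.le (by norm_num)

lemma int_sq_le {X : Type u} [MeasurableSpace X] {μ : Measure X} [IsProbabilityMeasure μ]
    {f : X → ℝ} (hf : Measurable f) (h0 : ∀ x, 0 ≤ f x) (h1 : ∀ x, f x ≤ 1) :
    ∫ x, f x ^ 2 ∂μ ≤ ∫ x, f x ∂μ := by
  refine integral_mono ?_ ?_ ?_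
  · refine int_of_bdd (hf.pow_const 2) (B := 1) fun x => ?_
    rw [abs_of_nonneg (sq_nonneg _)]
    exact pow_le_one₀ (h0 x) (h1 x)
  · refine int_of_bdd hf (B := 1) fun x => ?_
    rw [abs_of_nonneg (h0 x)]
    exact h1 x
  · intro x
    have := h0 x
    have := h1 x
    show f x ^ 2 ≤ f x
    nlinarith

lemma Kop_int_le {X : Type u} [MeasurableSpace X] {μ : Measure X} [IsProbabilityMeasure μ]
    {T : X → X} (hT : MeasurePreserving T μ μ) {f : X → ℝ} (hf : Measurable f)
    (h0 : ∀ x, 0 ≤ f x) (h1 : ∀ x, f x ≤ 1) {k : ℕ → ℝ} (hk : ∀ n, 0 ≤ k n) (L : ℕ) (hL : 0 < L) :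
    ∫ x, Kop T k L f x ∂μ ≤ ((L:ℝ)⁻¹ * ∑ n ∈ Finset.Ioc 0 (2 * L), k n) * ∫ x, f x ∂μ := by
  have hB : ∀ x, |f x| ≤ 1 := fun x => by rw [abs_of_nonneg (h0 x)]; exact h1 x
  obtain ⟨B', hB'⟩ := Kop_bdd T k L hB
  have hi : ∀ n, Integrable (fun x => f (T^[n] x)) μ := fun n =>
    int_of_bdd (hf.comp (hT.measurable.iterate n)) (B := 1) fun x => hB _
  calc ∫ x, Kop T k L f x ∂μ
      ≤ ∫ x, (L:ℝ)⁻¹ * ∑ n ∈ Finset.Ioc 0 (2 * L), k n * f (T^[n] x) ∂μ := by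
        refine integral_mono (int_of_bdd (Kop_meas hT.measurable k L hf) hB') ?_
          fun x => Kop_upper T L hL h0 hk x
        exact (integrable_finsetSum _ fun n _ => (hi n).const_mul _).const_mul _
    _ = (L:ℝ)⁻¹ * ∑ n ∈ Finset.Ioc 0 (2 * L), k n * ∫ x, f x ∂μ := by
        rw [integral_const_mul, integral_finsetSum _ fun n _ => (hi n).const_mul _]
        congr 1
        refine Finset.sum_congr rfl fun n _ => ?_
        rw [integral_const_mul, comp_iter_int hT hf]
    _ = _ := by rw [← Finset.sum_mul, mul_assoc]

lemma Vi_pos' {a : ℕ} : 0 < Vi (PL (2 ^ a)) :=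
  lt_of_lt_of_le one_pos (Vi_ge_one (fun p hp => PL_prime p hp))

lemma selg_small (a b R : ℕ) (ha : 2 ≤ a) (hR : 1 ≤ R) (W : Finset ℕ)
    (hW : W ∈ (selT (PI (2 ^ a) (2 ^ b)) (R ^ 2)).erase ∅) :
    |selg (PI (2 ^ a) (2 ^ b)) R W| ≤ 4 / 2 ^ a := by
  classical
  rw [Finset.mem_erase] at hW
  have hWs := (mem_selT.1 hW.2).1
  refine (selg_bound (fun p hp => PI_prime p hp) hR hWs).trans ?_
  obtain ⟨p, hp⟩ := Finset.nonempty_iff_ne_empty.2 hW.1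
  have h4 : (4:ℝ) ≤ 2 ^ a := by
    calc (4:ℝ) = 2 ^ 2 := by norm_num
      _ ≤ 2 ^ a := pow_le_pow_right₀ (by norm_num) ha
  have hal : ∀ q ∈ W, 4 * al q ≤ 4 / 2 ^ a := by
    intro q hq
    have := al_le_of_lt (mem_PI.1 (hWs hq)).1.1
    rw [div_eq_mul_inv]
    linarith
  have hle1 : (4:ℝ) / 2 ^ a ≤ 1 := by
    rw [div_le_one (by positivity)]; exact h4
  have hnn : ∀ q ∈ W, 0 ≤ 4 * al q := fun q hq => by
    have := al_pos (PI_prime q (hWs hq))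
    linarith
  rw [← Finset.mul_prod_erase W _ hp]
  calc 4 * al p * ∏ q ∈ W.erase p, (4 * al q) ≤ 4 / 2 ^ a * 1 := by
        refine mul_le_mul (hal p hp) ?_ ?_ (by positivity)
        · exact Finset.prod_le_one (fun q hq => hnn q (Finset.mem_of_mem_erase hq))
            fun q hq => (hal q (Finset.mem_of_mem_erase hq)).trans hle1
        · exact Finset.prod_nonneg (fun q hq => hnn q (Finset.mem_of_mem_erase hq))
    _ = _ := mul_one _

theorem high_med {X : Type u} [MeasurableSpace X] {μ : Measure X} [IsProbabilityMeasure μ]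
    {T : X → X} (hT : MeasurePreserving T μ μ) {f : X → ℝ} (hf : Measurable f) {B : ℝ}
    (hB : ∀ x, |f x| ≤ B) (a r b L : ℕ) (ha : 2 ≤ a) (hL : 0 < L)
    (hYL : (2 ^ (a * (2 * r)) * (2 ^ b) ^ 2) ^ 4 ≤ L) :
    ∫ x, (Kop T (fun n => Vi (PL (2 ^ a)) * beta (PL (2 ^ a)) r n *
      (selK (PI (2 ^ a) (2 ^ b)) (2 ^ b) n - 1)) L f x) ^ 2 ∂μ ≤
      4 * ((Vi (PL (2 ^ a))) ^ 2 * (4 / 2 ^ a)) ^ 2 * ∫ x, f x ^ 2 ∂μ := by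
  have hS0 : ∀ p ∈ PL (2 ^ a), p.Prime := fun p hp => PL_prime p hp
  have hS1 : ∀ p ∈ PI (2 ^ a) (2 ^ b), p.Prime := fun p hp => PI_prime p hp
  refine Kop_pair hT hf hB _ _ hS0 hS1 (PL_PI_disj _ _)
    (brT (PL (2 ^ a)) r) ((selT (PI (2 ^ a) (2 ^ b)) ((2 ^ b) ^ 2)).erase ∅) ?_ ?_
    (2 ^ (a * (2 * r))) ((2 ^ b) ^ 2) L hL ?_ ?_ hYL
    (fun U => Vi (PL (2 ^ a)) * brb (PL (2 ^ a)) r U) (selg (PI (2 ^ a) (2 ^ b)) (2 ^ b)) _ _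
    (pow_pos Vi_pos' 2) (by positivity) ?_ ?_ _ ?_
  · intro U hU
    exact Finset.mem_powerset.1 (Finset.mem_filter.1 hU).1
  · intro U hU
    exact (mem_selT.1 (Finset.mem_of_mem_erase hU)).1
  · intro U hU
    have h := Finset.mem_filter.1 hU
    calc ∏ p ∈ U, p ≤ ∏ p ∈ U, 2 ^ a := Finset.prod_le_prod' fun p hp =>
          (mem_PL.1 (Finset.mem_powerset.1 h.1 hp)).1
      _ = 2 ^ (a * U.card) := by rw [Finset.prod_const, pow_mul]
      _ ≤ _ := Nat.pow_le_pow_right (by norm_num) (Nat.mul_le_mul_left _ h.2)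
  · intro U hU
    exact (mem_selT.1 (Finset.mem_of_mem_erase hU)).2
  · intro U hU
    rw [abs_mul, abs_of_pos Vi_pos', sq]
    exact mul_le_mul_of_nonneg_left (brb_bound hS0 r U) Vi_pos'.le
  · intro U hU
    exact selg_small a b _ ha Nat.one_le_two_pow U hU
  · intro n
    rw [beta_expand hS0, selK_expand hS1 Nat.one_le_two_pow]
    congr 1
    rw [Finset.mul_sum]
    simp only [mul_assoc]

theorem high_large {X : Type u} [MeasurableSpace X] {μ : Measure X} [IsProbabilityMeasure μ]
    {T : X → X} (hT : MeasurePreserving T μ μ) {f : X → ℝ} (hf : Measurable f) {B : ℝ}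
    (hB : ∀ x, |f x| ≤ B) (a b L : ℕ) (ha : 2 ≤ a) (hL : 0 < L)
    (hYL : ((∏ p ∈ PL (2 ^ a), p) * (2 ^ b) ^ 2) ^ 4 ≤ L) :
    ∫ x, (Kop T (fun n => lowS (PL (2 ^ a)) n *
      (selK (PI (2 ^ a) (2 ^ b)) (2 ^ b) n - 1)) L f x) ^ 2 ∂μ ≤
      4 * (1 * (4 / 2 ^ a)) ^ 2 * ∫ x, f x ^ 2 ∂μ := by
  have hS0 : ∀ p ∈ PL (2 ^ a), p.Prime := fun p hp => PL_prime p hp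
  have hS1 : ∀ p ∈ PI (2 ^ a) (2 ^ b), p.Prime := fun p hp => PI_prime p hp
  refine Kop_pair hT hf hB _ _ hS0 hS1 (PL_PI_disj _ _)
    (PL (2 ^ a)).powerset ((selT (PI (2 ^ a) (2 ^ b)) ((2 ^ b) ^ 2)).erase ∅) ?_ ?_
    (∏ p ∈ PL (2 ^ a), p) ((2 ^ b) ^ 2) L hL ?_ ?_ hYL
    (fun U => ∏ p ∈ U, (-al p)) (selg (PI (2 ^ a) (2 ^ b)) (2 ^ b)) _ _
    one_pos (by positivity) ?_ ?_ _ ?_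
  · intro U hU
    exact Finset.mem_powerset.1 hU
  · intro U hU
    exact (mem_selT.1 (Finset.mem_of_mem_erase hU)).1
  · intro U hU
    exact Finset.prod_le_prod_of_subset_of_one_le' (Finset.mem_powerset.1 hU)
      fun p hp _ => (hS0 p hp).one_lt.le
  · intro U hU
    exact (mem_selT.1 (Finset.mem_of_mem_erase hU)).2
  · intro U hU
    have hUs := Finset.mem_powerset.1 hU
    show |∏ p ∈ U, (-al p)| ≤ 1
    rw [abs_prod_neg_al (fun p hp => hS0 p (hUs hp))]
    exact prod_al_le_one (fun p hp => hS0 p (hUs hp))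
  · intro U hU
    exact selg_small a b _ ha Nat.one_le_two_pow U hU
  · intro n
    rw [lowS_expand, selK_expand hS1 Nat.one_le_two_pow]

/-- the period attached to level `a` -/
def Lz (a : ℕ) : ℕ := (∏ p ∈ PL (2 ^ a), p) ^ 4

lemma Lz_pos (a : ℕ) : 0 < Lz a := by
  unfold Lz
  exact pow_pos (Finset.prod_pos fun p hp => (PL_prime p hp).pos) 4

lemma PL_mono {M N : ℕ} (h : M ≤ N) : PL M ⊆ PL N := by
  intro p hp
  rw [mem_PL] at *
  exact ⟨hp.1.trans h, hp.2⟩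

lemma Lz_dvd {a b : ℕ} (h : a ≤ b) : Lz a ∣ Lz b := by
  unfold Lz
  exact pow_dvd_pow_of_dvd (Finset.prod_dvd_prod_of_subset _ _ _
    (PL_mono (Nat.pow_le_pow_right (by norm_num) h))) 4

lemma Lz_le (a : ℕ) : Lz a ≤ 2 ^ (2 ^ (a + 3)) := by
  unfold Lz
  have h : ∏ p ∈ PL (2 ^ a), p ≤ 4 ^ (2 ^ a) := primorial_le_four_pow (2 ^ a)
  calc _ ≤ (4 ^ (2 ^ a)) ^ 4 := Nat.pow_le_pow_left h 4
    _ = 2 ^ (2 ^ (a + 3)) := by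
      rw [show (4:ℕ) = 2 ^ 2 from rfl, ← pow_mul, ← pow_mul]
      congr 1
      rw [pow_add]; ring

lemma lowS_per {a b : ℕ} (h : a ≤ b) (m n : ℕ) :
    lowS (PL (2 ^ a)) (Lz b * m + n) = lowS (PL (2 ^ a)) n := by
  rw [lowS_eq (fun p hp => PL_prime p hp), lowS_eq (fun p hp => PL_prime p hp)]
  have : ∀ p ∈ PL (2 ^ a), (p ∣ Lz b * m + n ↔ p ∣ n) := by
    intro p hp
    refine Nat.dvd_add_right ?_
    refine Dvd.dvd.mul_right ?_ m
    refine Dvd.dvd.trans ?_ (Lz_dvd h)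
    unfold Lz
    exact dvd_pow (Finset.dvd_prod_of_mem _ hp) (by norm_num)
  congr 1
  refine propext ⟨fun h' p hp => ?_, fun h' p hp => ?_⟩
  · rw [← this p hp]; exact h' p hp
  · rw [this p hp]; exact h' p hp

theorem diff_max {X : Type u} [MeasurableSpace X] {μ : Measure X} [IsProbabilityMeasure μ]
    {T : X → X} (hT : MeasurePreserving T μ μ) {f : X → ℝ} (hf : Measurable f) {B : ℝ}
    (hB : ∀ x, |f x| ≤ B) (i : ℕ) {t : ℝ} (ht : 0 < t) :
    μ {x | ∃ J : ℕ, 1 ≤ J ∧ t < |Kop T (fun n => lowS (PL (2 ^ (i + 1))) n - lowS (PL (2 ^ i)) n)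
      (Lz (i + 1) * J) f x|} ≤
      ENNReal.ofReal (16 * (t ^ 2)⁻¹ * (((2:ℝ) ^ i)⁻¹) ^ 2 * ∫ x, f x ^ 2 ∂μ) := by
  classical
  refine (periodic_max hT hf hB _ (Lz (i + 1)) ?_ ht).trans (ENNReal.ofReal_le_ofReal ?_)
  · intro m n
    show lowS _ _ - lowS _ _ = _
    rw [lowS_per le_rfl, lowS_per (Nat.le_succ i)]
  have hS : ∀ p ∈ PL (2 ^ (i + 1)), p.Prime := fun p hp => PL_prime p hp
  have hsub : PL (2 ^ i) ⊆ PL (2 ^ (i + 1)) :=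
    PL_mono (Nat.pow_le_pow_right (by norm_num) (Nat.le_succ i))
  have key := Kop_coeff hT hf hB ((PL (2 ^ (i + 1))).powerset \ (PL (2 ^ i)).powerset)
    (∏ p ∈ PL (2 ^ (i + 1)), p) (Lz (i + 1)) (Lz_pos _) ?_ ?_ le_rfl
    (fun U => ∏ p ∈ U, (-al p)) (((2:ℝ) ^ i)⁻¹) (by positivity) ?_
    (fun n => lowS (PL (2 ^ (i + 1))) n - lowS (PL (2 ^ i)) n) ?_
  · have := mul_le_mul_of_nonneg_left key (by positivity : 0 ≤ 4 * (t ^ 2)⁻¹)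
    linarith
  · intro U hU p hp
    exact hS p (Finset.mem_powerset.1 (Finset.mem_sdiff.1 hU).1 hp)
  · intro U hU
    exact Finset.prod_le_prod_of_subset_of_one_le' (Finset.mem_powerset.1 (Finset.mem_sdiff.1 hU).1)
      fun p hp _ => (hS p hp).one_lt.le
  · intro U hU
    have hU' := Finset.mem_sdiff.1 hU
    have hUs := Finset.mem_powerset.1 hU'.1
    have hU2 : ¬ U ⊆ PL (2 ^ i) := fun h => hU'.2 (Finset.mem_powerset.2 h)
    obtain ⟨p, hp, hp'⟩ := Finset.not_subset.1 hU2
    have hpp := hS p (hUs hp)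
    have hlt : 2 ^ i < p := by
      by_contra hc
      exact hp' (mem_PL.2 ⟨not_lt.1 hc, hpp⟩)
    show |∏ p ∈ U, (-al p)| ≤ _
    rw [abs_prod_neg_al (fun p hp => hS p (hUs hp)), ← Finset.mul_prod_erase U _ hp]
    calc al p * ∏ q ∈ U.erase p, al q ≤ al p * 1 :=
          mul_le_mul_of_nonneg_left (prod_al_le_one fun q hq =>
            hS q (hUs (Finset.mem_of_mem_erase hq))) (al_pos hpp).le
      _ ≤ _ := by rw [mul_one]; exact al_le_of_lt hlt
  · intro n
    rw [Finset.sum_sdiff_eq_sub (Finset.powerset_mono.2 hsub), ← lowS_expand, ← lowS_expand]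

/-! ### Pointwise bounds outside the exceptional sets -/

lemma prime_val {j a b p M : ℕ} (ha : a ≤ j - 1) (hb : b ≤ j - 1)
    (hp : p ∈ PI (2 ^ (j - 1)) (2 ^ j)) :
    lowS (PL (2 ^ a)) p = Vi (PL (2 ^ a)) ∧
    selK (PI M (2 ^ b)) (2 ^ b) p = selG (PI M (2 ^ b)) (2 ^ b) := by
  have hp' := mem_PI.1 hp
  have key : ∀ c, c ≤ j - 1 → ∀ q : ℕ, q.Prime → q ≤ 2 ^ c → ¬ q ∣ p := by
    intro c hc q hq hqc hd
    have h1 := (Nat.prime_dvd_prime_iff_eq hq hp'.2).1 hd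
    have h2 : 2 ^ c ≤ 2 ^ (j - 1) := Nat.pow_le_pow_right (by norm_num) hc
    omega
  constructor
  · rw [lowS_eq PL_prime, if_pos]
    intro q hq
    have := mem_PL.1 hq
    exact key a ha q this.2 this.1
  · refine selK_coprime PI_prime Nat.one_le_two_pow ?_
    intro q hq
    have := mem_PI.1 hq
    exact key b hb q this.2 this.1.2

lemma VG_ge (j M : ℕ) (hj : 16 ≤ j) :
    (j:ℝ) / 128 ≤ Vi (PL M) * selG (PI M (2 ^ (j / 16))) (2 ^ (j / 16)) := by
  refine le_trans ?_ (VG_lower M (j / 16))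
  have : j ≤ 32 * (j / 16) := by omega
  have h : (j:ℝ) ≤ 32 * ((j / 16 : ℕ) : ℝ) := by exact_mod_cast this
  linarith

lemma med_point {X : Type u} {T : X → X} {f : X → ℝ} (hf : ∀ x, 0 ≤ f x) {v j : ℕ} (hv : 1 ≤ v)
    (hj : 1024 * v ^ 2 < j) {x : X} {e : ℝ} (he : 0 < e)
    (h0 : x ∉ Mset T f (e / v ^ 2))
    (h1 : Kop T (fun n => Vi (PL (2 ^ (8 * v))) * brE (PL (2 ^ (8 * v))) (8 * v) n) (2 ^ j) f x ≤ e)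
    (h2 : |Kop T (fun n => Vi (PL (2 ^ (8 * v))) * beta (PL (2 ^ (8 * v))) (8 * v) n *
      (selK (PI (2 ^ (8 * v)) (2 ^ (j / 16))) (2 ^ (j / 16)) n - 1)) (2 ^ j) f x| ≤ e) :
    Bj T f j x ≤ 2 ^ 22 * e := by
  set a := 8 * v with ha
  have hS0 : ∀ p ∈ PL (2 ^ a), p.Prime := PL_prime
  have hvv : v ≤ v ^ 2 := by nlinarith
  have hVb : ∀ n, 0 ≤ Vi (PL (2 ^ a)) * beta (PL (2 ^ a)) a n := fun n =>
    (lowS_nonneg hS0 n).trans (beta_bounds hS0 a n).1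
  have hb := Bj_le_Kop T (k := fun n => Vi (PL (2 ^ a)) * beta (PL (2 ^ a)) a n *
      selK (PI (2 ^ a) (2 ^ (j / 16))) (2 ^ (j / 16)) n) (2 ^ j) j (by omega) le_rfl
      (Nat.pow_le_pow_right (by norm_num) (Nat.le_succ j)) hf
      (fun n => mul_nonneg (hVb n) (selK_nonneg PI_prime Nat.one_le_two_pow n)) ?_ x
  · refine hb.trans ?_
    have e1 : (fun n => Vi (PL (2 ^ a)) * beta (PL (2 ^ a)) a n *
        selK (PI (2 ^ a) (2 ^ (j / 16))) (2 ^ (j / 16)) n) =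
        fun n => Vi (PL (2 ^ a)) * beta (PL (2 ^ a)) a n *
        (selK (PI (2 ^ a) (2 ^ (j / 16))) (2 ^ (j / 16)) n - 1) +
        Vi (PL (2 ^ a)) * beta (PL (2 ^ a)) a n := by
      funext n; ring
    rw [e1, Kop_add]
    have e2 := Kop_mono T (2 ^ j) hf (fun n => (beta_bounds hS0 a n).2) x
    rw [Kop_add] at e2
    have hv2 : (0:ℝ) < (v:ℝ) ^ 2 := by positivity
    have e3 : Kop T (lowS (PL (2 ^ a))) (2 ^ j) f x ≤ Vi (PL (2 ^ a)) * (3 * (e / v ^ 2)) :=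
      Kop_le_M hf (by positivity) h0 Vi_pos'.le (lowS_nonneg hS0) (lowS_le hS0) (by positivity)
    have e3' : Kop T (fun n => lowS (PL (2 ^ a)) n) (2 ^ j) f x ≤ Vi (PL (2 ^ a)) * (3 * (e / v ^ 2)) := e3
    have e4 : Vi (PL (2 ^ a)) * (3 * (e / v ^ 2)) ≤ 3072 * e := by
      have := mul_le_mul_of_nonneg_right (Vi_le a (by omega))
        (by positivity : 0 ≤ 3 * (e / (v:ℝ) ^ 2))
      refine this.trans (le_of_eq ?_)
      rw [ha]; push_cast; field_simp; norm_num
    have e5 := (le_abs_self _).trans h2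
    have e6 : 1024 * (3074 * e) ≤ 2 ^ 22 * e := by nlinarith
    refine le_trans ?_ e6
    linarith
  · intro p hp
    have hval := prime_val (a := a) (b := j / 16) (M := 2 ^ a) (by omega) (by omega) hp
    refine (VG_ge j (2 ^ a) (by omega)).trans ?_
    show _ ≤ Vi (PL (2 ^ a)) * beta (PL (2 ^ a)) a p *
      selK (PI (2 ^ a) (2 ^ (j / 16))) (2 ^ (j / 16)) p
    rw [hval.2]
    refine mul_le_mul_of_nonneg_right ?_
      (zero_le_one.trans (selG_pos PI_prime Nat.one_le_two_pow))
    exact hval.1.symm.le.trans (beta_bounds hS0 a p).1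

lemma geom_sum_le (n : ℕ) : ∑ i ∈ Finset.range n, ((3:ℝ) / 4) ^ i / 4 ≤ 1 := by
  rw [← Finset.sum_div, div_le_one (by norm_num)]
  rw [geom_sum_eq (by norm_num)]
  have : (0:ℝ) ≤ (3 / 4) ^ n := by positivity
  rw [div_le_iff_of_neg (by norm_num)]
  linarith

lemma large_point {X : Type u} {T : X → X} {f : X → ℝ} (hf : ∀ x, 0 ≤ f x) {v j d J : ℕ}
    (hv : 1 ≤ v) (hj : 2 ^ (4 * v + 4 + d + 4) ≤ j) {x : X} {e : ℝ} (he : 0 < e)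
    (h0 : x ∉ Mset T f (e / v ^ 2))
    (hJ : 1 ≤ J) (hL : 2 ^ j ≤ Lz (4 * v + 4 + d) * J) (hL' : Lz (4 * v + 4 + d) * J ≤ 2 ^ (j + 1))
    (h1 : ∀ i J, 1 ≤ J → |Kop T (fun n => lowS (PL (2 ^ (4 * v + 4 + i + 1))) n -
      lowS (PL (2 ^ (4 * v + 4 + i))) n) (Lz (4 * v + 4 + i + 1) * J) f x| ≤
      e * ((3 / 4) ^ i / 4))
    (h2 : |Kop T (fun n => lowS (PL (2 ^ (4 * v + 4 + d))) n *
      (selK (PI (2 ^ (4 * v + 4 + d)) (2 ^ (j / 16))) (2 ^ (j / 16)) n - 1))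
        (Lz (4 * v + 4 + d) * J) f x| ≤ e) :
    Bj T f j x ≤ 2 ^ 22 * e := by
  set a1 := 4 * v + 4 with ha1
  set L := Lz (a1 + d) * J with hLdef
  have hlt : a1 + d + 4 < j := lt_of_lt_of_le Nat.lt_two_pow_self hj
  have hj16 : 16 ≤ j := by
    refine le_trans ?_ hj
    calc 16 = 2 ^ 4 := by norm_num
      _ ≤ _ := Nat.pow_le_pow_right (by norm_num) (by omega)
  have hLpos : 0 < L := lt_of_lt_of_le (by positivity) hL
  have hS0 : ∀ {c}, ∀ p ∈ PL (2 ^ c), p.Prime := PL_prime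
  have hb := Bj_le_Kop T (k := fun n => lowS (PL (2 ^ (a1 + d))) n *
      selK (PI (2 ^ (a1 + d)) (2 ^ (j / 16))) (2 ^ (j / 16)) n) L j (by omega) hL hL' hf
      (fun n => mul_nonneg (lowS_nonneg hS0 n) (selK_nonneg PI_prime Nat.one_le_two_pow n)) ?_ x
  · refine hb.trans ?_
    have e1 : (fun n => lowS (PL (2 ^ (a1 + d))) n *
        selK (PI (2 ^ (a1 + d)) (2 ^ (j / 16))) (2 ^ (j / 16)) n) =
        fun n => lowS (PL (2 ^ (a1 + d))) n *
        (selK (PI (2 ^ (a1 + d)) (2 ^ (j / 16))) (2 ^ (j / 16)) n - 1) +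
        lowS (PL (2 ^ (a1 + d))) n := by
      funext n; ring
    rw [e1, Kop_add]
    have e2 : (fun n => lowS (PL (2 ^ (a1 + d))) n) = fun n => lowS (PL (2 ^ a1)) n +
        ∑ i ∈ Finset.range d, (lowS (PL (2 ^ (a1 + i + 1))) n - lowS (PL (2 ^ (a1 + i))) n) := by
      funext n
      have := Finset.sum_range_sub (fun i => lowS (PL (2 ^ (a1 + i))) n) d
      simp only [← add_assoc, add_zero] at this
      rw [this]; ring
    have e8 : Kop T (lowS (PL (2 ^ (a1 + d)))) L f x = Kop T (fun n => lowS (PL (2 ^ a1)) n) L f x +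
        ∑ i ∈ Finset.range d, Kop T (fun n => lowS (PL (2 ^ (a1 + i + 1))) n -
        lowS (PL (2 ^ (a1 + i))) n) L f x := by
      rw [show lowS (PL (2 ^ (a1 + d))) = _ from e2, Kop_add, Kop_sum]
    rw [e8]
    have e3 : Kop T (fun n => lowS (PL (2 ^ a1)) n) L f x ≤ Vi (PL (2 ^ a1)) * (3 * (e / v ^ 2)) :=
      Kop_le_M hf (by positivity) h0 Vi_pos'.le (lowS_nonneg hS0) (lowS_le hS0) hLpos
    have hv2 : (0:ℝ) < (v:ℝ) ^ 2 := by positivity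
    have hv1 : (1:ℝ) ≤ v := by exact_mod_cast hv
    have e4 : Vi (PL (2 ^ a1)) * (3 * (e / v ^ 2)) ≤ 3072 * e := by
      have hVi : Vi (PL (2 ^ a1)) ≤ 1024 * v ^ 2 := by
        refine (Vi_le a1 (by omega)).trans ?_
        rw [ha1]; push_cast; nlinarith
      have := mul_le_mul_of_nonneg_right hVi (by positivity : 0 ≤ 3 * (e / (v:ℝ) ^ 2))
      refine this.trans (le_of_eq ?_)
      field_simp; norm_num
    have e5 := (le_abs_self _).trans h2
    have e6 : ∑ i ∈ Finset.range d, Kop T (fun n => lowS (PL (2 ^ (a1 + i + 1))) n -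
        lowS (PL (2 ^ (a1 + i))) n) L f x ≤ e := by
      calc _ ≤ ∑ i ∈ Finset.range d, e * ((3 / 4) ^ i / 4) := by
            refine Finset.sum_le_sum fun i hi => ?_
            rw [Finset.mem_range] at hi
            obtain ⟨c, hc⟩ := Lz_dvd (show a1 + i + 1 ≤ a1 + d by omega)
            have hcJ : L = Lz (a1 + i + 1) * (c * J) := by rw [hLdef, hc, mul_assoc]
            have hcJ1 : 1 ≤ c * J := by
              rcases Nat.eq_zero_or_pos (c * J) with h | h
              · rw [hcJ, h] at hLpos; omega
              · exact h
            rw [hcJ]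
            exact (le_abs_self _).trans (h1 i (c * J) hcJ1)
        _ ≤ _ := by
            rw [← Finset.mul_sum]
            exact mul_le_of_le_one_right he.le (geom_sum_le d)
    have e7 : 1024 * (3074 * e) ≤ 2 ^ 22 * e := by nlinarith
    refine le_trans ?_ e7
    linarith
  · intro p hp
    have hval := prime_val (a := a1 + d) (b := j / 16) (M := 2 ^ (a1 + d)) (by omega) (by omega) hp
    refine (VG_ge j (2 ^ (a1 + d)) hj16).trans ?_
    show _ ≤ lowS (PL (2 ^ (a1 + d))) p *
      selK (PI (2 ^ (a1 + d)) (2 ^ (j / 16))) (2 ^ (j / 16)) p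
    rw [hval.2, hval.1]

/-! ### Assembling the exceptional set -/

lemma union_bound {X : Type u} [MeasurableSpace X] (μ : Measure X) (F : ℕ → Set X) (c : ℕ → ℝ)
    (C : ℝ) (hc : ∀ n, 0 ≤ c n) (hF : ∀ n, μ (F n) ≤ ENNReal.ofReal (c n))
    (hC : ∀ N, ∑ n ∈ Finset.range N, c n ≤ C) : μ (⋃ n, F n) ≤ ENNReal.ofReal C := by
  refine (measure_iUnion_le F).trans ?_
  refine ENNReal.tsum_le_of_sum_range_le fun N => ?_
  calc ∑ n ∈ Finset.range N, μ (F n) ≤ ∑ n ∈ Finset.range N, ENNReal.ofReal (c n) :=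
        Finset.sum_le_sum fun n _ => hF n
    _ = ENNReal.ofReal (∑ n ∈ Finset.range N, c n) :=
        (ENNReal.ofReal_sum_of_nonneg fun n _ => hc n).symm
    _ ≤ _ := ENNReal.ofReal_le_ofReal (hC N)

lemma v_le_pow (v : ℕ) : (v:ℝ) ≤ 2 ^ v := by
  exact_mod_cast Nat.lt_two_pow_self.le

/-- size of the Brun sieve error -/
lemma meas_EM {X : Type u} [MeasurableSpace X] {μ : Measure X} [IsProbabilityMeasure μ]
    {T : X → X} (hT : MeasurePreserving T μ μ) {f : X → ℝ} (hf : Measurable f)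
    (h0 : ∀ x, 0 ≤ f x) (h1 : ∀ x, f x ≤ 1) {v j : ℕ} (hv : 1 ≤ v) {e : ℝ}
    (he : e = ((2:ℝ) ^ v)⁻¹) :
    μ {x | e < Kop T (fun n => Vi (PL (2 ^ (8 * v))) * brE (PL (2 ^ (8 * v))) (8 * v) n)
      (2 ^ j) f x} ≤ ENNReal.ofReal (2 ^ 91 * e ^ 4 * ∫ x, f x ∂μ) := by
  have hB : ∀ x, |f x| ≤ 1 := fun x => by rw [abs_of_nonneg (h0 x)]; exact h1 x
  have hepos : 0 < e := by rw [he]; positivity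
  have hm : 0 ≤ ∫ x, f x ∂μ := integral_nonneg h0
  set V := Vi (PL (2 ^ (8 * v))) with hV
  have hVpos : 0 < V := Vi_pos'
  set k : ℕ → ℝ := fun n => V * brE (PL (2 ^ (8 * v))) (8 * v) n with hk
  have hk0 : ∀ n, 0 ≤ k n := fun n => mul_nonneg hVpos.le (brE_nonneg _ _ n)
  obtain ⟨B', hB'⟩ := Kop_bdd T k (2 ^ j) hB
  have hint := int_of_bdd (μ := μ) (Kop_meas hT.measurable k (2 ^ j) hf) hB'
  have hKnn : ∀ x, 0 ≤ Kop T k (2 ^ j) f x := by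
    intro x
    unfold Kop
    exact mul_nonneg (by positivity) (Finset.sum_nonneg fun s _ => Finset.sum_nonneg fun t _ =>
      mul_nonneg (hk0 _) (h0 _))
  refine (markov' hT (Kop_meas hT.measurable k (2 ^ j) hf) hint hKnn hepos).trans
    (ENNReal.ofReal_le_ofReal ?_)
  have hI := Kop_int_le hT hf h0 h1 hk0 (2 ^ j) (by positivity)
  have hE : (0:ℝ) < 2 ^ v := by positivity
  have hVle : V ≤ 1024 * (2 ^ v) ^ 2 := by
    refine (Vi_le (8 * v) (by omega)).trans ?_
    have := v_le_pow v
    have hv0 : (0:ℝ) ≤ v := by positivity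
    push_cast
    nlinarith
  have hs : (((2 ^ j : ℕ) : ℝ))⁻¹ * ∑ n ∈ Finset.Ioc 0 (2 * 2 ^ j), k n ≤ 2 ^ 91 * e ^ 5 := by
    rw [hk, ← Finset.mul_sum]
    have hb := brE_sum (S := PL (2 ^ (8 * v))) PL_prime (8 * v) (2 * 2 ^ j)
    rw [← hV] at hb
    have hb2 := mul_le_mul_of_nonneg_left hb
      (by positivity : 0 ≤ (((2 ^ j : ℕ) : ℝ))⁻¹ * V)
    rw [mul_assoc] at hb2
    refine hb2.trans ?_
    have e1 : (((2 ^ j : ℕ) : ℝ))⁻¹ * V * (((2 * 2 ^ j : ℕ) : ℝ) *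
        (((8:ℝ) ^ (2 * (8 * v) + 1))⁻¹ * V ^ 8)) = 2 * (((8:ℝ) ^ (2 * (8 * v) + 1))⁻¹ * V ^ 9) := by
      push_cast; field_simp
    rw [e1]
    have e2 : V ^ 9 ≤ (1024 * (2 ^ v) ^ 2) ^ 9 := pow_le_pow_left₀ hVpos.le hVle 9
    have e3 : ((8:ℝ) ^ (2 * (8 * v) + 1))⁻¹ ≤ e ^ 48 := by
      rw [he, inv_pow]
      refine inv_anti₀ (by positivity) ?_
      rw [show (8:ℝ) = 2 ^ 3 by norm_num, ← pow_mul, ← pow_mul]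
      exact pow_le_pow_right₀ (by norm_num) (by omega)
    have e4 : (2:ℝ) * (((8:ℝ) ^ (2 * (8 * v) + 1))⁻¹ * V ^ 9) ≤
        2 * (e ^ 48 * (1024 * (2 ^ v) ^ 2) ^ 9) := by gcongr
    refine e4.trans ?_
    have e5 : (2:ℝ) ^ v = e⁻¹ := by rw [he, inv_inv]
    have e6 : 2 * (e ^ 48 * (1024 * ((2:ℝ) ^ v) ^ 2) ^ 9) = 2 ^ 91 * e ^ 30 := by
      rw [e5]; field_simp; norm_num
    rw [e6]
    have e7 : e ≤ 1 := by
      rw [he]; exact inv_le_one_of_one_le₀ (one_le_pow₀ (by norm_num))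
    exact mul_le_mul_of_nonneg_left (pow_le_pow_of_le_one hepos.le e7 (by norm_num)) (by positivity)
  have h3 := hI.trans (mul_le_mul_of_nonneg_right hs hm)
  have h4 := mul_le_mul_of_nonneg_left h3 (inv_nonneg.2 hepos.le)
  refine h4.trans (le_of_eq ?_)
  field_simp

lemma meas_EH {X : Type u} [MeasurableSpace X] {μ : Measure X} [IsProbabilityMeasure μ]
    {T : X → X} (hT : MeasurePreserving T μ μ) {f : X → ℝ} (hf : Measurable f)
    (h0 : ∀ x, 0 ≤ f x) (h1 : ∀ x, f x ≤ 1) {v j : ℕ} (hv : 1 ≤ v) {e : ℝ}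
    (he : e = ((2:ℝ) ^ v)⁻¹) (hj : 1024 * v ^ 2 < j) :
    μ {x | e < |Kop T (fun n => Vi (PL (2 ^ (8 * v))) * beta (PL (2 ^ (8 * v))) (8 * v) n *
      (selK (PI (2 ^ (8 * v)) (2 ^ (j / 16))) (2 ^ (j / 16)) n - 1)) (2 ^ j) f x|} ≤
      ENNReal.ofReal (2 ^ 46 * e ^ 4 * ∫ x, f x ∂μ) := by
  have hB : ∀ x, |f x| ≤ 1 := fun x => by rw [abs_of_nonneg (h0 x)]; exact h1 x
  have hepos : 0 < e := by rw [he]; positivity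
  have hm : 0 ≤ ∫ x, f x ∂μ := integral_nonneg h0
  refine (cheb hT hf hB _ (2 ^ j) hepos).trans (ENNReal.ofReal_le_ofReal ?_)
  have hH := high_med hT hf hB (8 * v) (8 * v) (j / 16) (2 ^ j) (by omega) (by positivity) (by
    rw [← pow_mul, ← pow_add, ← pow_mul]
    refine Nat.pow_le_pow_right (by norm_num) ?_
    have : 8 * v * (2 * (8 * v)) = 128 * v ^ 2 := by ring
    omega)
  set V := Vi (PL (2 ^ (8 * v))) with hV
  have hVpos : 0 < V := Vi_pos'
  have hVle : V ≤ 1024 * (v:ℝ) ^ 2 := by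
    refine (Vi_le (8 * v) (by omega)).trans ?_
    push_cast
    nlinarith
  have e5 : (2:ℝ) ^ v = e⁻¹ := by rw [he, inv_inv]
  have hve : (v:ℝ) * e ≤ 1 := by
    rw [he, ← div_eq_mul_inv, div_le_one (by positivity)]
    exact v_le_pow v
  have e7 : e ≤ 1 := by
    rw [he]; exact inv_le_one_of_one_le₀ (one_le_pow₀ (by norm_num))
  have hK : V ^ 2 * (4 / 2 ^ (8 * v)) ≤ 2 ^ 22 * e ^ 4 := by
    have a1 : (4:ℝ) / 2 ^ (8 * v) = 4 * e ^ 8 := by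
      rw [mul_comm 8 v, pow_mul, e5]; field_simp
    rw [a1]
    have a2 : V ^ 2 ≤ (1024 * (v:ℝ) ^ 2) ^ 2 := pow_le_pow_left₀ hVpos.le hVle 2
    calc V ^ 2 * (4 * e ^ 8) ≤ (1024 * (v:ℝ) ^ 2) ^ 2 * (4 * e ^ 8) :=
          mul_le_mul_of_nonneg_right a2 (by positivity)
      _ = 2 ^ 22 * e ^ 4 * (v * e) ^ 4 := by ring
      _ ≤ 2 ^ 22 * e ^ 4 * 1 := mul_le_mul_of_nonneg_left
          (pow_le_one₀ (by positivity) hve) (by positivity)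
      _ = _ := mul_one _
  have hK0 : 0 ≤ V ^ 2 * (4 / 2 ^ (8 * v)) := by positivity
  have hK2 : (V ^ 2 * (4 / 2 ^ (8 * v))) ^ 2 ≤ (2 ^ 22 * e ^ 4) ^ 2 := pow_le_pow_left₀ hK0 hK 2
  have h2 := int_sq_le (μ := μ) hf h0 h1
  have h3 : 4 * (V ^ 2 * (4 / 2 ^ (8 * v))) ^ 2 * ∫ x, f x ^ 2 ∂μ ≤
      4 * (2 ^ 22 * e ^ 4) ^ 2 * ∫ x, f x ∂μ :=
    mul_le_mul (mul_le_mul_of_nonneg_left hK2 (by norm_num)) h2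
      (integral_nonneg fun _ => sq_nonneg _) (by positivity)
  have h4 := mul_le_mul_of_nonneg_left (hH.trans h3) (by positivity : 0 ≤ (e ^ 2)⁻¹)
  refine h4.trans ?_
  have e8 : (e ^ 2)⁻¹ * (4 * (2 ^ 22 * e ^ 4) ^ 2 * ∫ x, f x ∂μ) = 2 ^ 46 * e ^ 6 * ∫ x, f x ∂μ := by
    field_simp; norm_num
  rw [e8]
  refine mul_le_mul_of_nonneg_right ?_ hm
  exact mul_le_mul_of_nonneg_left (pow_le_pow_of_le_one hepos.le e7 (by norm_num)) (by positivity)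

lemma meas_ED {X : Type u} [MeasurableSpace X] {μ : Measure X} [IsProbabilityMeasure μ]
    {T : X → X} (hT : MeasurePreserving T μ μ) {f : X → ℝ} (hf : Measurable f)
    (h0 : ∀ x, 0 ≤ f x) (h1 : ∀ x, f x ≤ 1) {v : ℕ} {e : ℝ}
    (he : e = ((2:ℝ) ^ v)⁻¹) (i : ℕ) :
    μ {x | ∃ J : ℕ, 1 ≤ J ∧ e * ((3 / 4) ^ i / 4) <
      |Kop T (fun n => lowS (PL (2 ^ (4 * v + 4 + i + 1))) n -
      lowS (PL (2 ^ (4 * v + 4 + i))) n) (Lz (4 * v + 4 + i + 1) * J) f x|} ≤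
      ENNReal.ofReal ((1 / 2) ^ i * ∫ x, f x ∂μ) := by
  have hB : ∀ x, |f x| ≤ 1 := fun x => by rw [abs_of_nonneg (h0 x)]; exact h1 x
  have hepos : 0 < e := by rw [he]; positivity
  have hm : 0 ≤ ∫ x, f x ∂μ := integral_nonneg h0
  refine (diff_max hT hf hB (4 * v + 4 + i) (by positivity)).trans (ENNReal.ofReal_le_ofReal ?_)
  refine mul_le_mul ?_ (int_sq_le hf h0 h1) (integral_nonneg fun _ => sq_nonneg _) (by positivity)
  have e5 : (2:ℝ) ^ v = e⁻¹ := by rw [he, inv_inv]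
  have e7 : e ≤ 1 := by
    rw [he]; exact inv_le_one_of_one_le₀ (one_le_pow₀ (by norm_num))
  have e1 : ((2:ℝ) ^ (4 * v + 4 + i))⁻¹ = e ^ 4 * (1 / 16) * (1 / 2) ^ i := by
    rw [pow_add, pow_add, mul_comm 4 v, pow_mul, e5, one_div_pow]
    field_simp
    norm_num
  rw [e1]
  have e2 : 16 * ((e * ((3 / 4) ^ i / 4)) ^ 2)⁻¹ * (e ^ 4 * (1 / 16) * (1 / 2) ^ i) ^ 2 =
      e ^ 6 * ((4:ℝ) / 9) ^ i := by
    have a1 : ((4:ℝ) / 9) ^ i = ((((3:ℝ) / 4) ^ i)⁻¹ * (1 / 2) ^ i) ^ 2 := by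
      rw [← inv_pow, ← mul_pow, ← pow_mul, mul_comm i 2, pow_mul]; norm_num
    rw [a1]
    have : (0:ℝ) < (3 / 4) ^ i := by positivity
    field_simp
    try norm_num
  rw [e2]
  calc e ^ 6 * ((4:ℝ) / 9) ^ i ≤ 1 * (1 / 2) ^ i := by
        refine mul_le_mul (pow_le_one₀ hepos.le e7) ?_ (by positivity) zero_le_one
        exact pow_le_pow_left₀ (by norm_num) (by norm_num) i
    _ = _ := one_mul _

/-- the sieving level for large scales -/
def alev (j : ℕ) : ℕ := Nat.log 2 j - 4

lemma alev_spec {j v : ℕ} (hj : 2 ^ (4 * v + 8) < j) :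
    4 * v + 4 ≤ alev j ∧ 2 ^ (alev j + 4) ≤ j ∧ j < 2 ^ (alev j + 5) := by
  have hj0 : j ≠ 0 := (Nat.zero_le _).trans_lt hj |>.ne'
  have h1 : 4 * v + 8 ≤ Nat.log 2 j := Nat.le_log_of_pow_le (by norm_num) hj.le
  have h2 : 2 ^ (Nat.log 2 j) ≤ j := Nat.pow_log_le_self 2 hj0
  have h3 : j < 2 ^ (Nat.log 2 j + 1) := Nat.lt_pow_succ_log_self (by norm_num) j
  unfold alev
  refine ⟨by omega, ?_, ?_⟩
  · rwa [show Nat.log 2 j - 4 + 4 = Nat.log 2 j by omega]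
  · rwa [show Nat.log 2 j - 4 + 5 = Nat.log 2 j + 1 by omega]

/-- number of periods -/
def Jnum (j : ℕ) : ℕ := 2 ^ j / Lz (alev j) + 1

lemma L_spec {j v : ℕ} (hj : 2 ^ (4 * v + 8) < j) :
    2 ^ j ≤ Lz (alev j) * Jnum j ∧ Lz (alev j) * Jnum j ≤ 2 ^ (j + 1) ∧
    Lz (alev j) ≤ 2 ^ (j / 2) := by
  obtain ⟨h1, h2, h3⟩ := alev_spec hj
  have hz : Lz (alev j) ≤ 2 ^ (j / 2) := by
    refine (Lz_le _).trans (Nat.pow_le_pow_right (by norm_num) ?_)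
    have : 2 ^ (alev j + 4) = 2 ^ (alev j + 3) * 2 := by rw [← pow_succ]
    omega
  have hz2 : Lz (alev j) ≤ 2 ^ j := hz.trans (Nat.pow_le_pow_right (by norm_num) (by omega))
  refine ⟨?_, ?_, hz⟩
  · unfold Jnum
    exact (Nat.lt_mul_div_succ _ (Lz_pos _)).le
  · unfold Jnum
    rw [Nat.mul_succ, pow_succ]
    have := Nat.mul_div_le (2 ^ j) (Lz (alev j))
    omega

lemma meas_EL {X : Type u} [MeasurableSpace X] {μ : Measure X} [IsProbabilityMeasure μ]
    {T : X → X} (hT : MeasurePreserving T μ μ) {f : X → ℝ} (hf : Measurable f)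
    (h0 : ∀ x, 0 ≤ f x) (h1 : ∀ x, f x ≤ 1) {v j : ℕ} {e : ℝ} (hepos : 0 < e)
    (hj : 2 ^ (4 * v + 8) < j) :
    μ {x | e < |Kop T (fun n => lowS (PL (2 ^ alev j)) n *
      (selK (PI (2 ^ alev j) (2 ^ (j / 16))) (2 ^ (j / 16)) n - 1)) (Lz (alev j) * Jnum j) f x|} ≤
      ENNReal.ofReal (2 ^ 16 * (e ^ 2)⁻¹ * (∫ x, f x ∂μ) * ((j:ℝ) ^ 2)⁻¹) := by
  have hB : ∀ x, |f x| ≤ 1 := fun x => by rw [abs_of_nonneg (h0 x)]; exact h1 x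
  have hm : 0 ≤ ∫ x, f x ∂μ := integral_nonneg h0
  obtain ⟨a1, a2, a3⟩ := alev_spec hj
  obtain ⟨l1, l2, l3⟩ := L_spec hj
  refine (cheb hT hf hB _ _ hepos).trans (ENNReal.ofReal_le_ofReal ?_)
  have hH := high_large hT hf hB (alev j) (j / 16) (Lz (alev j) * Jnum j) (by omega)
    (lt_of_lt_of_le (by positivity) l1) (by
      refine le_trans ?_ l1
      rw [mul_pow, ← pow_mul, ← pow_mul]
      refine (Nat.mul_le_mul_right _ l3).trans ?_
      rw [← pow_add]
      exact Nat.pow_le_pow_right (by norm_num) (by omega))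
  have h2 := int_sq_le (μ := μ) hf h0 h1
  have hj0 : (0:ℝ) < j := by
    have : 0 < j := (Nat.zero_le _).trans_lt hj
    exact_mod_cast this
  have a3' : (j:ℝ) ≤ 2 ^ (alev j) * 32 := by
    have : j ≤ 2 ^ (alev j) * 32 := by
      rw [show 32 = 2 ^ 5 by norm_num, ← pow_add]; exact a3.le
    exact_mod_cast this
  have hq : (4:ℝ) / 2 ^ (alev j) ≤ 128 / j := by
    rw [div_le_div_iff₀ (by positivity) hj0]; linarith
  have hq2 : (1 * ((4:ℝ) / 2 ^ (alev j))) ^ 2 ≤ (128 / j) ^ 2 := by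
    rw [one_mul]; exact pow_le_pow_left₀ (by positivity) hq 2
  have h3 : 4 * (1 * ((4:ℝ) / 2 ^ (alev j))) ^ 2 * ∫ x, f x ^ 2 ∂μ ≤
      4 * (128 / (j:ℝ)) ^ 2 * ∫ x, f x ∂μ :=
    mul_le_mul (mul_le_mul_of_nonneg_left hq2 (by norm_num)) h2
      (integral_nonneg fun _ => sq_nonneg _) (by positivity)
  have h4 := mul_le_mul_of_nonneg_left (hH.trans h3) (by positivity : 0 ≤ (e ^ 2)⁻¹)
  refine h4.trans (le_of_eq ?_)
  rw [div_pow]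
  field_simp
  ring

lemma sum_ite_le (N M : ℕ) (P : ℕ → Prop) [DecidablePred P] (hP : ∀ j, P j → 0 < j ∧ j ≤ M)
    {c : ℝ} (hc : 0 ≤ c) : ∑ j ∈ Finset.range N, (if P j then c else 0) ≤ M * c := by
  rw [← Finset.sum_filter, Finset.sum_const, nsmul_eq_mul]
  refine mul_le_mul_of_nonneg_right ?_ hc
  have : ((Finset.range N).filter P).card ≤ (Finset.Ioc 0 M).card := by
    refine Finset.card_le_card fun j hj => ?_
    rw [Finset.mem_Ioc]
    exact hP j (Finset.mem_filter.1 hj).2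
  rw [Nat.card_Ioc] at this
  exact_mod_cast this

lemma sum_inv_sq_tail (N J : ℕ) (hJ : 0 < J) :
    ∑ j ∈ Finset.range N, (if J < j then ((j:ℝ) ^ 2)⁻¹ else 0) ≤ (J:ℝ)⁻¹ := by
  rw [← Finset.sum_filter]
  rcases Nat.lt_or_ge N J with h | h
  · rw [Finset.sum_eq_zero]
    · positivity
    · intro j hj
      rw [Finset.mem_filter, Finset.mem_range] at hj
      omega
  · calc _ ≤ ∑ j ∈ Finset.Ioc J N, ((j:ℝ) ^ 2)⁻¹ := by
          refine Finset.sum_le_sum_of_subset_of_nonneg ?_ fun _ _ _ => by positivity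
          intro j hj
          rw [Finset.mem_filter, Finset.mem_range] at hj
          rw [Finset.mem_Ioc]; omega
      _ ≤ (J:ℝ)⁻¹ - (N:ℝ)⁻¹ := sum_Ioc_inv_sq_le_sub hJ.ne' h
      _ ≤ _ := by
          have : (0:ℝ) ≤ (N:ℝ)⁻¹ := by positivity
          linarith

theorem core {X : Type u} [MeasurableSpace X] {μ : Measure X} [IsProbabilityMeasure μ]
    {T : X → X} (hT : MeasurePreserving T μ μ) {f : X → ℝ} (hf : Measurable f)
    (h0 : ∀ x, 0 ≤ f x) (h1 : ∀ x, f x ≤ 1) (v : ℕ) (hv : 1 ≤ v) :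
    μ {x | ∃ N : ℕ, 2 ≤ N ∧ 2 ^ 26 * ((2:ℝ) ^ v)⁻¹ <
      ((PL N).card : ℝ)⁻¹ * ∑ p ∈ PL N, f (T^[p] x)} ≤
      ENNReal.ofReal (2 ^ 101 * 2 ^ v * (v:ℝ) ^ 2 * ∫ x, f x ∂μ) := by
  classical
  obtain ⟨e, he⟩ : ∃ e : ℝ, e = ((2:ℝ) ^ v)⁻¹ := ⟨_, rfl⟩
  have hepos : 0 < e := by rw [he]; positivity
  have e5 : (2:ℝ) ^ v = e⁻¹ := by rw [he, inv_inv]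
  have hm : 0 ≤ ∫ x, f x ∂μ := integral_nonneg h0
  have hB : ∀ x, |f x| ≤ 1 := fun x => by rw [abs_of_nonneg (h0 x)]; exact h1 x
  have hv1 : (1:ℝ) ≤ v := by exact_mod_cast hv
  set m := ∫ x, f x ∂μ with hmdef
  set J0 : ℕ := 2 ^ (4 * v + 8) with hJ0
  have hJ0pos : 0 < J0 := by positivity
  have hJ0r : (J0:ℝ) = 2 ^ 8 * (e ^ 4)⁻¹ := by
    rw [hJ0]; push_cast
    rw [pow_add, mul_comm 4 v, pow_mul, e5]; ring
  -- the exceptional sets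
  set E0 : Set X := Mset T f (e / v ^ 2) with hE0
  set EM : ℕ → Set X := fun j => if 1024 * v ^ 2 < j ∧ j ≤ J0 then
    {x | e < Kop T (fun n => Vi (PL (2 ^ (8 * v))) * brE (PL (2 ^ (8 * v))) (8 * v) n)
      (2 ^ j) f x} else ∅ with hEM
  set EH : ℕ → Set X := fun j => if 1024 * v ^ 2 < j ∧ j ≤ J0 then
    {x | e < |Kop T (fun n => Vi (PL (2 ^ (8 * v))) * beta (PL (2 ^ (8 * v))) (8 * v) n *
      (selK (PI (2 ^ (8 * v)) (2 ^ (j / 16))) (2 ^ (j / 16)) n - 1)) (2 ^ j) f x|} else ∅ with hEH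
  set EL : ℕ → Set X := fun j => if J0 < j then
    {x | e < |Kop T (fun n => lowS (PL (2 ^ alev j)) n *
      (selK (PI (2 ^ alev j) (2 ^ (j / 16))) (2 ^ (j / 16)) n - 1)) (Lz (alev j) * Jnum j) f x|}
      else ∅ with hEL
  set ED : ℕ → Set X := fun i => {x | ∃ J : ℕ, 1 ≤ J ∧ e * ((3 / 4) ^ i / 4) <
      |Kop T (fun n => lowS (PL (2 ^ (4 * v + 4 + i + 1))) n -
      lowS (PL (2 ^ (4 * v + 4 + i))) n) (Lz (4 * v + 4 + i + 1) * J) f x|} with hED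
  have m0 : μ E0 ≤ ENNReal.ofReal (2 ^ v * (v:ℝ) ^ 2 * m) := by
    refine (maxerg hT hf (int_of_bdd hf hB) h0 (by positivity)).trans (le_of_eq ?_)
    rw [e5, inv_div]
    congr 1
    rw [hmdef]
    field_simp
  have hpow : 1 ≤ (2:ℝ) ^ v * (v:ℝ) ^ 2 := by
    have a1 : (1:ℝ) ≤ 2 ^ v := one_le_pow₀ (by norm_num)
    have a2 : (1:ℝ) ≤ (v:ℝ) ^ 2 := one_le_pow₀ hv1
    nlinarith
  have mM : μ (⋃ j, EM j) ≤ ENNReal.ofReal (2 ^ 99 * m) := by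
    refine union_bound μ EM (fun j => if 1024 * v ^ 2 < j ∧ j ≤ J0 then 2 ^ 91 * e ^ 4 * m else 0)
      _ ?_ ?_ ?_
    · intro j; split_ifs <;> positivity
    · intro j
      simp only [hEM]
      split_ifs with h
      · exact meas_EM hT hf h0 h1 hv he
      · simp
    · intro N
      refine (sum_ite_le N J0 _ (fun j hj => ⟨by omega, hj.2⟩) (by positivity)).trans (le_of_eq ?_)
      rw [hJ0r]; field_simp
  have mH : μ (⋃ j, EH j) ≤ ENNReal.ofReal (2 ^ 54 * m) := by
    refine union_bound μ EH (fun j => if 1024 * v ^ 2 < j ∧ j ≤ J0 then 2 ^ 46 * e ^ 4 * m else 0)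
      _ ?_ ?_ ?_
    · intro j; split_ifs <;> positivity
    · intro j
      simp only [hEH]
      split_ifs with h
      · exact meas_EH hT hf h0 h1 hv he h.1
      · simp
    · intro N
      refine (sum_ite_le N J0 _ (fun j hj => ⟨by omega, hj.2⟩) (by positivity)).trans (le_of_eq ?_)
      rw [hJ0r]; field_simp
  have mL : μ (⋃ j, EL j) ≤ ENNReal.ofReal (2 ^ 8 * m) := by
    refine union_bound μ EL (fun j => 2 ^ 16 * (e ^ 2)⁻¹ * m *
      (if J0 < j then ((j:ℝ) ^ 2)⁻¹ else 0)) _ ?_ ?_ ?_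
    · intro j; split_ifs <;> positivity
    · intro j
      simp only [hEL]
      split_ifs with h
      · exact meas_EL hT hf h0 h1 hepos h
      · simp
    · intro N
      rw [← Finset.mul_sum]
      refine (mul_le_mul_of_nonneg_left (sum_inv_sq_tail N J0 hJ0pos) (by positivity)).trans ?_
      have e7 : e ≤ 1 := by
        rw [he]; exact inv_le_one_of_one_le₀ (one_le_pow₀ (by norm_num))
      have : 2 ^ 16 * (e ^ 2)⁻¹ * m * (J0:ℝ)⁻¹ = 2 ^ 8 * m * e ^ 2 := by
        rw [hJ0r]; field_simp
      rw [this]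
      exact mul_le_of_le_one_right (by positivity) (pow_le_one₀ hepos.le e7)
  have mD : μ (⋃ i, ED i) ≤ ENNReal.ofReal (2 * m) := by
    refine union_bound μ ED (fun i => (1 / 2) ^ i * m) _ ?_ ?_ ?_
    · intro j; positivity
    · intro i
      exact meas_ED hT hf h0 h1 he i
    · intro N
      rw [← Finset.sum_mul]
      refine mul_le_mul_of_nonneg_right ?_ hm
      exact sum_geometric_two_le N
  have hsub : {x | ∃ N : ℕ, 2 ≤ N ∧ 2 ^ 26 * ((2:ℝ) ^ v)⁻¹ <
      ((PL N).card : ℝ)⁻¹ * ∑ p ∈ PL N, f (T^[p] x)} ⊆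
      E0 ∪ ((⋃ j, EM j) ∪ ((⋃ j, EH j) ∪ ((⋃ j, EL j) ∪ ⋃ i, ED i))) := by
    intro x hx
    by_contra hc
    simp only [Set.mem_union, not_or, Set.mem_iUnion, not_exists] at hc
    obtain ⟨c0, cM, cH, cL, cD⟩ := hc
    obtain ⟨N, hN, hlt⟩ := hx
    have hBj : ∀ j, 1 ≤ j → Bj T f j x ≤ 2 ^ 22 * e := by
      intro j hj
      rcases Nat.lt_or_ge (1024 * v ^ 2) j with hj1 | hj1
      · rcases Nat.lt_or_ge J0 j with hj2 | hj2
        · obtain ⟨a1, a2, a3⟩ := alev_spec hj2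
          obtain ⟨l1, l2, l3⟩ := L_spec hj2
          obtain ⟨d, hd⟩ : ∃ d, alev j = 4 * v + 4 + d := ⟨alev j - (4 * v + 4), by omega⟩
          have cLj := cL j
          simp only [hEL, if_pos hj2, Set.mem_ofPred_eq, not_lt] at cLj
          rw [hd] at a2 l1 l2 cLj
          refine large_point h0 (d := d) (J := Jnum j) hv a2 hepos c0 ?_ l1 l2 ?_ cLj
          · exact Nat.le_add_left 1 _
          · intro i J hJ
            by_contra hcon
            exact cD i ⟨J, hJ, not_le.1 hcon⟩
        · have cMj := cM j
          have cHj := cH j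
          simp only [hEM, if_pos (And.intro hj1 hj2), Set.mem_ofPred_eq, not_lt] at cMj
          simp only [hEH, if_pos (And.intro hj1 hj2), Set.mem_ofPred_eq, not_lt] at cHj
          exact med_point h0 hv hj1 hepos c0 cMj cHj
      · refine (Bj_le_M h0 (by positivity) c0 j).trans ?_
        have hj1' : (j:ℝ) ≤ 1024 * (v:ℝ) ^ 2 := by exact_mod_cast hj1
        have : 2 * (j:ℝ) * (e / v ^ 2) ≤ 2 * (1024 * (v:ℝ) ^ 2) * (e / v ^ 2) := by gcongr
        refine this.trans ?_
        have e2 : 2 * (1024 * (v:ℝ) ^ 2) * (e / v ^ 2) = 2048 * e := by field_simp; norm_num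
        rw [e2]
        nlinarith
    have := reduction T h0 x (by positivity) hBj N hN
    rw [← he] at hlt
    linarith
  refine (measure_mono hsub).trans ?_
  refine (measure_union_le _ _).trans ?_
  refine (add_le_add m0 ((measure_union_le _ _).trans (add_le_add mM
    ((measure_union_le _ _).trans (add_le_add mH
    ((measure_union_le _ _).trans (add_le_add mL mD))))))).trans ?_
  rw [← ENNReal.ofReal_add (by positivity) (by positivity),
    ← ENNReal.ofReal_add (by positivity) (by positivity),
    ← ENNReal.ofReal_add (by positivity) (by positivity),
    ← ENNReal.ofReal_add (by positivity) (by positivity)]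
  refine ENNReal.ofReal_le_ofReal ?_
  have := mul_le_mul_of_nonneg_right hpow hm
  nlinarith

end PrimeErg

/-- Restricted weak type inequality: for every probability space, measure-preserving `T`,
measurable set `A` and `0 < λ < 1`,
`μ{x : sup_{N ≥ 2} 𝒜_N(𝟙_A)(x) > λ} ≤ C λ⁻¹ log²(e/λ) μ(A)`. -/
theorem stmt_2 :
    ∃ C : ℝ, 0 < C ∧
      ∀ (X : Type u) [MeasurableSpace X] (μ : Measure X), IsProbabilityMeasure μ →
        ∀ (T : X → X), Measurable T → MeasurePreserving T μ μ →
          ∀ (A : Set X), MeasurableSet A →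
            ∀ l : ℝ, 0 < l → l < 1 →
              μ {x | ∃ N : ℕ, 2 ≤ N ∧ l < ergAvg T (A.indicator 1) N x} ≤
                ENNReal.ofReal (C * l⁻¹ * (Real.log (Real.exp 1 / l)) ^ 2) * μ A := by
  refine ⟨2 ^ 101 * 2 ^ 27 * 54 ^ 2, by positivity, ?_⟩
  intro X _ μ hμ T _ hT A hA l hl0 hl1
  have hlinv : 1 ≤ l⁻¹ := (one_le_inv₀ hl0).2 hl1.le
  obtain ⟨n, hn1, hn2⟩ := exists_nat_pow_near hlinv (by norm_num : (1:ℝ) < 2)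
  have hf : Measurable (A.indicator (1 : X → ℝ)) := measurable_one.indicator hA
  have h0 : ∀ x, 0 ≤ A.indicator (1 : X → ℝ) x := fun x =>
    Set.indicator_nonneg (fun _ _ => zero_le_one) x
  have h1 : ∀ x, A.indicator (1 : X → ℝ) x ≤ 1 := fun x =>
    Set.indicator_le_self' (fun _ _ => zero_le_one) x
  have hcore := PrimeErg.core hT hf h0 h1 (n + 27) (by omega)
  have hint : ∫ x, A.indicator (1 : X → ℝ) x ∂μ = (μ A).toReal := by
    rw [integral_indicator_one hA]; rfl
  have hthr : 2 ^ 26 * ((2:ℝ) ^ (n + 27))⁻¹ ≤ l := by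
    have e1 : 2 ^ 26 * ((2:ℝ) ^ (n + 27))⁻¹ = ((2:ℝ) ^ (n + 1))⁻¹ := by
      rw [pow_add, pow_add]; field_simp
    rw [e1]
    exact inv_le_of_inv_le₀ hl0 hn2.le
  refine (measure_mono ?_).trans (hcore.trans ?_)
  · rintro x ⟨N, hN, hx⟩
    exact ⟨N, hN, hthr.trans_lt hx⟩
  · rw [hint, ENNReal.ofReal_mul (by positivity), ENNReal.ofReal_toReal (measure_ne_top μ A)]
    refine mul_le_mul_left (ENNReal.ofReal_le_ofReal ?_) _
    have hlog : Real.log (Real.exp 1 / l) = 1 + Real.log l⁻¹ := by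
      rw [div_eq_mul_inv, Real.log_mul (Real.exp_ne_zero 1) (by positivity), Real.log_exp]
    have hlog2 : (n:ℝ) * Real.log 2 ≤ Real.log l⁻¹ := by
      rw [← Real.log_pow]
      exact Real.log_le_log (by positivity) hn1
    have hl2 : (0.5:ℝ) ≤ Real.log 2 := by have := Real.log_two_gt_d9; linarith
    have hn0 : (0:ℝ) ≤ n := by positivity
    have hu : ((n + 27 : ℕ) : ℝ) ≤ 54 * Real.log (Real.exp 1 / l) := by
      rw [hlog]; push_cast; nlinarith
    have hu2 : (((n + 27 : ℕ) : ℝ)) ^ 2 ≤ (54 * Real.log (Real.exp 1 / l)) ^ 2 :=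
      pow_le_pow_left₀ (by positivity) hu 2
    have hp : (2:ℝ) ^ (n + 27) ≤ 2 ^ 27 * l⁻¹ := by
      rw [pow_add]; nlinarith
    calc 2 ^ 101 * (2:ℝ) ^ (n + 27) * ((n + 27 : ℕ) : ℝ) ^ 2
        ≤ 2 ^ 101 * (2 ^ 27 * l⁻¹) * (54 * Real.log (Real.exp 1 / l)) ^ 2 := by gcongr
      _ = _ := by ring
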